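/- Let p be a prime, let q1 and q2 be powers of p, let n ≥ 1, let R = A(n,q1,q2), and let q = q1 ⊗ q2 = q1^d. If n ≥ 2, let a be the smallest prime divisor of n. Then R is σ-elementary if and only if one of the following holds: (1) n = 1 and (q1,q2) ≠ (2,2) and (q1,q2) ≠ (4,4), in which case σ(R) = q + 1; (2) n ≥ 3, d < n − (n/a), and (n,q1) ≠ (3,2), in which case σ(R) = q^n + binom(n,d)_{q1} + ω(d). -/

import Mathlib

/-!
Elements of `A(n, q1, q2)` are triples of a block in `M_n(F1)`, a column in `F^n` and a corner in
`F2`. The elements with zero block and zero corner form the radical. As `F` is the compositum of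
`F1` and `F2`, the radical is a minimal ideal and lies in every nonzero ideal (`radical_minimal`,
`ideal_sat`). Hence covers of proper quotients correspond to covers by subrings containing the
radical. A proper subring either lies in a proper subring containing the radical or is one of the
`q ^ n` complements of the radical (`subring_dichotomy`). If a cover omits one of these complements,
all of them can be dispensed with, so a cover either can be replaced by a cover of the same or
smaller size by subrings containing the radical, or consists of all `q ^ n` complements and a family
covering the elements that lie in no complement (`cover_dichotomy`). The ring is `σ`-elementary
exactly when the second kind of cover can be made strictly smaller than the first
(`sigmaElementary_of`, `not_sigmaElementary`).

For `n = 1`, subrings containing the radical correspond to subrings of `F1 × F2`. This product is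
generated by one element, so that it has no cover at all, unless both fields have order 2 or both
have order 4 (`exists_gen_same`, `exists_gen_diff`); in these two cases it has a cover with 3 or 4
members (`cover_two`, `cover_four`).

For `n ≥ 3` and `d < n - n / a`, an element in no complement has its corner as an eigenvalue of its
block. If the corner generates `F` over `F1`, the block stabilises a `d`-dimensional subspace;
otherwise the corner lies in one of the maximal intermediate fields of `F` over `F1`, which
correspond to the primes dividing `d` (`upper_cover`). That no fewer subrings suffice
(`rest_lower`) follows by double counting the conjugates of blocks acting as a regular generator of
a product of two fields of degrees `e` and `n - e` (`test_count`, `rest_count`): by Schur's lemma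
and the density theorem, a proper subring of `M_n(F1)` containing such a block stabilises a
subspace or centralises a proper extension of `F1` (`exists_label`). The same count for Singer
cycles shows that a cover by subrings containing the radical is strictly larger (`sat_lower`,
`singer_bound`).

In the remaining cases, stabilisers of subspaces of dimension at most `n / 2` and centralisers of
field extensions of degree `a` cover `M_n(F1)` (`end_cover`), and their number does not exceed the
size of any cover containing all complements (`not_elementary`).
-/

open scoped Classical

noncomputable section

/-- A (finite) cover of a not-necessarily-unital ring: a finite collection of proper
subrings whose set-theoretic union is all of `R`. -/
def IsRingCover (R : Type*) [NonUnitalRing R] (C : Finset (NonUnitalSubring R)) : Prop :=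
  (∀ S ∈ C, S ≠ (⊤ : NonUnitalSubring R)) ∧ ∀ r : R, ∃ S ∈ C, r ∈ S

/-- The covering number `σ(R)`: the least cardinality of a cover of `R`,
or `⊤` if no cover exists. -/
noncomputable def coveringNumber (R : Type*) [NonUnitalRing R] : ℕ∞ :=
  sInf {c : ℕ∞ | ∃ C : Finset (NonUnitalSubring R), IsRingCover R C ∧ (C.card : ℕ∞) = c}

/-- `R` is σ-elementary if `σ(R) < σ(R/I)` for every nonzero two-sided ideal `I`. -/
def IsSigmaElementary (R : Type*) [NonUnitalRing R] : Prop :=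
  ∀ I : TwoSidedIdeal R, I ≠ ⊥ → coveringNumber R < coveringNumber I.ringCon.Quotient

/-- The AGL-type ring `A(n, F1, F2)` as a subring of `(n+1) × (n+1)` matrices over `F`:
top-left `n × n` block with entries in `F1`, arbitrary top-right column, zero bottom-left
row, bottom-right entry in `F2`. -/
def AGL (n : ℕ) {F : Type*} [Field F] (F1 F2 : Subfield F) :
    Subring (Matrix (Fin (n + 1)) (Fin (n + 1)) F) where
  carrier := {M | (∀ i j : Fin n, M i.castSucc j.castSucc ∈ F1) ∧
      (∀ j : Fin n, M (Fin.last n) j.castSucc = 0) ∧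
      M (Fin.last n) (Fin.last n) ∈ F2}
  zero_mem' := by
    refine ⟨fun i j => ?_, fun j => rfl, ?_⟩
    · exact zero_mem F1
    · exact zero_mem F2
  one_mem' := by
    refine ⟨fun i j => ?_, fun j => ?_, ?_⟩
    · rw [Matrix.one_apply]
      split
      · exact one_mem F1
      · exact zero_mem F1
    · exact Matrix.one_apply_ne (Fin.castSucc_lt_last j).ne'
    · rw [Matrix.one_apply_eq]; exact one_mem F2
  add_mem' := by
    rintro a b ⟨ha1, ha2, ha3⟩ ⟨hb1, hb2, hb3⟩
    refine ⟨fun i j => add_mem (ha1 i j) (hb1 i j), fun j => ?_, add_mem ha3 hb3⟩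
    rw [Matrix.add_apply, ha2 j, hb2 j, add_zero]
  neg_mem' := by
    rintro a ⟨ha1, ha2, ha3⟩
    refine ⟨fun i j => neg_mem (ha1 i j), fun j => ?_, neg_mem ha3⟩
    rw [Matrix.neg_apply, ha2 j, neg_zero]
  mul_mem' := by
    rintro a b ⟨ha1, ha2, ha3⟩ ⟨hb1, hb2, hb3⟩
    refine ⟨fun i j => ?_, fun j => ?_, ?_⟩
    · rw [Matrix.mul_apply, Fin.sum_univ_castSucc, hb2 j, mul_zero, add_zero]
      exact sum_mem fun k _ => mul_mem (ha1 i k) (hb1 k j)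
    · rw [Matrix.mul_apply, Fin.sum_univ_castSucc, hb2 j, mul_zero, add_zero]
      exact Finset.sum_eq_zero fun k _ => by rw [ha2 k, zero_mul]
    · rw [Matrix.mul_apply, Fin.sum_univ_castSucc]
      have h0 : ∑ k : Fin n, a (Fin.last n) k.castSucc * b k.castSucc (Fin.last n) = 0 :=
        Finset.sum_eq_zero fun k _ => by rw [ha2 k, zero_mul]
      rw [h0, zero_add]
      exact mul_mem ha3 hb3

/-- The Gaussian (q-)binomial coefficient, via the Pascal-type recurrence. -/
def gaussBinom (q : ℕ) : ℕ → ℕ → ℕ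
  | _, 0 => 1
  | 0, _ + 1 => 0
  | n + 1, k + 1 => gaussBinom q n k + q ^ (k + 1) * gaussBinom q n (k + 1)

/-- The order of `GL(N, Q)` for a prime power `Q`. -/
def GLcard (N Q : ℕ) : ℕ := ∏ k ∈ Finset.range N, (Q ^ N - Q ^ k)

/-! ### Covers and surjections -/

lemma coveringNumber_le {R : Type*} [NonUnitalRing R] {C : Finset (NonUnitalSubring R)}
    (h : IsRingCover R C) : coveringNumber R ≤ C.card :=
  sInf_le ⟨C, h, rfl⟩

lemma le_coveringNumber {R : Type*} [NonUnitalRing R] {k : ℕ}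
    (h : ∀ C : Finset (NonUnitalSubring R), IsRingCover R C → k ≤ C.card) :
    (k : ℕ∞) ≤ coveringNumber R := by
  refine le_sInf ?_
  rintro c ⟨C, hC, rfl⟩
  exact_mod_cast h C hC

lemma exists_cover_of_lt_top {R : Type*} [NonUnitalRing R] (h : coveringNumber R < ⊤) :
    ∃ C : Finset (NonUnitalSubring R), IsRingCover R C ∧ (C.card : ℕ∞) = coveringNumber R := by
  have hne : {c : ℕ∞ | ∃ C : Finset (NonUnitalSubring R),
      IsRingCover R C ∧ (C.card : ℕ∞) = c}.Nonempty := by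
    by_contra hemp
    rw [Set.not_nonempty_iff_eq_empty] at hemp
    rw [coveringNumber, hemp, sInf_empty] at h
    exact lt_irrefl _ h
  exact csInf_mem hne

/-- Covers pull back along surjective homomorphisms. -/
lemma isRingCover_comap {R T : Type*} [NonUnitalRing R] [NonUnitalRing T] (f : R →ₙ+* T)
    (hf : Function.Surjective f) {C : Finset (NonUnitalSubring T)} (hC : IsRingCover T C) :
    IsRingCover R (C.image (NonUnitalSubring.comap f)) := by
  refine ⟨?_, fun r => ?_⟩
  · intro S hS
    obtain ⟨S', hS', rfl⟩ := Finset.mem_image.1 hS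
    intro h
    refine hC.1 S' hS' (NonUnitalSubring.eq_top_iff' _ |>.2 fun t => ?_)
    obtain ⟨r, rfl⟩ := hf t
    have : r ∈ NonUnitalSubring.comap f S' := h ▸ NonUnitalSubring.mem_top r
    exact this
  · obtain ⟨S, hS, h⟩ := hC.2 (f r)
    exact ⟨_, Finset.mem_image_of_mem _ hS, h⟩

variable {n : ℕ} {F : Type} [Field F] {F1 F2 : Subfield F}

/-! ### Coordinates on the ring -/

/-- The top-left block of an element of `AGL n F1 F2`, as a ring homomorphism. -/
def blk : AGL n F1 F2 →+* Matrix (Fin n) (Fin n) F1 where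
  toFun x := Matrix.of fun i j => ⟨x.1 i.castSucc j.castSucc, x.2.1 i j⟩
  map_zero' := rfl
  map_one' := by
    ext i j
    by_cases h : i = j
    · subst h; simp
    · simp [h]
  map_add' _ _ := rfl
  map_mul' x y := by
    ext i j
    change (x.1 * y.1) i.castSucc j.castSucc = _
    rw [Matrix.mul_apply, Fin.sum_univ_castSucc, y.2.2.1 j, mul_zero, add_zero, Matrix.mul_apply]
    simp

/-- The bottom-right entry of an element of `AGL n F1 F2`, as a ring homomorphism. -/
def cor : AGL n F1 F2 →+* F2 where
  toFun x := ⟨x.1 (Fin.last n) (Fin.last n), x.2.2.2⟩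
  map_zero' := rfl
  map_one' := by ext; simp
  map_add' _ _ := rfl
  map_mul' x y := by
    ext
    simp only [Matrix.mul_apply, Subring.coe_mul, Fin.sum_univ_castSucc]
    rw [Finset.sum_eq_zero fun k _ => by rw [x.2.2.1 k, zero_mul], zero_add]
    simp

/-- The top-right column of an element of `AGL n F1 F2`. -/
def vec (x : AGL n F1 F2) : Fin n → F := fun i => x.1 i.castSucc (Fin.last n)

/-- The inclusion of matrices over `F1` into matrices over `F`. -/
abbrev lft : Matrix (Fin n) (Fin n) F1 →+* Matrix (Fin n) (Fin n) F := F1.subtype.mapMatrix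

lemma lft_apply (A : Matrix (Fin n) (Fin n) F1) (i j : Fin n) : lft A i j = A i j := rfl

lemma lft_mulVec (A : Matrix (Fin n) (Fin n) F1) (v : Fin n → F) (i : Fin n) :
    (lft A).mulVec v i = ∑ j, (A i j : F) * v j := rfl

lemma vec_mul (x y : AGL n F1 F2) :
    vec (x * y) = (lft (blk x)).mulVec (vec y) + (cor y : F) • vec x := by
  funext i
  simp only [vec, Matrix.mul_apply, Subring.coe_mul, Fin.sum_univ_castSucc, Pi.add_apply,
    lft_mulVec, Pi.smul_apply, smul_eq_mul]
  rw [mul_comm (cor y : F)]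
  rfl

@[simp] lemma vec_add (x y : AGL n F1 F2) : vec (x + y) = vec x + vec y := rfl
@[simp] lemma vec_neg (x : AGL n F1 F2) : vec (-x) = -vec x := rfl
@[simp] lemma vec_sub (x y : AGL n F1 F2) : vec (x - y) = vec x - vec y := rfl
@[simp] lemma vec_zero : vec (0 : AGL n F1 F2) = 0 := rfl

lemma agl_ext {x y : AGL n F1 F2} (h1 : blk x = blk y) (h2 : vec x = vec y)
    (h3 : cor x = cor y) : x = y := by
  refine Subtype.ext (Matrix.ext fun i j => ?_)
  refine Fin.lastCases ?_ (fun i => ?_) i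
  · refine Fin.lastCases ?_ (fun j => ?_) j
    · exact congrArg Subtype.val h3
    · rw [x.2.2.1, y.2.2.1]
  · refine Fin.lastCases ?_ (fun j => ?_) j
    · exact congrFun h2 i
    · exact congrArg Subtype.val (congrFun (congrFun h1 i) j)

/-- The element of `AGL n F1 F2` with prescribed block, column and corner. -/
def mkA (A : Matrix (Fin n) (Fin n) F1) (v : Fin n → F) (b : F2) : AGL n F1 F2 :=
  ⟨fun i j => Fin.lastCases (Fin.lastCases (b : F) (fun _ => 0) j)
      (fun i => Fin.lastCases (v i) (fun j => (A i j : F)) j) i,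
    by intro i j; simp, by intro j; simp, by simp⟩

@[simp] lemma blk_mkA (A : Matrix (Fin n) (Fin n) F1) (v : Fin n → F) (b : F2) :
    blk (mkA A v b) = A := by
  ext i j
  change (mkA A v b).1 i.castSucc j.castSucc = _
  simp [mkA]

@[simp] lemma vec_mkA (A : Matrix (Fin n) (Fin n) F1) (v : Fin n → F) (b : F2) :
    vec (mkA A v b) = v := by
  ext i; simp [vec, mkA]

@[simp] lemma cor_mkA (A : Matrix (Fin n) (Fin n) F1) (v : Fin n → F) (b : F2) :
    cor (mkA A v b) = b := by
  ext
  change (mkA A v b).1 (Fin.last n) (Fin.last n) = _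
  simp [mkA]

lemma mkA_eta (x : AGL n F1 F2) : mkA (blk x) (vec x) (cor x) = x :=
  agl_ext (by simp) (by simp) (by simp)

/-! ### Subrings containing the radical, and complements of the radical -/

/-- `S` contains the radical: the ideal of elements with vanishing block and corner. -/
def Sat (S : NonUnitalSubring (AGL n F1 F2)) : Prop :=
  ∀ x, blk x = 0 → cor x = 0 → x ∈ S

lemma Sat.mem_iff {S : NonUnitalSubring (AGL n F1 F2)} (hS : Sat S) {x y : AGL n F1 F2}
    (h1 : blk x = blk y) (h2 : cor x = cor y) (hx : x ∈ S) : y ∈ S := by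
  have : y - x ∈ S := hS _ (by simp [h1]) (by simp [h2])
  simpa using add_mem this hx

/-- The sum of a subring and the radical. -/
def satur (S : NonUnitalSubring (AGL n F1 F2)) : NonUnitalSubring (AGL n F1 F2) where
  carrier := {x | ∃ y ∈ S, blk y = blk x ∧ cor y = cor x}
  zero_mem' := ⟨0, zero_mem _, rfl, rfl⟩
  add_mem' := by
    rintro a b ⟨x, hx, h1, h2⟩ ⟨y, hy, h3, h4⟩
    exact ⟨x + y, add_mem hx hy, by simp [h1, h3], by simp [h2, h4]⟩
  neg_mem' := by
    rintro a ⟨x, hx, h1, h2⟩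
    exact ⟨-x, neg_mem hx, by simp [h1], by simp [h2]⟩
  mul_mem' := by
    rintro a b ⟨x, hx, h1, h2⟩ ⟨y, hy, h3, h4⟩
    exact ⟨x * y, mul_mem hx hy, by simp [h1, h3], by simp [h2, h4]⟩

lemma satur_sat (S : NonUnitalSubring (AGL n F1 F2)) : Sat (satur S) :=
  fun x h1 h2 => ⟨0, zero_mem _, by simp [h1], by simp [h2]⟩

lemma le_satur (S : NonUnitalSubring (AGL n F1 F2)) : S ≤ satur S :=
  fun x hx => ⟨x, hx, rfl, rfl⟩

/-- The complement of the radical attached to `u`: the conjugate, by the unipotent element with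
column `u`, of the subring of elements with zero column. -/
def rcompl (F1 F2 : Subfield F) (u : Fin n → F) : NonUnitalSubring (AGL n F1 F2) where
  carrier := {x | vec x = (lft (blk x)).mulVec u - (cor x : F) • u}
  zero_mem' := by simp
  add_mem' := by
    intro a b ha hb
    simp only [Set.mem_ofPred_eq, map_add, vec_add, Subfield.coe_add] at *
    rw [ha, hb, Matrix.add_mulVec, add_smul]; abel
  neg_mem' := by
    intro a ha
    simp only [Set.mem_ofPred_eq, map_neg, vec_neg, Subfield.coe_neg] at *
    rw [ha, Matrix.neg_mulVec, neg_smul]; abel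
  mul_mem' := by
    intro a b ha hb
    simp only [Set.mem_ofPred_eq, map_mul, vec_mul, Subfield.coe_mul] at *
    rw [ha, hb, Matrix.mulVec_sub, Matrix.mulVec_smul, Matrix.mulVec_mulVec, smul_sub, smul_smul,
      mul_comm (cor b : F)]
    abel

lemma mem_rcompl {u : Fin n → F} {x : AGL n F1 F2} :
    x ∈ rcompl F1 F2 u ↔ vec x = (lft (blk x)).mulVec u - (cor x : F) • u := Iff.rfl

lemma rcompl_injective : Function.Injective (rcompl (n := n) F1 F2) := by
  intro u u' h
  have : mkA 1 u 0 ∈ rcompl (n := n) F1 F2 u := by simp [mem_rcompl]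
  rw [h, mem_rcompl] at this
  simpa using this

lemma rcompl_ne_top (hn : 1 ≤ n) (u : Fin n → F) : rcompl F1 F2 u ≠ ⊤ := by
  intro h
  have : mkA 0 (fun _ => 1) 0 ∈ rcompl (n := n) F1 F2 u := h ▸ NonUnitalSubring.mem_top _
  rw [mem_rcompl] at this
  simp only [vec_mkA, blk_mkA, cor_mkA] at this
  have := congrFun this ⟨0, hn⟩
  simp at this

/-- The radical is a minimal ideal: a nonzero additive subgroup of `F^n` that is stable under the
actions of the blocks and of the corners is everything. Stability under both subfields gives
stability under their compositum `F`. -/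
lemma radical_minimal [Finite F] (hcomp : F1 ⊔ F2 = ⊤) (H : AddSubgroup (Fin n → F))
    (hA : ∀ (A : Matrix (Fin n) (Fin n) F1), ∀ v ∈ H, (lft A).mulVec v ∈ H)
    (hb : ∀ b : F2, ∀ v ∈ H, (b : F) • v ∈ H) (v0 : Fin n → F) (hv0 : v0 ∈ H) (h0 : v0 ≠ 0)
    (w : Fin n → F) : w ∈ H := by
  obtain ⟨i, hi⟩ := Function.ne_iff.1 h0
  simp only [Pi.zero_apply] at hi
  let S : Subring F :=
    { carrier := {x | ∀ v ∈ H, x • v ∈ H}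
      zero_mem' := fun v _ => by simp
      one_mem' := fun v hv => by simpa using hv
      add_mem' := fun {a b} ha hb v hv => by rw [add_smul]; exact add_mem (ha v hv) (hb v hv)
      neg_mem' := fun {a} ha v hv => by rw [neg_smul]; exact neg_mem (ha v hv)
      mul_mem' := fun {a b} ha hb v hv => by rw [mul_smul]; exact ha _ (hb v hv) }
  let K : Subfield F := S.toSubfield (by
    intro x hx
    by_cases h : x = 0
    · subst h; simp
    have hfin : IsOfFinOrder (Units.mk0 x h) := isOfFinOrder_of_finite _
    obtain ⟨m, hm, hxm⟩ := hfin.exists_pow_eq_one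
    have h1 : x ^ m = 1 := by simpa using congrArg Units.val hxm
    have : x⁻¹ = x ^ (m - 1) := by
      apply inv_eq_of_mul_eq_one_right
      rw [← pow_succ', Nat.sub_add_cancel hm, h1]
    rw [this]; exact pow_mem hx _)
  have hK : K = ⊤ := by
    rw [eq_top_iff, ← hcomp, sup_le_iff]
    refine ⟨fun x hx v hv => ?_, fun x hx v hv => hb ⟨x, hx⟩ v hv⟩
    have := hA (Matrix.scalar _ ⟨x, hx⟩) v hv
    convert! this using 1
    funext j
    rw [lft_mulVec]
    simp [Matrix.diagonal_apply, apply_ite, Finset.sum_ite_eq]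
  have hall : ∀ (x : F), ∀ v ∈ H, x • v ∈ H := fun x => by
    have : x ∈ K := hK ▸ Subfield.mem_top x
    exact this
  have hsingle : ∀ j, Pi.single j (w j) ∈ H := by
    intro j
    have h1 := hA (Matrix.single j i 1) v0 hv0
    have h2 := hall (w j * (v0 i)⁻¹) _ h1
    convert! h2 using 1
    funext l
    simp only [Pi.smul_apply, lft_mulVec, Matrix.single_apply]
    by_cases hl : j = l
    · subst hl
      simp [apply_ite, hi]
    · simp [hl, Ne.symm hl]
  rw [← Finset.univ_sum_single w]
  exact sum_mem fun j _ => hsingle j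

/-- Every nonzero two-sided ideal contains the radical, because the radical is a minimal ideal and
no nonzero ideal meets it trivially. -/
lemma ideal_sat [Finite F] (hcomp : F1 ⊔ F2 = ⊤) (hn : 1 ≤ n) (I : TwoSidedIdeal (AGL n F1 F2))
    (hI : I ≠ ⊥) (x : AGL n F1 F2) (h1 : blk x = 0) (h2 : cor x = 0) : x ∈ I := by
  have hrad : ∃ v0 : Fin n → F, v0 ≠ 0 ∧ mkA 0 v0 0 ∈ I := by
    obtain ⟨y, hy, hy0⟩ : ∃ y, y ∈ I ∧ y ≠ 0 := by
      by_contra! h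
      exact hI (le_bot_iff.1 fun y hy => (TwoSidedIdeal.mem_bot _).2 (h y hy))
    by_cases hA : blk y = 0
    · by_cases hb : cor y = 0
      · refine ⟨vec y, fun h => hy0 ?_, ?_⟩
        · exact agl_ext hA h hb
        · convert hy
          rw [← mkA_eta y, hA, hb]; simp
      · refine ⟨(cor y : F) • fun _ => 1, ?_, ?_⟩
        · intro h
          apply hb
          have := congrFun h ⟨0, hn⟩
          simpa using this
        · convert TwoSidedIdeal.mul_mem_left I (mkA 0 (fun _ => 1) 0) y hy using 1
          refine agl_ext ?_ ?_ ?_ <;> simp [vec_mul]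
    · have : ∃ w, (lft (blk y)).mulVec w ≠ 0 := by
        by_contra! h
        apply hA
        ext i j
        have := congrFun (h (Pi.single j 1)) i
        simpa [lft_mulVec] using this
      obtain ⟨w, hw⟩ := this
      refine ⟨_, hw, ?_⟩
      convert TwoSidedIdeal.mul_mem_right I y (mkA 0 w 0) hy using 1
      refine agl_ext ?_ ?_ ?_ <;> simp [vec_mul]
  obtain ⟨v0, hv0, hv0I⟩ := hrad
  let H : AddSubgroup (Fin n → F) :=
    { carrier := {v | mkA (F1 := F1) (F2 := F2) 0 v 0 ∈ I}
      zero_mem' := by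
        have : mkA (F1 := F1) (F2 := F2) (n := n) 0 0 0 = 0 := agl_ext (by simp) (by simp) (by simp)
        simp only [Set.mem_ofPred_eq, this]; exact zero_mem I
      add_mem' := by
        intro a b ha hb
        have : mkA (F1 := F1) (F2 := F2) 0 (a + b) 0 = mkA 0 a 0 + mkA 0 b 0 :=
          agl_ext (by simp) (by simp) (by simp)
        simp only [Set.mem_ofPred_eq, this]; exact add_mem ha hb
      neg_mem' := by
        intro a ha
        have : mkA (F1 := F1) (F2 := F2) 0 (-a) 0 = -mkA 0 a 0 :=
          agl_ext (by simp) (by simp) (by simp)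
        simp only [Set.mem_ofPred_eq, this]; exact neg_mem ha }
  have : vec x ∈ H := by
    refine radical_minimal (F1 := F1) (F2 := F2) hcomp H (fun A v hv => ?_) (fun b v hv => ?_)
      v0 hv0I hv0 _
    · have := TwoSidedIdeal.mul_mem_left I (mkA A 0 0) (mkA 0 v 0) hv
      change mkA (F1 := F1) (F2 := F2) 0 _ 0 ∈ I
      convert! this using 1
      refine agl_ext ?_ ?_ ?_ <;> simp [vec_mul]
    · have := TwoSidedIdeal.mul_mem_right I (mkA 0 v 0) (mkA 0 0 b) hv
      change mkA (F1 := F1) (F2 := F2) 0 _ 0 ∈ I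
      convert! this using 1
      refine agl_ext ?_ ?_ ?_ <;> simp [vec_mul]
  have h : mkA 0 (vec x) 0 ∈ I := this
  rwa [← h1, ← h2, mkA_eta] at h

/-- A proper subring lies in a proper subring containing the radical, or it is one of the
complements of the radical. -/
lemma subring_dichotomy [Finite F] (hcomp : F1 ⊔ F2 = ⊤)
    (S : NonUnitalSubring (AGL n F1 F2)) (hS : S ≠ ⊤) :
    (∃ S', S ≤ S' ∧ S' ≠ ⊤ ∧ Sat S') ∨ ∃ u, S = rcompl F1 F2 u := by
  by_cases hsat : satur S = ⊤
  swap
  · exact Or.inl ⟨satur S, le_satur S, hsat, satur_sat S⟩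
  right
  have hlift : ∀ (A : Matrix (Fin n) (Fin n) F1) (b : F2), ∃ x ∈ S, blk x = A ∧ cor x = b := by
    intro A b
    have : mkA A 0 b ∈ satur S := hsat ▸ NonUnitalSubring.mem_top _
    obtain ⟨y, hy, h1, h2⟩ := this
    exact ⟨y, hy, by simpa using h1, by simpa using h2⟩
  let H : AddSubgroup (Fin n → F) :=
    { carrier := {v | mkA (F1 := F1) (F2 := F2) 0 v 0 ∈ S}
      zero_mem' := by
        have : mkA (F1 := F1) (F2 := F2) (n := n) 0 0 0 = 0 := agl_ext (by simp) (by simp) (by simp)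
        simp only [Set.mem_ofPred_eq, this]; exact zero_mem S
      add_mem' := by
        intro a b ha hb
        have : mkA (F1 := F1) (F2 := F2) 0 (a + b) 0 = mkA 0 a 0 + mkA 0 b 0 :=
          agl_ext (by simp) (by simp) (by simp)
        simp only [Set.mem_ofPred_eq, this]; exact add_mem ha hb
      neg_mem' := by
        intro a ha
        have : mkA (F1 := F1) (F2 := F2) 0 (-a) 0 = -mkA 0 a 0 :=
          agl_ext (by simp) (by simp) (by simp)
        simp only [Set.mem_ofPred_eq, this]; exact neg_mem ha }
  have hH : ∀ v ∈ H, v = 0 := by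
    intro v hv
    by_contra hv0
    apply hS
    have hall := radical_minimal (F1 := F1) (F2 := F2) hcomp H (fun A v hv => ?_)
      (fun b v hv => ?_) v hv hv0
    · rw [NonUnitalSubring.eq_top_iff']
      intro x
      obtain ⟨y, hy, h1, h2⟩ := hlift (blk x) (cor x)
      have h3 : mkA 0 (vec (x - y)) 0 ∈ S := hall (vec (x - y))
      have h4 : mkA 0 (vec (x - y)) 0 = x - y := agl_ext (by simp [h1]) (by simp) (by simp [h2])
      rw [h4] at h3
      simpa using add_mem h3 hy
    · obtain ⟨x, hx, h1, h2⟩ := hlift A 0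
      have := mul_mem hx (show mkA 0 v 0 ∈ S from hv)
      change mkA (F1 := F1) (F2 := F2) 0 _ 0 ∈ S
      convert! this using 1
      refine agl_ext ?_ ?_ ?_ <;> simp [vec_mul, h1]
    · obtain ⟨x, hx, h1, h2⟩ := hlift 0 b
      have := mul_mem (show mkA 0 v 0 ∈ S from hv) hx
      change mkA (F1 := F1) (F2 := F2) 0 _ 0 ∈ S
      convert! this using 1
      refine agl_ext ?_ ?_ ?_ <;> simp [vec_mul, h1, h2]
  obtain ⟨e, he, he1, he2⟩ := hlift 1 0
  have hle : ∀ x ∈ S, x ∈ rcompl F1 F2 (vec e) := by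
    intro x hx
    have h1 := sub_mem (mul_mem hx he) (mul_mem he hx)
    have h2 : x * e - e * x = mkA 0 (vec (x * e - e * x)) 0 :=
      agl_ext (by simp [he1]) (by simp) (by simp [he2])
    rw [h2] at h1
    have h3 := hH _ h1
    simp only [vec_sub, vec_mul, he1, he2, map_one, Matrix.one_mulVec, Subfield.coe_zero, zero_smul,
      add_zero] at h3
    rw [mem_rcompl, eq_comm, ← sub_eq_zero, ← h3]
    abel
  refine ⟨vec e, le_antisymm hle fun x hx => ?_⟩
  obtain ⟨y, hy, h1, h2⟩ := hlift (blk x) (cor x)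
  have h3 := hle y hy
  rw [mem_rcompl] at h3 hx
  have : x = y := agl_ext h1.symm (by rw [hx, h3, h1, h2]) h2.symm
  rwa [this]

/-- The elements with block `A` and corner `b` are either distributed injectively over the
complements, or one of them lies in no complement. -/
lemma mulVec_sub_surj_or [Finite F] (A : Matrix (Fin n) (Fin n) F) (b : F) :
    (Function.Injective fun v => A.mulVec v - b • v) ∨
      ∃ v, ∀ u, v ≠ A.mulVec u - b • u := by
  by_cases h : Function.Surjective fun v => A.mulVec v - b • v
  · exact Or.inl (Finite.injective_iff_surjective.2 h)
  · right
    rw [Function.Surjective] at h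
    push Not at h
    obtain ⟨v, hv⟩ := h
    exact ⟨v, fun u => (hv u).symm⟩

/-- A cover with fewer than `q ^ n` complements of the radical can be replaced by a cover by
subrings containing the radical; otherwise all complements occur, and the remaining members
cover everything that lies in no complement. -/
lemma cover_dichotomy [Finite F] (hcomp : F1 ⊔ F2 = ⊤)
    (C : Finset (NonUnitalSubring (AGL n F1 F2))) (hC : IsRingCover _ C) :
    (∃ C' : Finset (NonUnitalSubring (AGL n F1 F2)), IsRingCover _ C' ∧ (∀ S ∈ C', Sat S) ∧
      C'.card ≤ C.card) ∨
    ∃ N : Finset (NonUnitalSubring (AGL n F1 F2)), (∀ S ∈ N, S ≠ ⊤ ∧ Sat S) ∧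
      Nat.card F ^ n + N.card ≤ C.card ∧
      ∀ x, (∀ u, x ∉ rcompl F1 F2 u) → ∃ S ∈ N, x ∈ S := by
  have : Fintype F := Fintype.ofFinite F
  let N0 := C.filter fun S => ∀ u, S ≠ rcompl F1 F2 u
  have hN0 : ∀ S ∈ N0, ∃ S', S ≤ S' ∧ S' ≠ ⊤ ∧ Sat S' := by
    intro S hS
    rw [Finset.mem_filter] at hS
    rcases subring_dichotomy hcomp S (hC.1 S hS.1) with h | ⟨u, h⟩
    · exact h
    · exact absurd h (hS.2 u)
  choose! g hg1 hg2 hg3 using hN0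
  let N := N0.image g
  have hNp : ∀ S ∈ N, S ≠ ⊤ ∧ Sat S := by
    intro S hS
    obtain ⟨T, hT, rfl⟩ := Finset.mem_image.1 hS
    exact ⟨hg2 T hT, hg3 T hT⟩
  have hcov : ∀ x, (∀ u, rcompl F1 F2 u ∈ C → x ∉ rcompl F1 F2 u) → ∃ S ∈ N, x ∈ S := by
    intro x hx
    obtain ⟨S, hS, hxS⟩ := hC.2 x
    have hSN : S ∈ N0 := by
      refine Finset.mem_filter.2 ⟨hS, fun u hu => ?_⟩
      subst hu
      exact hx u hS hxS
    exact ⟨g S, Finset.mem_image_of_mem _ hSN, hg1 S hSN hxS⟩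
  by_cases hall : ∀ u, rcompl F1 F2 u ∈ C
  · right
    refine ⟨N, hNp, ?_, fun x hx => hcov x fun u _ => hx u⟩
    have h1 : (Finset.univ.image (rcompl (n := n) F1 F2)).card = Nat.card F ^ n := by
      rw [Finset.card_image_of_injective _ rcompl_injective]
      simp
    have h2 : Disjoint (Finset.univ.image (rcompl (n := n) F1 F2)) N0 := by
      rw [Finset.disjoint_left]
      intro S hS hS'
      obtain ⟨u, -, rfl⟩ := Finset.mem_image.1 hS
      exact (Finset.mem_filter.1 hS').2 u rfl
    calc Nat.card F ^ n + N.card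
        ≤ (Finset.univ.image (rcompl (n := n) F1 F2)).card + N0.card := by
          rw [h1]; exact Nat.add_le_add_left Finset.card_image_le _
      _ = (Finset.univ.image (rcompl (n := n) F1 F2) ∪ N0).card :=
          (Finset.card_union_of_disjoint h2).symm
      _ ≤ C.card := by
          refine Finset.card_le_card (Finset.union_subset ?_ (Finset.filter_subset _ _))
          intro S hS
          obtain ⟨u, -, rfl⟩ := Finset.mem_image.1 hS
          exact hall u
  · left
    push Not at hall
    obtain ⟨u0, hu0⟩ := hall
    refine ⟨N, ⟨fun S hS => (hNp S hS).1, fun x => ?_⟩, fun S hS => (hNp S hS).2,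
      Finset.card_image_le.trans (Finset.card_filter_le _ _)⟩
    have : ∃ v, ∀ u, rcompl F1 F2 u ∈ C → mkA (blk x) v (cor x) ∉ rcompl F1 F2 u := by
      rcases mulVec_sub_surj_or (lft (blk x)) (cor x : F) with h | ⟨v, hv⟩
      · refine ⟨(lft (blk x)).mulVec u0 - (cor x : F) • u0, fun u hu hmem => ?_⟩
        rw [mem_rcompl] at hmem
        simp only [vec_mkA, blk_mkA, cor_mkA] at hmem
        have := h hmem
        subst this
        exact hu0 hu
      · refine ⟨v, fun u _ hmem => hv u ?_⟩
        rw [mem_rcompl] at hmem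
        simpa using hmem
    obtain ⟨v, hv⟩ := this
    obtain ⟨S, hS, hxS⟩ := hcov _ hv
    exact ⟨S, hS, (hNp S hS).2.mem_iff (by simp) (by simp) hxS⟩

/-! ### Reduction to subrings containing the radical -/

/-- The radical as a two-sided ideal. -/
def radIdeal (n : ℕ) (F1 F2 : Subfield F) : TwoSidedIdeal (AGL n F1 F2) :=
  TwoSidedIdeal.ker ((blk : AGL n F1 F2 →+* _).prod cor)

lemma mem_radIdeal {x : AGL n F1 F2} : x ∈ radIdeal n F1 F2 ↔ blk x = 0 ∧ cor x = 0 := by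
  rw [radIdeal, TwoSidedIdeal.mem_ker, RingHom.prod_apply, Prod.mk_eq_zero]

lemma radIdeal_ne_bot (hn : 1 ≤ n) : radIdeal n F1 F2 ≠ ⊥ := by
  intro h
  have : mkA 0 (fun _ => 1) 0 ∈ radIdeal n F1 F2 := by simp [mem_radIdeal]
  rw [h, TwoSidedIdeal.mem_bot] at this
  have := congrFun (congrArg vec this) ⟨0, hn⟩
  simp at this

/-- A cover by subrings containing the radical descends to the quotient by the radical. -/
lemma coveringNumber_quot_le (C : Finset (NonUnitalSubring (AGL n F1 F2)))
    (hC : IsRingCover _ C) (hs : ∀ S ∈ C, Sat S) :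
    coveringNumber (radIdeal n F1 F2).ringCon.Quotient ≤ C.card := by
  let π : AGL n F1 F2 →ₙ+* (radIdeal n F1 F2).ringCon.Quotient :=
    ((radIdeal n F1 F2).ringCon.mk' : AGL n F1 F2 →+* _)
  have hπ : Function.Surjective π := (radIdeal n F1 F2).ringCon.mk'_surjective
  have hker : ∀ x y, π x = π y → blk x = blk y ∧ cor x = cor y := by
    intro x y h
    have h1 : (radIdeal n F1 F2).ringCon x y := (RingCon.eq _).1 h
    rw [TwoSidedIdeal.rel_iff, mem_radIdeal] at h1
    simpa [sub_eq_zero] using h1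
  have hcov : IsRingCover _ (C.image (NonUnitalSubring.map π)) := by
    refine ⟨?_, fun t => ?_⟩
    · intro S hS h
      obtain ⟨S', hS', rfl⟩ := Finset.mem_image.1 hS
      refine hC.1 S' hS' ((NonUnitalSubring.eq_top_iff' _).2 fun x => ?_)
      have : π x ∈ NonUnitalSubring.map π S' := h ▸ NonUnitalSubring.mem_top _
      obtain ⟨y, hy, hxy⟩ := this
      exact (hs S' hS').mem_iff (hker _ _ hxy).1 (hker _ _ hxy).2 hy
    · obtain ⟨x, rfl⟩ := hπ t
      obtain ⟨S, hS, hx⟩ := hC.2 x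
      exact ⟨_, Finset.mem_image_of_mem _ hS, x, hx, rfl⟩
  refine (coveringNumber_le hcov).trans ?_
  exact_mod_cast Finset.card_image_le

/-- Covers of a proper quotient pull back to covers by subrings containing the radical, since every
nonzero ideal contains the radical. -/
lemma le_coveringNumber_quot [Finite F] (hcomp : F1 ⊔ F2 = ⊤) (hn : 1 ≤ n)
    (I : TwoSidedIdeal (AGL n F1 F2)) (hI : I ≠ ⊥) (k : ℕ)
    (h : ∀ C : Finset (NonUnitalSubring (AGL n F1 F2)), IsRingCover _ C → (∀ S ∈ C, Sat S) →
      k ≤ C.card) : (k : ℕ∞) ≤ coveringNumber I.ringCon.Quotient := by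
  let π : AGL n F1 F2 →ₙ+* I.ringCon.Quotient := (I.ringCon.mk' : AGL n F1 F2 →+* _)
  have hπ : Function.Surjective π := I.ringCon.mk'_surjective
  refine le_coveringNumber fun C hC => ?_
  refine (h _ (isRingCover_comap π hπ hC) ?_).trans Finset.card_image_le
  intro S hS x h1 h2
  obtain ⟨S', -, rfl⟩ := Finset.mem_image.1 hS
  have : I.ringCon x 0 := by
    rw [← TwoSidedIdeal.mem_iff]
    exact ideal_sat hcomp hn I hI x h1 h2
  have h0 : π x = π 0 := (RingCon.eq _).2 this
  change π x ∈ S'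
  rw [h0, map_zero]
  exact zero_mem _

/-- `N` is a family of proper subrings containing the radical that covers every element lying
in no complement of the radical. -/
def IsRest (N : Finset (NonUnitalSubring (AGL n F1 F2))) : Prop :=
  (∀ S ∈ N, S ≠ ⊤ ∧ Sat S) ∧ ∀ x, (∀ u, x ∉ rcompl F1 F2 u) → ∃ S ∈ N, x ∈ S

lemma IsRest.card_pos (hn : 1 ≤ n) {N : Finset (NonUnitalSubring (AGL n F1 F2))} (hN : IsRest N) :
    1 ≤ N.card := by
  obtain ⟨S, hS, -⟩ := hN.2 (mkA 0 (fun _ => 1) 0) (fun u hu => by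
    rw [mem_rcompl] at hu
    have := congrFun hu ⟨0, hn⟩
    simp at this)
  exact Finset.card_pos.2 ⟨S, hS⟩

/-- A criterion for failure: if some cover by subrings containing the radical is no larger than
every cover using all complements of the radical, then passing to the quotient by the radical does
not increase the covering number. -/
lemma not_sigmaElementary [Finite F] (hcomp : F1 ⊔ F2 = ⊤) (hn : 1 ≤ n)
    (D : Finset (NonUnitalSubring (AGL n F1 F2))) (hD : IsRingCover _ D) (hs : ∀ S ∈ D, Sat S)
    (hle : ∀ N : Finset (NonUnitalSubring (AGL n F1 F2)), IsRest N →
      D.card ≤ Nat.card F ^ n + N.card) : ¬ IsSigmaElementary (AGL n F1 F2) := by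
  intro h
  have h1 := h _ (radIdeal_ne_bot hn)
  obtain ⟨C, hC, hCc⟩ := exists_cover_of_lt_top (h1.trans_le le_top)
  rcases cover_dichotomy hcomp C hC with ⟨C', hC', hs', hle'⟩ | ⟨N, hN1, hN2, hN3⟩
  · refine absurd h1 (not_lt.2 ((coveringNumber_quot_le C' hC' hs').trans ?_))
    rw [← hCc]; exact_mod_cast hle'
  · refine absurd h1 (not_lt.2 ((coveringNumber_quot_le D hD hs).trans ?_))
    rw [← hCc]; exact_mod_cast (hle N ⟨hN1, hN3⟩).trans hN2

/-- A criterion for being `σ`-elementary: `m` is an upper bound for the covering number, a lower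
bound for covers using all complements of the radical, and a strict lower bound for covers by
subrings containing the radical. -/
lemma sigmaElementary_of [Finite F] (hcomp : F1 ⊔ F2 = ⊤) (hn : 1 ≤ n) (m : ℕ)
    (C0 : Finset (NonUnitalSubring (AGL n F1 F2))) (hC0 : IsRingCover _ C0) (hC0m : C0.card ≤ m)
    (hN : ∀ N : Finset (NonUnitalSubring (AGL n F1 F2)), IsRest N → m ≤ Nat.card F ^ n + N.card)
    (hsat : ∀ C : Finset (NonUnitalSubring (AGL n F1 F2)), IsRingCover _ C → (∀ S ∈ C, Sat S) →
      m + 1 ≤ C.card) :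
    IsSigmaElementary (AGL n F1 F2) ∧ coveringNumber (AGL n F1 F2) = (m : ℕ∞) := by
  have hup : coveringNumber (AGL n F1 F2) ≤ m :=
    (coveringNumber_le hC0).trans (by exact_mod_cast hC0m)
  refine ⟨fun I hI => ?_, le_antisymm hup (le_coveringNumber fun C hC => ?_)⟩
  · refine (hup.trans_lt ?_).trans_le (le_coveringNumber_quot hcomp hn I hI (m + 1) hsat)
    exact_mod_cast Nat.lt_succ_self m
  · rcases cover_dichotomy hcomp C hC with ⟨C', hC', hs', hle'⟩ | ⟨N, hN1, hN2, hN3⟩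
    · have := hsat C' hC' hs'
      omega
    · exact (hN N ⟨hN1, hN3⟩).trans hN2

/-! ### Gaussian binomial coefficients and counting subspaces -/

lemma prod_pascal (Q : ℤ) (n k : ℕ) :
    ∏ i ∈ Finset.range (k + 1), (Q ^ (n + 1) - Q ^ i) =
      (Q ^ (n + 1) - 1) * Q ^ k * ∏ i ∈ Finset.range k, (Q ^ n - Q ^ i) := by
  rw [Finset.prod_range_succ']
  have : ∏ i ∈ Finset.range k, (Q ^ (n + 1) - Q ^ (i + 1)) =
      Q ^ k * ∏ i ∈ Finset.range k, (Q ^ n - Q ^ i) := by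
    rw [← Finset.card_range k, ← Finset.prod_const, Finset.card_range, ← Finset.prod_mul_distrib]
    exact Finset.prod_congr rfl fun i _ => by ring
  rw [this, pow_zero]; ring

lemma gaussBinom_mul_int (Q : ℕ) : ∀ n k : ℕ,
    (gaussBinom Q n k : ℤ) * ∏ i ∈ Finset.range k, ((Q : ℤ) ^ k - (Q : ℤ) ^ i) =
      ∏ i ∈ Finset.range k, ((Q : ℤ) ^ n - (Q : ℤ) ^ i)
  | 0, 0 => by simp [gaussBinom]
  | n + 1, 0 => by simp [gaussBinom]
  | 0, k + 1 => by
      rw [Finset.prod_range_succ' (fun i => (Q : ℤ) ^ 0 - (Q : ℤ) ^ i)]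
      simp [gaussBinom]
  | n + 1, k + 1 => by
      have h1 := gaussBinom_mul_int Q n k
      have h2 := gaussBinom_mul_int Q n (k + 1)
      rw [Finset.prod_range_succ (fun i => (Q : ℤ) ^ n - (Q : ℤ) ^ i)] at h2
      rw [prod_pascal] at h2 ⊢
      rw [prod_pascal, gaussBinom]
      push_cast
      linear_combination ((Q : ℤ) ^ (k + 1) - 1) * (Q : ℤ) ^ k * h1 + (Q : ℤ) ^ (k + 1) * h2

lemma prod_cast {Q : ℕ} (hQ : 1 ≤ Q) {n k : ℕ} (h : k ≤ n) :
    ((∏ i ∈ Finset.range k, (Q ^ n - Q ^ i) : ℕ) : ℤ) =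
      ∏ i ∈ Finset.range k, ((Q : ℤ) ^ n - (Q : ℤ) ^ i) := by
  push_cast
  refine Finset.prod_congr rfl fun i hi => ?_
  rw [Nat.cast_sub (Nat.pow_le_pow_right hQ ((Finset.mem_range.1 hi).le.trans h))]
  push_cast; rfl

/-- The recursive definition agrees with the usual product formula. -/
lemma gaussBinom_mul {Q : ℕ} (hQ : 1 ≤ Q) {n k : ℕ} (h : k ≤ n) :
    gaussBinom Q n k * GLcard k Q = ∏ i ∈ Finset.range k, (Q ^ n - Q ^ i) := by
  have := gaussBinom_mul_int Q n k
  rw [← prod_cast hQ h, ← prod_cast hQ le_rfl] at this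
  exact_mod_cast this

lemma GLcard_pos {Q : ℕ} (hQ : 2 ≤ Q) (n : ℕ) : 0 < GLcard n Q :=
  Finset.prod_pos fun i hi => Nat.sub_pos_of_lt
    (Nat.pow_lt_pow_right (by omega) (Finset.mem_range.1 hi))

lemma GLcard_succ {Q : ℕ} (hQ : 1 ≤ Q) (n : ℕ) :
    GLcard (n + 1) Q = (Q ^ (n + 1) - 1) * Q ^ n * GLcard n Q := by
  have := prod_pascal Q n n
  rw [← prod_cast hQ le_rfl, ← prod_cast hQ le_rfl] at this
  unfold GLcard
  zify [Nat.one_le_pow (n + 1) Q hQ]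
  exact_mod_cast this

/-- The stabiliser of a `k`-dimensional subspace in `GL n` has index `gaussBinom Q n k`. -/
lemma gaussBinom_mul_GL {Q : ℕ} (hQ : 1 ≤ Q) {n k : ℕ} (h : k ≤ n) :
    gaussBinom Q n k * (GLcard k Q * GLcard (n - k) Q * Q ^ (k * (n - k))) = GLcard n Q := by
  have h1 := gaussBinom_mul hQ h
  have h2 : GLcard n Q = (∏ i ∈ Finset.range k, (Q ^ n - Q ^ i)) *
      (Q ^ (k * (n - k)) * GLcard (n - k) Q) := by
    obtain ⟨m, rfl⟩ := Nat.exists_eq_add_of_le h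
    rw [GLcard, Finset.prod_range_add]
    congr 1
    rw [Nat.add_sub_cancel_left, GLcard, pow_mul,
      ← Finset.card_range m, ← Finset.prod_const, Finset.card_range, ← Finset.prod_mul_distrib]
    refine Finset.prod_congr rfl fun i _ => ?_
    rw [pow_add, pow_add, Nat.mul_sub]
  rw [h2, ← h1]; ring

lemma gaussBinom_symm {Q : ℕ} (hQ : 2 ≤ Q) {n k : ℕ} (h : k ≤ n) :
    gaussBinom Q n (n - k) = gaussBinom Q n k := by
  have h1 := gaussBinom_mul_GL (by omega : 1 ≤ Q) h
  have h2 := gaussBinom_mul_GL (by omega : 1 ≤ Q) (Nat.sub_le n k)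
  rw [Nat.sub_sub_self h] at h2
  rw [← h2, mul_comm (n - k) k, mul_comm (GLcard (n - k) Q)] at h1
  have : 0 < GLcard k Q * GLcard (n - k) Q * Q ^ (k * (n - k)) :=
    Nat.mul_pos (Nat.mul_pos (GLcard_pos hQ _) (GLcard_pos hQ _)) (pow_pos (by omega) _)
  exact (Nat.eq_of_mul_eq_mul_right this h1).symm

lemma gaussBinom_pos (Q : ℕ) : ∀ n k : ℕ, k ≤ n → 1 ≤ gaussBinom Q n k
  | _, 0, _ => by simp [gaussBinom]
  | 0, k + 1, h => by omega
  | n + 1, k + 1, h => by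
      rw [gaussBinom]
      exact (gaussBinom_pos Q n k (by omega)).trans (Nat.le_add_right _ _)

lemma le_gaussBinom {Q : ℕ} (hQ : 1 ≤ Q) : ∀ n k : ℕ, 1 ≤ k → k < n → n ≤ gaussBinom Q n k
  | _, 0, h, _ => by omega
  | 0, k + 1, _, h => by omega
  | n + 1, k + 1, h, h' => by
      rw [gaussBinom]
      have hp : 1 ≤ Q ^ (k + 1) := Nat.one_le_pow _ _ hQ
      rcases Nat.eq_zero_or_pos k with rfl | hk
      · have h1 : n ≤ gaussBinom Q n 1 := by
          rcases Nat.lt_or_ge 1 n with hn | hn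
          · exact le_gaussBinom hQ n 1 le_rfl hn
          · have : n = 1 := by omega
            subst this; exact gaussBinom_pos Q 1 1 le_rfl
        have h0 : gaussBinom Q n 0 = 1 := by cases n <;> rfl
        rw [h0]
        nlinarith
      · have h1 := le_gaussBinom hQ n k hk (by omega)
        have h2 := gaussBinom_pos Q n (k + 1) (by omega)
        nlinarith

lemma GLcard_le {Q : ℕ} (hQ : 1 ≤ Q) (n : ℕ) : GLcard n Q ≤ Q ^ (n * n) := by
  rw [GLcard, pow_mul]
  calc _ ≤ ∏ _i ∈ Finset.range n, Q ^ n := Finset.prod_le_prod' fun i _ => Nat.sub_le _ _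
    _ = _ := by simp

/-- A quantitative form of `|GL_n(Q)| ≥ Q ^ (n ^ 2) / 4`, with a correction making it inductive. -/
lemma GLcard_lower {Q : ℕ} (hQ : 2 ≤ Q) (n : ℕ) :
    ((Q : ℚ) ^ (n * n)) * (1 / 4 + 1 / 2 ^ (n + 1)) ≤ GLcard n Q := by
  have hQ' : (2 : ℚ) ≤ Q := by exact_mod_cast hQ
  induction n with
  | zero => norm_num [GLcard]
  | succ n ih =>
    rw [GLcard_succ (by omega)]
    have hp : 1 ≤ Q ^ (n + 1) := Nat.one_le_pow _ _ (by omega)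
    push_cast [Nat.cast_sub hp]
    rcases Nat.eq_zero_or_pos n with rfl | hn
    · norm_num [GLcard]; linarith
    · have hx : (1 : ℚ) / 2 ^ (n + 1) ≤ 1 / 4 := by
        apply one_div_le_one_div_of_le (by norm_num)
        calc (4 : ℚ) = 2 ^ 2 := by norm_num
          _ ≤ 2 ^ (n + 1) := pow_le_pow_right₀ (by norm_num) (by omega)
      set x : ℚ := 1 / 2 ^ (n + 1) with hxdef
      have hx0 : 0 < x := by positivity
      have hx2 : (1 : ℚ) / 2 ^ (n + 1 + 1) = x / 2 := by rw [hxdef, pow_succ _ (n + 1)]; ring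
      have hQx : (1 - x) * (Q : ℚ) ^ (n + 1) ≤ (Q : ℚ) ^ (n + 1) - 1 := by
        have h1 : (2 : ℚ) ^ (n + 1) ≤ (Q : ℚ) ^ (n + 1) := by gcongr
        have h2 : x * 2 ^ (n + 1) = 1 := by rw [hxdef]; field_simp
        nlinarith [mul_le_mul_of_nonneg_left h1 hx0.le]
      rw [hx2]
      calc (Q : ℚ) ^ ((n + 1) * (n + 1)) * (1 / 4 + x / 2)
          ≤ (Q : ℚ) ^ ((n + 1) * (n + 1)) * ((1 - x) * (1 / 4 + x)) := by
            gcongr; nlinarith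
        _ = ((1 - x) * (Q : ℚ) ^ (n + 1)) * (Q : ℚ) ^ n * ((Q : ℚ) ^ (n * n) * (1 / 4 + x)) := by
            ring
        _ ≤ ((Q : ℚ) ^ (n + 1) - 1) * (Q : ℚ) ^ n * GLcard n Q := by
            gcongr
            · have : (1 : ℚ) ≤ (Q : ℚ) ^ (n + 1) := by exact_mod_cast hp
              exact mul_nonneg (by linarith) (by positivity)

lemma four_GLcard {Q : ℕ} (hQ : 2 ≤ Q) (n : ℕ) : Q ^ (n * n) < 4 * GLcard n Q := by
  have h := GLcard_lower hQ n
  have h1 : (0 : ℚ) < Q ^ (n * n) * (1 / 2 ^ (n + 1)) := by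
    have : (0 : ℚ) < Q := by exact_mod_cast (by omega : 0 < Q)
    positivity
  have : ((Q ^ (n * n) : ℕ) : ℚ) < ((4 * GLcard n Q : ℕ) : ℚ) := by push_cast; linarith
  exact_mod_cast this

lemma gaussBinom_le {Q : ℕ} (hQ : 2 ≤ Q) {n k : ℕ} (h : k ≤ n) :
    gaussBinom Q n k * Q ^ (k * k) ≤ 4 * Q ^ (n * k) := by
  have h1 := gaussBinom_mul (by omega : 1 ≤ Q) h
  have h2 : ∏ i ∈ Finset.range k, (Q ^ n - Q ^ i) ≤ Q ^ (n * k) := by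
    rw [pow_mul]
    calc _ ≤ ∏ _i ∈ Finset.range k, Q ^ n := Finset.prod_le_prod' fun i _ => Nat.sub_le _ _
      _ = _ := by simp
  calc _ ≤ gaussBinom Q n k * (4 * GLcard k Q) := Nat.mul_le_mul_left _ (four_GLcard hQ k).le
    _ = 4 * (gaussBinom Q n k * GLcard k Q) := by ring
    _ ≤ _ := by rw [h1]; exact Nat.mul_le_mul_left _ h2

lemma primeFactors_card_le (d : ℕ) : d.primeFactors.card ≤ d := by
  rcases Nat.eq_zero_or_pos d with rfl | hd
  · simp
  calc d.primeFactors.card ≤ (Finset.Icc 1 d).card := by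
        refine Finset.card_le_card fun l hl => ?_
        have := Nat.prime_of_mem_primeFactors hl
        exact Finset.mem_Icc.2 ⟨this.one_lt.le, Nat.le_of_mem_primeFactors hl⟩
    _ = d := by simp

lemma gaussBinom_add_le {Q : ℕ} (hQ : 2 ≤ Q) {n d : ℕ} (hd : 1 ≤ d) (h : d < n) :
    gaussBinom Q n d + d.primeFactors.card ≤ Q ^ (d * n) := by
  have h1 := gaussBinom_mul (by omega : 1 ≤ Q) h.le
  have h2 : ∏ i ∈ Finset.range d, (Q ^ n - Q ^ i) ≤ Q ^ (d * n) := by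
    rw [mul_comm, pow_mul]
    calc _ ≤ ∏ _i ∈ Finset.range d, Q ^ n := Finset.prod_le_prod' fun i _ => Nat.sub_le _ _
      _ = _ := by simp
  rcases Nat.lt_or_ge 1 d with hd1 | hd1
  · have h3 : 2 ≤ GLcard d Q := by
      obtain ⟨e, rfl⟩ : ∃ e, d = e + 1 := ⟨d - 1, by omega⟩
      rw [GLcard_succ (by omega)]
      have ha : 4 ≤ Q ^ (e + 1) := by
        calc 4 = 2 ^ 2 := rfl
          _ ≤ Q ^ 2 := Nat.pow_le_pow_left hQ 2
          _ ≤ Q ^ (e + 1) := Nat.pow_le_pow_right (by omega) (by omega)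
      have hb : 0 < Q ^ e * GLcard e Q := Nat.mul_pos (pow_pos (by omega) _) (GLcard_pos hQ e)
      rw [mul_assoc]
      calc 2 ≤ 3 * 1 := by norm_num
        _ ≤ _ := Nat.mul_le_mul (by omega) hb
    have h4 : 2 * d ≤ Q ^ (d * n) := by
      calc 2 * d ≤ 2 * 2 ^ d := Nat.mul_le_mul_left _ Nat.lt_two_pow_self.le
        _ = 2 ^ (d + 1) := by ring
        _ ≤ 2 ^ (d * n) := Nat.pow_le_pow_right (by norm_num) (by nlinarith)
        _ ≤ _ := Nat.pow_le_pow_left hQ _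
    have h5 := primeFactors_card_le d
    have h6 : gaussBinom Q n d * 2 ≤ Q ^ (d * n) :=
      (Nat.mul_le_mul_left _ h3).trans (h1.le.trans h2)
    omega
  · have : d = 1 := by omega
    subst this
    have h3 : 1 ≤ GLcard 1 Q := GLcard_pos hQ 1
    have h6 : gaussBinom Q n 1 * 1 ≤ Q ^ (1 * n) :=
      (Nat.mul_le_mul_left _ h3).trans (h1.le.trans h2)
    simpa using h6

section count

variable {k V : Type*} [Field k] [Finite k] [AddCommGroup V] [Module k V] [Finite V]

lemma prod_fin_range (Q n j : ℕ) :
    ∏ i : Fin j, (Q ^ n - Q ^ (i : ℕ)) = ∏ i ∈ Finset.range j, (Q ^ n - Q ^ i) :=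
  Fin.prod_univ_eq_prod_range (fun i => Q ^ n - Q ^ i) j

lemma card_linInd (j : ℕ) (hj : j ≤ Module.finrank k V) :
    Nat.card {s : Fin j → V // LinearIndependent k s} =
      ∏ i ∈ Finset.range j, (Nat.card k ^ Module.finrank k V - Nat.card k ^ i) := by
  have : Fintype k := Fintype.ofFinite k
  rw [card_linearIndependent hj, Fintype.card_eq_nat_card, prod_fin_range]

/-- The number of `j`-dimensional subspaces is the Gaussian binomial coefficient. -/
lemma card_subspaces (j : ℕ) (hj : j ≤ Module.finrank k V) :
    Nat.card {T : Submodule k V // Module.finrank k T = j} =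
      gaussBinom (Nat.card k) (Module.finrank k V) j := by
  have hQ : 2 ≤ Nat.card k := Finite.one_lt_card
  have e : {s : Fin j → V // LinearIndependent k s} ≃
      Σ T : {T : Submodule k V // Module.finrank k T = j},
        {s : Fin j → T.1 // LinearIndependent k s} :=
    { toFun := fun s => ⟨⟨Submodule.span k (Set.range s.1), by
          rw [finrank_span_eq_card s.2, Fintype.card_fin]⟩,
        ⟨fun i => ⟨s.1 i, Submodule.subset_span ⟨i, rfl⟩⟩, by
          refine LinearIndependent.of_comp (Submodule.subtype _) ?_
          exact s.2⟩⟩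
      invFun := fun x => ⟨fun i => (x.2.1 i : V), by
        exact x.2.2.map' (Submodule.subtype _) (Submodule.ker_subtype _)⟩
      left_inv := fun s => rfl
      right_inv := by
        rintro ⟨⟨T, hT⟩, ⟨s, hs⟩⟩
        have h1 : Submodule.span k (Set.range fun i => (s i : V)) = T := by
          have hs' : LinearIndependent k fun i => (s i : V) :=
            hs.map' (Submodule.subtype _) (Submodule.ker_subtype _)
          apply Submodule.eq_of_le_of_finrank_eq
          · rw [Submodule.span_le]
            rintro _ ⟨i, rfl⟩
            exact (s i).2
          · rw [finrank_span_eq_card hs', Fintype.card_fin, hT]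
        have hgen : ∀ (T' : Submodule k V) (h' : Module.finrank k T' = j)
            (s' : Fin j → T') (hs' : LinearIndependent k s'), T' = T →
            (∀ i, (s' i : V) = s i) →
            (⟨⟨T', h'⟩, ⟨s', hs'⟩⟩ : Σ T : {T : Submodule k V // Module.finrank k T = j},
              {s : Fin j → T.1 // LinearIndependent k s}) = ⟨⟨T, hT⟩, ⟨s, hs⟩⟩ := by
          intro T' h' s' hs' hT' hss
          subst hT'
          have : s' = s := funext fun i => Subtype.ext (hss i)
          subst this
          rfl
        exact hgen _ _ _ _ h1 fun i => rfl }
  have h1 : Nat.card {s : Fin j → V // LinearIndependent k s} =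
      Nat.card {T : Submodule k V // Module.finrank k T = j} * GLcard j (Nat.card k) := by
    have : Fintype {T : Submodule k V // Module.finrank k T = j} := Fintype.ofFinite _
    rw [Nat.card_congr e, Nat.card_sigma, Nat.card_eq_fintype_card, ← smul_eq_mul,
      ← Finset.card_univ]
    refine Finset.sum_eq_card_nsmul fun T _ => ?_
    rw [card_linInd j T.2.ge, T.2, GLcard]
  rw [card_linInd j hj, ← gaussBinom_mul (by omega) hj] at h1
  exact (Nat.eq_of_mul_eq_mul_right (GLcard_pos hQ j) h1).symm

lemma card_linearEquiv {B : Type*} [AddCommGroup B] [Module k B] [Finite B]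
    (h : Module.finrank k B = Module.finrank k V) :
    Nat.card (B ≃ₗ[k] V) = GLcard (Module.finrank k V) (Nat.card k) := by
  have : Fintype k := Fintype.ofFinite k
  set m := Module.finrank k V with hm
  let e : B ≃ₗ[k] (Fin m → k) := LinearEquiv.ofFinrankEq _ _ (by simp [h])
  let f : V ≃ₗ[k] (Fin m → k) := LinearEquiv.ofFinrankEq _ _ (by simp [hm])
  let E : (B ≃ₗ[k] V) ≃ ((Fin m → k) ≃ₗ[k] (Fin m → k)) :=
    { toFun := fun g => e.symm ≪≫ₗ g ≪≫ₗ f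
      invFun := fun g => e ≪≫ₗ g ≪≫ₗ f.symm
      left_inv := fun g => by ext; simp
      right_inv := fun g => LinearEquiv.ext fun x => by simp }
  rw [Nat.card_congr E, Nat.card_congr (LinearMap.GeneralLinearGroup.generalLinearEquiv k
    (Fin m → k)).symm.toEquiv, Nat.card_congr (Matrix.GeneralLinearGroup.toLin (n := Fin m)
    (R := k)).symm.toEquiv, Matrix.card_GL_field, Fintype.card_eq_nat_card, prod_fin_range, GLcard]

/-- Linear isomorphisms act transitively on subspaces of a given dimension. -/
lemma exists_linearEquiv_map {B : Type*} [AddCommGroup B] [Module k B] [Finite B]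
    (h : Module.finrank k B = Module.finrank k V) (X : Submodule k B) (T : Submodule k V)
    (hXT : Module.finrank k X = Module.finrank k T) :
    ∃ g : B ≃ₗ[k] V, X.map (g : B →ₗ[k] V) = T := by
  obtain ⟨X', hX'⟩ := X.exists_isCompl
  obtain ⟨T', hT'⟩ := T.exists_isCompl
  have h1 := Submodule.finrank_add_eq_of_isCompl hX'
  have h2 := Submodule.finrank_add_eq_of_isCompl hT'
  let e1 : X ≃ₗ[k] T := LinearEquiv.ofFinrankEq _ _ hXT
  let e2 : X' ≃ₗ[k] T' := LinearEquiv.ofFinrankEq _ _ (by omega)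
  let g : B ≃ₗ[k] V := (Submodule.prodEquivOfIsCompl X X' hX').symm ≪≫ₗ (e1.prodCongr e2) ≪≫ₗ
    (Submodule.prodEquivOfIsCompl T T' hT')
  refine ⟨g, Submodule.eq_of_le_of_finrank_eq ?_ ?_⟩
  · rintro _ ⟨x, hx, rfl⟩
    have : g x = e1 ⟨x, hx⟩ := by
      have h3 : (Submodule.prodEquivOfIsCompl X X' hX').symm x = (⟨x, hx⟩, 0) :=
        Submodule.prodEquivOfIsCompl_symm_apply_left _ _ _ (⟨x, hx⟩ : X)
      simp [g, h3]
    change g x ∈ T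
    rw [this]; exact (e1 _).2
  · rw [LinearEquiv.finrank_map_eq]; exact hXT

/-- The isomorphisms carrying a given subspace to a given subspace of the same dimension make up
the fraction `1 / N` of all isomorphisms, with `N` the number of subspaces of that dimension. -/
lemma card_linearEquiv_map {B : Type*} [AddCommGroup B] [Module k B] [Finite B]
    (h : Module.finrank k B = Module.finrank k V) (X : Submodule k B) (T : Submodule k V)
    (hXT : Module.finrank k X = Module.finrank k T) :
    Nat.card {g : B ≃ₗ[k] V // X.map (g : B →ₗ[k] V) = T} *
      gaussBinom (Nat.card k) (Module.finrank k V) (Module.finrank k T) =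
      GLcard (Module.finrank k V) (Nat.card k) := by
  have hfin : Finite (B ≃ₗ[k] V) := Finite.of_injective (fun g : B ≃ₗ[k] V => (g : B → V))
    DFunLike.coe_injective
  set j := Module.finrank k T
  have hj : j ≤ Module.finrank k V := Submodule.finrank_le T
  rw [← card_linearEquiv (V := V) h, ← card_subspaces j hj, mul_comm]
  let e : (B ≃ₗ[k] V) ≃ Σ T' : {T : Submodule k V // Module.finrank k T = j},
      {g : B ≃ₗ[k] V // (⟨X.map (g : B →ₗ[k] V), by
        rw [LinearEquiv.finrank_map_eq]; exact hXT⟩ :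
        {T : Submodule k V // Module.finrank k T = j}) = T'} :=
    (Equiv.sigmaFiberEquiv _).symm
  have : Fintype {T : Submodule k V // Module.finrank k T = j} := Fintype.ofFinite _
  rw [Nat.card_congr e, Nat.card_sigma, Nat.card_eq_fintype_card, ← smul_eq_mul, ← Finset.card_univ]
  refine (Finset.sum_eq_card_nsmul fun T' _ => ?_).symm
  obtain ⟨u, hu⟩ := exists_linearEquiv_map (k := k) (V := V) rfl T'.1 T (by rw [T'.2])
  refine Nat.card_congr
    { toFun := fun g => ⟨g.1 ≪≫ₗ u, ?_⟩
      invFun := fun g => ⟨g.1 ≪≫ₗ u.symm, ?_⟩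
      left_inv := fun g => Subtype.ext (LinearEquiv.ext fun x => by simp)
      right_inv := fun g => Subtype.ext (LinearEquiv.ext fun x => by simp) }
  · have := congrArg Subtype.val g.2
    simp only at this
    rw [LinearEquiv.coe_trans, Submodule.map_comp, this, hu]
  · refine Subtype.ext ?_
    simp only
    rw [LinearEquiv.coe_trans, Submodule.map_comp, g.2, ← hu, ← Submodule.map_comp,
      ← LinearEquiv.coe_trans]
    simp

end count

/-! ### Subrings of endomorphism rings -/

section label

variable {k V : Type*} [Field k] [AddCommGroup V] [Module k V]

/-- `T` is a proper nonzero subspace stable under all members of `S`. -/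
def StabLabel (S : NonUnitalSubring (Module.End k V)) (T : Submodule k V) : Prop :=
  T ≠ ⊥ ∧ T ≠ ⊤ ∧ ∀ f ∈ S, ∀ x ∈ T, f x ∈ T

/-- `y` is a non-scalar endomorphism generating a field and commuting with all members of `S`. -/
def CommLabel (S : NonUnitalSubring (Module.End k V)) (y : Module.End k V) : Prop :=
  (∀ f ∈ S, f * y = y * f) ∧ (∀ c, y ≠ algebraMap k _ c) ∧ Irreducible (minpoly k y)

lemma commute_aeval {a y : Module.End k V} (h : Commute a y) (q : Polynomial k) :
    Commute a (Polynomial.aeval y q) := by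
  induction q using Polynomial.induction_on' with
  | add p q hp hq => rw [map_add]; exact hp.add_right hq
  | monomial m c =>
    rw [Polynomial.aeval_monomial]
    exact (show Commute a (algebraMap k _ c) from (Algebra.commutes c a).symm).mul_right
      (h.pow_right m)

/-- The endomorphism ring of a finite-dimensional space has no proper nonzero ideal. -/
lemma one_mem_of_ideal [Module.Finite k V] (W : AddSubgroup (Module.End k V))
    (hl : ∀ a, ∀ w ∈ W, a * w ∈ W) (hr : ∀ a, ∀ w ∈ W, w * a ∈ W) (e : Module.End k V)
    (he : e ∈ W) (he0 : e ≠ 0) : 1 ∈ W := by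
  obtain ⟨v0, hv0⟩ : ∃ v, e v ≠ 0 := by
    by_contra! h
    exact he0 (LinearMap.ext h)
  obtain ⟨ψ, hψ⟩ := Module.Projective.exists_dual_eq_one k hv0
  let b := Module.finBasis k V
  have h1 : (1 : Module.End k V) =
      ∑ i, (ψ.smulRight (b i)) * (e * ((b.coord i).smulRight v0)) := by
    refine b.ext fun j => ?_
    rw [LinearMap.sum_apply, Finset.sum_eq_single j]
    · simp [hψ]
    · intro i _ hij
      simp [hij.symm]
    · simp
  rw [h1]
  exact sum_mem fun i _ => hl _ _ (hr _ _ he)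

/-- A proper subring containing all scalar multiples of some nonzero endomorphism either
stabilises a subspace or commutes with a proper field extension of `k`: this combines Schur's
lemma with the density theorem. -/
lemma exists_label [Module.Finite k V] (S : NonUnitalSubring (Module.End k V)) (hS : S ≠ ⊤)
    (e : Module.End k V) (he : e ≠ 0) (hc : ∀ c : k, c • e ∈ S) :
    (∃ T, StabLabel S T) ∨ ∃ y, CommLabel S y := by
  by_contra! hcon
  obtain ⟨hT, hy⟩ := hcon
  have hnt : Nontrivial V := by
    obtain ⟨v, hv⟩ : ∃ v, e v ≠ 0 := by
      by_contra! h
      exact he (LinearMap.ext h)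
    exact ⟨_, _, hv⟩
  have hinj : ∀ y : Module.End k V, (∀ f ∈ S, f * y = y * f) → y ≠ 0 → LinearMap.ker y = ⊥ := by
    intro y hy hy0
    by_contra hk
    refine hT (LinearMap.ker y) ⟨hk, fun h => hy0 (LinearMap.ker_eq_top.1 h), fun f hf x hx => ?_⟩
    have := congrArg (fun g : Module.End k V => g x) (hy f hf)
    simp only [Module.End.mul_apply] at this
    rw [LinearMap.mem_ker] at hx ⊢
    rw [← this, hx, map_zero]
  have hscal : ∀ y : Module.End k V, (∀ f ∈ S, f * y = y * f) → ∃ c, y = algebraMap k _ c := by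
    intro y hys
    by_contra! hns
    refine hy y ⟨hys, hns, ?_⟩
    have hitg : IsIntegral k y := Algebra.IsIntegral.isIntegral y
    refine (Polynomial.irreducible_of_monic (minpoly.monic hitg) (minpoly.ne_one k y)).2
      fun f g hf hg hfg => ?_
    have hcomm : ∀ q : Polynomial k, ∀ s ∈ S,
        s * Polynomial.aeval y q = Polynomial.aeval y q * s := by
      intro q s hs
      have : Commute s (Polynomial.aeval y q) := by
        have h0 : Commute s y := hys s hs
        exact commute_aeval h0 q
      exact this
    have heval := congrArg (Polynomial.aeval y) hfg
    rw [minpoly.aeval, map_mul] at heval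
    by_cases hf0 : Polynomial.aeval y f = 0
    · right
      have hd : minpoly k y ∣ f := minpoly.dvd k y hf0
      rw [← hfg] at hd
      have : f * g ∣ f * 1 := by simpa using hd
      exact hg.eq_one_of_isUnit (isUnit_of_dvd_one ((mul_dvd_mul_iff_left hf.ne_zero).1 this))
    · left
      have hk := hinj _ (hcomm f) hf0
      have hg0 : Polynomial.aeval y g = 0 := by
        refine LinearMap.ext fun x => ?_
        have := congrArg (fun q : Module.End k V => q x) heval
        simp only [Module.End.mul_apply, LinearMap.zero_apply] at this
        have hm : Polynomial.aeval y g x ∈ LinearMap.ker (Polynomial.aeval y f) := this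
        rwa [hk] at hm
      have hd : minpoly k y ∣ g := minpoly.dvd k y hg0
      rw [← hfg] at hd
      have : f * g ∣ 1 * g := by simpa using hd
      exact hf.eq_one_of_isUnit (isUnit_of_dvd_one ((mul_dvd_mul_iff_right hg.ne_zero).1 this))
  let A : Subalgebra k (Module.End k V) := Algebra.adjoin k (S : Set (Module.End k V))
  have hsimple : IsSimpleModule A V := by
    refine (isSimpleModule_iff A V).2 ?_
    refine { exists_pair_ne := ⟨⊥, ⊤, bot_ne_top⟩, eq_bot_or_eq_top := fun N => ?_ }
    by_contra! h
    refine hT (N.restrictScalars k) ⟨?_, ?_, fun f hf x hx => ?_⟩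
    · simpa using h.1
    · simpa using h.2
    · exact N.smul_mem (⟨f, Algebra.subset_adjoin hf⟩ : A) hx
  have hA : A = ⊤ := by
    rw [eq_top_iff]
    intro f _
    let f' : Module.End (Module.End A V) V :=
      { toFun := f
        map_add' := f.map_add
        map_smul' := by
          intro φ v
          obtain ⟨c, hc⟩ := hscal (φ.restrictScalars k) (by
            intro s hs
            refine LinearMap.ext fun x => ?_
            exact (φ.map_smul (⟨s, Algebra.subset_adjoin hs⟩ : A) x).symm)
          have h1 : ∀ x, φ x = c • x := fun x => by
            have := congrArg (fun g : Module.End k V => g x) hc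
            simpa using this
          simp only [RingHom.id_apply, Module.End.smul_def, h1, map_smul] }
    have : Module.Finite k V := inferInstance
    let b := Module.finBasis k V
    obtain ⟨r, hr⟩ := jacobson_density (R := A) f' (Finset.univ.image b)
    have : f = r := b.ext fun i => hr (b i) (Finset.mem_image_of_mem _ (Finset.mem_univ i))
    rw [this]; exact r.2
  let W : AddSubgroup (Module.End k V) :=
    { carrier := {f | ∀ c : k, c • f ∈ S}
      zero_mem' := fun c => by rw [smul_zero]; exact zero_mem S
      add_mem' := fun {a b} ha hb c => by rw [smul_add]; exact add_mem (ha c) (hb c)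
      neg_mem' := fun {a} ha c => by rw [smul_neg]; exact neg_mem (ha c) }
  have hWk : ∀ (c : k), ∀ w ∈ W, c • w ∈ W := fun c w hw c' => by
    rw [smul_smul]; exact hw _
  have hl : ∀ a, ∀ w ∈ W, a * w ∈ W := by
    intro a
    have ha : a ∈ A := hA ▸ Algebra.mem_top
    induction ha using Algebra.adjoin_induction with
    | mem x hx => exact fun w hw c => by rw [← mul_smul_comm]; exact mul_mem hx (hw c)
    | algebraMap r => exact fun w hw => by rw [← Algebra.smul_def]; exact hWk r w hw
    | add x y _ _ hx hy => exact fun w hw => by rw [add_mul]; exact add_mem (hx w hw) (hy w hw)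
    | mul x y _ _ hx hy => exact fun w hw => by rw [mul_assoc]; exact hx _ (hy w hw)
  have hr : ∀ a, ∀ w ∈ W, w * a ∈ W := by
    intro a
    have ha : a ∈ A := hA ▸ Algebra.mem_top
    induction ha using Algebra.adjoin_induction with
    | mem x hx => exact fun w hw c => by rw [← smul_mul_assoc]; exact mul_mem (hw c) hx
    | algebraMap r => exact fun w hw => by
                        rw [← Algebra.commutes, ← Algebra.smul_def]; exact hWk r w hw
    | add x y _ _ hx hy => exact fun w hw => by rw [mul_add]; exact add_mem (hx w hw) (hy w hw)
    | mul x y _ _ hx hy => exact fun w hw => by rw [← mul_assoc]; exact hy _ (hx w hw)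
  have h1 := one_mem_of_ideal W hl hr e hc he
  apply hS
  rw [NonUnitalSubring.eq_top_iff']
  intro f
  have := hl f 1 h1 1
  rwa [one_smul, mul_one] at this

lemma CommLabel.two_le [Module.Finite k V] {S : NonUnitalSubring (Module.End k V)}
    {y : Module.End k V} (h : CommLabel S y) : 2 ≤ (minpoly k y).natDegree := by
  have hitg : IsIntegral k y := Algebra.IsIntegral.isIntegral y
  have h0 := h.2.2.natDegree_pos
  by_contra hlt
  have h1 : (minpoly k y).natDegree = 1 := by omega
  have : Nontrivial (Module.End k V) := by
    by_contra hnt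
    rw [not_nontrivial_iff_subsingleton] at hnt
    exact h.2.1 0 (Subsingleton.elim _ _)
  rw [minpoly.natDegree_eq_one_iff] at h1
  obtain ⟨c, hc⟩ := h1
  exact h.2.1 c hc.symm

/-- The centraliser of an endomorphism `y` generating a field of degree `m` is small, since `V` is a
vector space over this field. -/
lemma card_centralizer_le [Finite k] [Finite V] (y : Module.End k V)
    (hirr : Irreducible (minpoly k y)) :
    (minpoly k y).natDegree ∣ Module.finrank k V ∧
    Nat.card {c : Module.End k V // c * y = y * c} ≤
      Nat.card k ^ (Module.finrank k V * (Module.finrank k V / (minpoly k y).natDegree)) := by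
  have : Module.Finite k V := Module.Finite.of_finite
  set h := minpoly k y with hh
  have : Fact (Irreducible h) := ⟨hirr⟩
  let φ : AdjoinRoot h →ₐ[k] Module.End k V :=
    Ideal.Quotient.liftₐ (Ideal.span {h}) (Polynomial.aeval y) (by
      intro p hp
      obtain ⟨r, rfl⟩ := Ideal.mem_span_singleton.1 hp
      rw [map_mul, hh, minpoly.aeval, zero_mul])
  have hφ : ∀ p, φ (AdjoinRoot.mk h p) = Polynomial.aeval y p := fun p => rfl
  let _ : Module (AdjoinRoot h) V := Module.compHom V φ.toRingHom
  have hsmul : ∀ (a : AdjoinRoot h) (v : V), a • v = φ a v := fun a v => rfl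
  have : IsScalarTower k (AdjoinRoot h) V := ⟨fun c a v => by
    rw [hsmul, hsmul, map_smul]; rfl⟩
  have : Module.Finite (AdjoinRoot h) V := Module.Finite.of_finite
  have hK : Module.finrank k (AdjoinRoot h) = h.natDegree := by
    rw [(AdjoinRoot.powerBasis hirr.ne_zero).finrank, AdjoinRoot.powerBasis_dim]
  have : Module.Finite k (AdjoinRoot h) := (AdjoinRoot.powerBasis hirr.ne_zero).finite
  have hmul := Module.finrank_mul_finrank k (AdjoinRoot h) V
  rw [hK] at hmul
  refine ⟨⟨_, hmul.symm⟩, ?_⟩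
  have hr : Module.finrank k V / h.natDegree = Module.finrank (AdjoinRoot h) V := by
    rw [← hmul, Nat.mul_div_cancel_left _ hirr.natDegree_pos]
  rw [hr, pow_mul, ← Module.natCard_eq_pow_finrank]
  let b := Module.finBasis (AdjoinRoot h) V
  let Φ : {c : Module.End k V // c * y = y * c} →
      (Fin (Module.finrank (AdjoinRoot h) V) → V) := fun c i => c.1 (b i)
  have hcφ : ∀ c : {c : Module.End k V // c * y = y * c}, ∀ a : AdjoinRoot h, ∀ v,
      c.1 (a • v) = a • c.1 v := by
    intro c a v
    induction a using AdjoinRoot.induction_on with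
    | ih p =>
      rw [hsmul, hsmul, hφ]
      have h2 : Commute c.1 (Polynomial.aeval y p) :=
        commute_aeval (show Commute c.1 y from c.2) p
      exact congrArg (fun g : Module.End k V => g v) h2
  have hΦ : Function.Injective Φ := by
    intro c c' hcc
    refine Subtype.ext (LinearMap.ext fun v => ?_)
    rw [← b.sum_repr v, map_sum, map_sum]
    refine Finset.sum_congr rfl fun i _ => ?_
    rw [hcφ, hcφ]
    congr 1
    exact congrFun hcc i
  have := Nat.card_le_card_of_injective Φ hΦ
  rwa [Nat.card_fun, Nat.card_fin] at this

end label

/-! ### Conjugates of an algebra acting on a vector space -/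

section fiber

variable {k V B : Type*} [Field k] [AddCommGroup V] [Module k V] [CommRing B] [Algebra k B]

/-- The action of the algebra `B` on `V` obtained from the regular representation by transport
along the linear isomorphism `g`. -/
def cj (g : B ≃ₗ[k] V) : B →ₐ[k] Module.End k V :=
  AlgHom.ofLinearMap (g.conj.toLinearMap ∘ₗ (Algebra.lmul k B).toLinearMap)
    (by
      refine LinearMap.ext fun v => ?_
      simp [LinearEquiv.conj_apply]) (by
      intro x y
      refine LinearMap.ext fun v => ?_
      simp [LinearEquiv.conj_apply, mul_assoc])

lemma cj_apply (g : B ≃ₗ[k] V) (b : B) (v : V) : cj g b v = g (b * g.symm v) := by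
  simp [cj, LinearEquiv.conj_apply]

lemma cj_injective (g : B ≃ₗ[k] V) : Function.Injective (cj g) := by
  intro b c h
  have := congrArg (fun f : Module.End k V => f (g 1)) h
  simpa [cj_apply] using this

/-- A subspace stable under a subring containing the image of a generator of `B` corresponds to an
ideal of `B`. -/
lemma stab_mul {g : B ≃ₗ[k] V} {β : B} (hβ : Algebra.adjoin k {β} = ⊤)
    {S : NonUnitalSubring (Module.End k V)} {T : Submodule k V} (hT : StabLabel S T)
    (hS : cj g β ∈ S) (c x : B) (hx : g x ∈ T) : g (c * x) ∈ T := by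
  have hc : c ∈ Algebra.adjoin k {β} := hβ ▸ Algebra.mem_top
  induction hc using Algebra.adjoin_induction generalizing x with
  | mem y hy =>
    rw [Set.mem_singleton_iff] at hy
    subst hy
    have := hT.2.2 _ hS _ hx
    rwa [cj_apply, g.symm_apply_apply] at this
  | algebraMap r => rw [← Algebra.smul_def, map_smul]; exact T.smul_mem _ hx
  | add y z _ _ hy hz => rw [add_mul, map_add]; exact T.add_mem (hy x hx) (hz x hx)
  | mul y z _ _ hy hz => rw [mul_assoc]; exact hy _ (hz x hx)

/-- The endomorphism `y` commutes with a generator of the `B`-action only if it is itself given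
by the action of some `z : B`. -/
lemma comm_eq_cj {g : B ≃ₗ[k] V} {β : B} (hβ : Algebra.adjoin k {β} = ⊤) {y : Module.End k V}
    (hy : cj g β * y = y * cj g β) : y = cj g (g.symm (y (g 1))) := by
  have hall : ∀ c : B, cj g c * y = y * cj g c := by
    intro c
    have hc : c ∈ Algebra.adjoin k {β} := hβ ▸ Algebra.mem_top
    induction hc using Algebra.adjoin_induction with
    | mem z hz =>
      rw [Set.mem_singleton_iff] at hz
      rw [hz, hy]
    | algebraMap r => rw [AlgHom.commutes, Algebra.commutes]
    | add a b _ _ ha hb => rw [map_add, add_mul, mul_add, ha, hb]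
    | mul a b _ _ ha hb => rw [map_mul, mul_assoc, hb, ← mul_assoc, ha, mul_assoc]
  refine LinearMap.ext fun v => ?_
  have := congrArg (fun f : Module.End k V => f (g 1)) (hall (g.symm v))
  simp only [Module.End.mul_apply, cj_apply, g.symm_apply_apply, mul_one,
    g.apply_symm_apply] at this
  rw [cj_apply, ← this, mul_comm]

lemma finite_end (k V : Type*) [Field k] [AddCommGroup V] [Module k V] [Finite V] :
    Finite (Module.End k V) :=
  Finite.of_injective (fun f => (f : V → V)) DFunLike.coe_injective

lemma finite_equiv (k V B : Type*) [Field k] [AddCommGroup V] [Module k V] [AddCommGroup B]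
    [Module k B] [Finite V] [Finite B] : Finite (B ≃ₗ[k] V) :=
  Finite.of_injective (fun f => (f : B → V)) DFunLike.coe_injective

/-- An isomorphism `g` for which `y` commutes with the image of the generator `β` is determined, up
to the centraliser of `y`, by the element of `B` whose action is `y`. -/
lemma card_comm_le [Finite V] [Finite B] {β : B} (hβ : Algebra.adjoin k {β} = ⊤)
    (y : Module.End k V) :
    Nat.card {g : B ≃ₗ[k] V // cj g β * y = y * cj g β} ≤
      Nat.card {z : B // Polynomial.aeval z (minpoly k y) = 0} *
        Nat.card {c : Module.End k V // c * y = y * c} := by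
  have := finite_end k V
  rcases isEmpty_or_nonempty {g : B ≃ₗ[k] V // cj g β * y = y * cj g β} with he | hne
  · rw [Nat.card_of_isEmpty]; exact Nat.zero_le _
  have hz : ∀ g : {g : B ≃ₗ[k] V // cj g β * y = y * cj g β},
      y = cj g.1 (g.1.symm (y (g.1 1))) := fun g => comm_eq_cj hβ g.2
  let f : {g : B ≃ₗ[k] V // cj g β * y = y * cj g β} →
      {z : B // Polynomial.aeval z (minpoly k y) = 0} := fun g =>
    ⟨g.1.symm (y (g.1 1)), cj_injective g.1 (by
      rw [← Polynomial.aeval_algHom_apply, ← hz g, minpoly.aeval, map_zero])⟩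
  let s := fun g => Function.invFun f (f g)
  have hs : ∀ g, f (s g) = f g := fun g => Function.invFun_eq ⟨g, rfl⟩
  have hc : ∀ g g' : {g : B ≃ₗ[k] V // cj g β * y = y * cj g β}, f g = f g' →
      (((g.1.symm.trans g'.1 : V ≃ₗ[k] V) : Module.End k V)) * y =
        y * ((g.1.symm.trans g'.1 : V ≃ₗ[k] V) : Module.End k V) := by
    intro g g' h
    have h' : g.1.symm (y (g.1 1)) = g'.1.symm (y (g'.1 1)) := congrArg Subtype.val h
    refine LinearMap.ext fun v => ?_
    have e1 : y v = g.1 (g.1.symm (y (g.1 1)) * g.1.symm v) := by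
      conv_lhs => rw [hz g, cj_apply]
    have e2 : y (g'.1 (g.1.symm v)) = g'.1 (g'.1.symm (y (g'.1 1)) * g.1.symm v) := by
      rw [← g'.1.symm_apply_apply (g.1.symm v), ← cj_apply, ← hz g', g'.1.symm_apply_apply]
    simp only [Module.End.mul_apply, LinearEquiv.coe_coe, LinearEquiv.trans_apply]
    rw [e2, e1, h', g.1.symm_apply_apply]
  rw [← Nat.card_prod]
  refine Nat.card_le_card_of_injective (fun g => (f g, (⟨_, hc (s g) g (hs g)⟩ :
    {c : Module.End k V // c * y = y * c}))) ?_
  intro g g' h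
  simp only [Prod.mk.injEq, Subtype.mk.injEq] at h
  obtain ⟨h1, h2⟩ := h
  have h3 : s g = s g' := by simp only [s, h1]
  refine Subtype.ext (LinearEquiv.ext fun b => ?_)
  have := congrArg (fun q : Module.End k V => q ((s g).1 b)) h2
  rw [h3] at this
  simpa using this

/-- Dimension of a distinguished stable subspace of `S`, and `0` if there is none. -/
def sdim (S : NonUnitalSubring (Module.End k V)) : ℕ :=
  if h : ∃ T, StabLabel S T then Module.finrank k h.choose else 0

lemma sdim_spec [Finite V] {S : NonUnitalSubring (Module.End k V)} :
    (sdim S ≠ 0 → ∃ T, StabLabel S T ∧ Module.finrank k T = sdim S) ∧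
    (sdim S = 0 → ∀ T, ¬ StabLabel S T) := by
  have : Module.Finite k V := Module.Finite.of_finite
  constructor
  · intro h
    unfold sdim at h
    split at h
    next hT => exact ⟨hT.choose, hT.choose_spec, by rw [sdim, dif_pos hT]⟩
    next => exact absurd rfl h
  · intro h T hT
    have hT' : ∃ T, StabLabel S T := ⟨T, hT⟩
    rw [sdim, dif_pos hT'] at h
    exact hT'.choose_spec.1 (Submodule.finrank_eq_zero.1 h)

/-- A proper subring of the endomorphism ring without proper nonzero stable subspace contains few
conjugates of `β`, since it centralises an endomorphism generating a proper field extension. -/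
lemma fiber_comm [Finite k] [Finite V] [Finite B] {β : B} (hβ : Algebra.adjoin k {β} = ⊤)
    (hβ2 : ∀ W : NonUnitalSubring B, β ∈ W → ∃ e : B, e ≠ 0 ∧ ∀ c : k, c • e ∈ W)
    {S : NonUnitalSubring (Module.End k V)} (hS : S ≠ ⊤) (h0 : sdim S = 0)
    (hne : Nat.card {g : B ≃ₗ[k] V // cj g β ∈ S} ≠ 0) :
    ∃ h : Polynomial k, Irreducible h ∧ h.Monic ∧ 2 ≤ h.natDegree ∧
      h.natDegree ∣ Module.finrank k V ∧ (∃ z : B, Polynomial.aeval z h = 0) ∧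
      Nat.card {g : B ≃ₗ[k] V // cj g β ∈ S} ≤ Nat.card {z : B // Polynomial.aeval z h = 0} *
        Nat.card k ^ (Module.finrank k V * (Module.finrank k V / h.natDegree)) := by
  have : Module.Finite k V := Module.Finite.of_finite
  have := finite_equiv k V B
  have hex : Nonempty {g : B ≃ₗ[k] V // cj g β ∈ S} := by
    by_contra h
    rw [not_nonempty_iff] at h
    exact hne Nat.card_of_isEmpty
  obtain ⟨g, hg⟩ := hex
  obtain ⟨e, he, hc⟩ := hβ2 (S.comap (cj g)) hg
  obtain ⟨T, hT⟩ | ⟨y, hy⟩ := exists_label S hS (cj g e)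
      (fun h => he (cj_injective g (by rw [h, map_zero])))
      (fun c => by
        have := hc c
        rw [NonUnitalSubring.mem_comap] at this
        rwa [← map_smul])
  · exact absurd hT (sdim_spec.2 h0 T)
  · have hC := card_centralizer_le y hy.2.2
    refine ⟨minpoly k y, hy.2.2, minpoly.monic (Algebra.IsIntegral.isIntegral y), hy.two_le,
      hC.1, ⟨g.symm (y (g 1)), cj_injective g ?_⟩, ?_⟩
    · rw [← Polynomial.aeval_algHom_apply, ← comm_eq_cj hβ (hy.1 _ hg), minpoly.aeval, map_zero]
    · refine le_trans ?_ (Nat.mul_le_mul_left _ hC.2)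
      refine le_trans ?_ (card_comm_le hβ y)
      exact Nat.card_le_card_of_injective
        (fun g : {g : B ≃ₗ[k] V // cj g β ∈ S} => ⟨g.1, hy.1 _ g.2⟩)
        fun g g' h => Subtype.ext (by simpa using h)

/-- The union bound for a family of subrings covering all conjugates of `β`. -/
lemma card_equiv_le_sum [Finite V] [Finite B] {ι : Type*} (P : Finset ι)
    (r : ι → NonUnitalSubring (Module.End k V)) (β : B)
    (hcov : ∀ g : B ≃ₗ[k] V, ∃ i ∈ P, cj g β ∈ r i) :
    Nat.card (B ≃ₗ[k] V) ≤ ∑ i ∈ P, Nat.card {g : B ≃ₗ[k] V // cj g β ∈ r i} := by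
  have := finite_equiv k V B
  have := Fintype.ofFinite (B ≃ₗ[k] V)
  have h1 : (Finset.univ : Finset (B ≃ₗ[k] V)) ⊆
      P.biUnion fun i => Finset.univ.filter fun g => cj g β ∈ r i := by
    intro g _
    obtain ⟨i, hi, hg⟩ := hcov g
    simp only [Finset.mem_biUnion, Finset.mem_filter, Finset.mem_univ, true_and]
    exact ⟨i, hi, hg⟩
  have h2 := (Finset.card_le_card h1).trans Finset.card_biUnion_le
  rw [Finset.card_univ, ← Nat.card_eq_fintype_card] at h2
  refine h2.trans_eq (Finset.sum_congr rfl fun i _ => ?_)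
  rw [Nat.card_eq_fintype_card, Fintype.card_subtype]

/-- Among the centralisers of field extensions, those of degree `n.minFac` give the largest bound. -/
lemma mul_pow_le_minFac {Q n m : ℕ} (hQ : 2 ≤ Q) (hn : 2 ≤ n) (hm : 2 ≤ m) (hmn : m ∣ n) :
    m * Q ^ (n * (n / m)) ≤ n.minFac * Q ^ (n * (n / n.minFac)) := by
  have ha : n.minFac ≤ m := Nat.minFac_le_of_dvd hm hmn
  obtain h | h := ha.eq_or_lt
  · rw [← h]
  have hlt : n / m < n / n.minFac := by
    obtain ⟨c, hc⟩ := hmn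
    obtain ⟨c', hc'⟩ := Nat.minFac_dvd n
    have hp := Nat.minFac_pos n
    have e1 : n / m = c := Nat.div_eq_of_eq_mul_right (by omega) hc
    have e2 : n / n.minFac = c' := Nat.div_eq_of_eq_mul_right hp hc'
    rw [e1, e2]
    by_contra! hle
    have : n.minFac * c' < m * c := by
      have hc0 : 0 < c := by
        rcases Nat.eq_zero_or_pos c with rfl | h0
        · omega
        · exact h0
      calc n.minFac * c' ≤ n.minFac * c := Nat.mul_le_mul_left _ hle
        _ < m * c := Nat.mul_lt_mul_of_pos_right h hc0
    omega
  have h1 : n * (n / m) + n ≤ n * (n / n.minFac) := by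
    calc n * (n / m) + n = n * (n / m + 1) := by ring
      _ ≤ _ := Nat.mul_le_mul_left _ hlt
  have h2 : m ≤ Q ^ n := by
    have := Nat.le_of_dvd (by omega) hmn
    have h3 : n < 2 ^ n := Nat.lt_two_pow_self
    have h4 : 2 ^ n ≤ Q ^ n := Nat.pow_le_pow_left hQ n
    omega
  calc m * Q ^ (n * (n / m)) ≤ Q ^ n * Q ^ (n * (n / m)) := Nat.mul_le_mul_right _ h2
    _ = Q ^ (n * (n / m) + n) := by rw [← pow_add, add_comm]
    _ ≤ Q ^ (n * (n / n.minFac)) := Nat.pow_le_pow_right (by omega) h1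
    _ ≤ _ := Nat.le_mul_of_pos_left _ (Nat.minFac_pos n)

end fiber

/-! ### Counting conjugates of semisimple elements -/

section counting

variable {k V : Type*} [Field k] [AddCommGroup V] [Module k V]

lemma card_aeval_le {L : Type*} [Field L] [Algebra k L] {h : Polynomial k} (h0 : h.Monic) :
    Nat.card {z : L // Polynomial.aeval z h = 0} ≤ h.natDegree := by
  have : {z : L | Polynomial.aeval z h = 0} = h.rootSet L := by
    ext z
    rw [Polynomial.mem_rootSet]
    exact ⟨fun hz => ⟨h0.ne_zero, hz⟩, fun hz => hz.2⟩
  calc Nat.card {z : L // Polynomial.aeval z h = 0}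
      = (h.rootSet L).ncard := by rw [← this]; rfl
    _ ≤ h.natDegree := Polynomial.ncard_rootSet_le h L

/-- Covering all conjugates of a Singer cycle by proper subrings. A Singer cycle stabilises no proper
nonzero subspace, so each subring of the family centralises a field extension of degree at least
`n.minFac`. -/
lemma singer_count [Finite k] [Finite V] {L : Type*} [Field L] [Finite L] [Algebra k L]
    (hL : Module.finrank k L = Module.finrank k V) (hn : 2 ≤ Module.finrank k V) {β : L}
    (hβ : Algebra.adjoin k {β} = ⊤)
    (hβ2 : ∀ W : NonUnitalSubring L, β ∈ W → ∃ e : L, e ≠ 0 ∧ ∀ c : k, c • e ∈ W)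
    {ι : Type*} (P : Finset ι) (r : ι → NonUnitalSubring (Module.End k V))
    (hr : ∀ i ∈ P, r i ≠ ⊤) (hcov : ∀ g : L ≃ₗ[k] V, ∃ i ∈ P, cj g β ∈ r i) :
    GLcard (Module.finrank k V) (Nat.card k) ≤ P.card * ((Module.finrank k V).minFac *
      Nat.card k ^ (Module.finrank k V * (Module.finrank k V / (Module.finrank k V).minFac))) := by
  rw [← card_linearEquiv hL]
  refine (card_equiv_le_sum P r β hcov).trans ?_
  rw [← smul_eq_mul]
  refine Finset.sum_le_card_nsmul _ _ _ fun i hi => ?_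
  by_cases hne : Nat.card {g : L ≃ₗ[k] V // cj g β ∈ r i} = 0
  · rw [hne]; exact Nat.zero_le _
  by_cases h0 : sdim (r i) = 0
  · obtain ⟨h, -, hm, h2, hd, -, hle⟩ := fiber_comm hβ hβ2 (hr i hi) h0 hne
    refine hle.trans ((Nat.mul_le_mul_right _ (card_aeval_le hm)).trans ?_)
    exact mul_pow_le_minFac Finite.one_lt_card hn h2 hd
  · exfalso
    obtain ⟨T, hT, -⟩ := sdim_spec.1 h0
    have := finite_equiv k V L
    obtain ⟨g, hg⟩ := (Nat.card_ne_zero.1 hne).1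
    obtain ⟨t, ht, ht0⟩ := T.ne_bot_iff.1 hT.1
    refine hT.2.1 (eq_top_iff.2 fun v _ => ?_)
    have h1 : g.symm t ≠ 0 := fun h => ht0 (g.symm.map_eq_zero_iff.1 h)
    have := stab_mul hβ hT hg (g.symm v * (g.symm t)⁻¹) (g.symm t) (by simpa using ht)
    rwa [inv_mul_cancel_right₀ h1, g.apply_symm_apply] at this

lemma natDegree_dvd_of_aeval {K : Type*} [Field K] [Algebra k K] [Module.Finite k K]
    {h : Polynomial k} (hi : Irreducible h) (hm : h.Monic) {z : K}
    (hz : Polynomial.aeval z h = 0) : h.natDegree ∣ Module.finrank k K := by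
  rw [minpoly.eq_of_irreducible_of_monic hi hz hm]
  exact minpoly.degree_dvd (Algebra.IsIntegral.isIntegral z)

/-- An ideal of a product of two fields is one of the four obvious ones. -/
lemma ideal_prod {K L : Type*} [Field K] [Field L] [Algebra k K] [Algebra k L]
    (X : Submodule k (K × L)) (hX : ∀ c, ∀ x ∈ X, c * x ∈ X) :
    X = ⊥ ∨ X = ⊤ ∨ X = LinearMap.ker (LinearMap.snd k K L) ∨
      X = LinearMap.ker (LinearMap.fst k K L) := by
  by_cases h1 : ∃ x ∈ X, x.1 ≠ 0
  · obtain ⟨x, hx, hx1⟩ := h1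
    have ha : ∀ a : K, ((a, 0) : K × L) ∈ X := fun a => by
      have := hX (a * x.1⁻¹, 0) x hx
      simpa [Prod.mul_def, inv_mul_cancel_right₀ hx1] using this
    by_cases h2 : ∃ x ∈ X, x.2 ≠ 0
    · obtain ⟨y, hy, hy1⟩ := h2
      right; left
      refine eq_top_iff.2 fun z _ => ?_
      have := X.add_mem (ha z.1) (hX (0, z.2 * y.2⁻¹) y hy)
      simpa [Prod.mul_def, inv_mul_cancel_right₀ hy1] using this
    · push Not at h2
      right; right; left
      ext z
      rw [LinearMap.mem_ker, LinearMap.snd_apply]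
      refine ⟨h2 z, fun hz => ?_⟩
      have := ha z.1
      rwa [← hz] at this
  · push Not at h1
    by_cases h2 : ∃ x ∈ X, x.2 ≠ 0
    · obtain ⟨y, hy, hy1⟩ := h2
      right; right; right
      ext z
      rw [LinearMap.mem_ker, LinearMap.fst_apply]
      refine ⟨h1 z, fun hz => ?_⟩
      have := hX (0, z.2 * y.2⁻¹) y hy
      rw [Prod.mul_def] at this
      simp only [zero_mul, inv_mul_cancel_right₀ hy1] at this
      rwa [← hz] at this
    · push Not at h2
      left
      refine (Submodule.eq_bot_iff _).2 fun z hz => Prod.ext (h1 z hz) (h2 z hz)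

/-- Covering all conjugates of an element acting as a regular generator of `K × L`, where
`[K : k] = e` and `[L : k] = n - e` differ, by proper subrings. The only proper nonzero subspaces
stable under such an element have dimensions `e` and `n - e`, one of each, so a stabiliser contains
a fraction of `1 / gaussBinom n e` of the conjugates. Subrings without stable subspace centralise a
field extension of a degree dividing both `n` and `e`; there are none when `n` and `e` are coprime,
and their contribution is small otherwise. -/
lemma test_count [Finite k] [Finite V] {K L : Type*} [Field K] [Field L] [Finite K] [Finite L]
    [Algebra k K] [Algebra k L] {n e : ℕ} (hV : Module.finrank k V = n) (he1 : 1 ≤ e) (hen : e < n)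
    (hK : Module.finrank k K = e) (hL : Module.finrank k L = n - e) (hne : n ≠ 2 * e) {β : K × L}
    (hβ : Algebra.adjoin k {β} = ⊤)
    (hβ2 : ∀ W : NonUnitalSubring (K × L), β ∈ W → ∃ e, e ≠ 0 ∧ ∀ c : k, c • e ∈ W)
    {ι : Type*} (P : Finset ι) (r : ι → NonUnitalSubring (Module.End k V))
    (hr : ∀ i ∈ P, r i ≠ ⊤) (hcov : ∀ g : (K × L) ≃ₗ[k] V, ∃ i ∈ P, cj g β ∈ r i) :
    (n.Coprime e → gaussBinom (Nat.card k) n e ≤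
      (P.filter fun i => sdim (r i) = e ∨ sdim (r i) = n - e).card) ∧
    (GLcard n (Nat.card k) * gaussBinom (Nat.card k) n e ≤
      (P.filter fun i => sdim (r i) = e ∨ sdim (r i) = n - e).card * GLcard n (Nat.card k) +
      (P.filter fun i => sdim (r i) = 0).card *
        (Nat.card k ^ n * Nat.card k ^ (n * (n / 2)) * gaussBinom (Nat.card k) n e)) := by
  have : Module.Finite k V := Module.Finite.of_finite
  have : Module.Finite k K := Module.Finite.of_finite
  have : Module.Finite k L := Module.Finite.of_finite
  have := finite_equiv k V (K × L)
  have hQ : 1 < Nat.card k := Finite.one_lt_card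
  set Q := Nat.card k
  have hB : Module.finrank k (K × L) = Module.finrank k V := by
    rw [Module.finrank_prod, hK, hL, hV]; omega
  have hγ : Nat.card ((K × L) ≃ₗ[k] V) = GLcard n Q := by rw [card_linearEquiv hB, hV]
  have hsum := card_equiv_le_sum P r β hcov
  rw [hγ] at hsum
  have hkf : Module.finrank k (LinearMap.ker (LinearMap.fst k K L)) = n - e := by
    have := LinearMap.finrank_range_add_finrank_ker (LinearMap.fst k K L)
    rw [LinearMap.range_eq_top.2 LinearMap.fst_surjective, finrank_top, hB, hK, hV] at this
    omega
  have hks : Module.finrank k (LinearMap.ker (LinearMap.snd k K L)) = e := by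
    have := LinearMap.finrank_range_add_finrank_ker (LinearMap.snd k K L)
    rw [LinearMap.range_eq_top.2 LinearMap.snd_surjective, finrank_top, hB, hL, hV] at this
    omega
  have hsymm : gaussBinom Q n (n - e) = gaussBinom Q n e := gaussBinom_symm hQ hen.le
  -- the contribution of a subring with a distinguished stable subspace
  have hT : ∀ i ∈ P, sdim (r i) ≠ 0 → Nat.card {g : (K × L) ≃ₗ[k] V // cj g β ∈ r i} ≠ 0 →
      (sdim (r i) = e ∨ sdim (r i) = n - e) ∧
      Nat.card {g : (K × L) ≃ₗ[k] V // cj g β ∈ r i} * gaussBinom Q n e ≤ GLcard n Q := by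
    intro i hi h0 hne0
    obtain ⟨T, hT, hdim⟩ := sdim_spec.1 h0
    have key : ∀ g : (K × L) ≃ₗ[k] V, cj g β ∈ r i →
        (LinearMap.ker (LinearMap.snd k K L)).map (g : (K × L) →ₗ[k] V) = T ∨
        (LinearMap.ker (LinearMap.fst k K L)).map (g : (K × L) →ₗ[k] V) = T := by
      intro g hg
      have hmap : (T.comap (g : (K × L) →ₗ[k] V)).map (g : (K × L) →ₗ[k] V) = T :=
        Submodule.map_comap_eq_of_surjective g.surjective T
      obtain h | h | h | h := ideal_prod (T.comap (g : (K × L) →ₗ[k] V))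
        fun c x hx => stab_mul hβ hT hg c x hx
      · rw [h, Submodule.map_bot] at hmap
        exact absurd hmap.symm hT.1
      · rw [h, Submodule.map_top, LinearMap.range_eq_top.2 g.surjective] at hmap
        exact absurd hmap.symm hT.2.1
      · left; rw [← h, hmap]
      · right; rw [← h, hmap]
    have dims : ∀ (X : Submodule k (K × L)) (g : (K × L) ≃ₗ[k] V),
        X.map (g : (K × L) →ₗ[k] V) = T → Module.finrank k X = sdim (r i) := by
      intro X g h
      rw [← hdim, ← h]
      exact (LinearEquiv.finrank_map_eq g X).symm
    have fin : ∀ (X : Submodule k (K × L)), Module.finrank k X = sdim (r i) →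
        (∀ g : (K × L) ≃ₗ[k] V, cj g β ∈ r i → X.map (g : (K × L) →ₗ[k] V) = T) →
        Nat.card {g : (K × L) ≃ₗ[k] V // cj g β ∈ r i} * gaussBinom Q n (sdim (r i)) ≤
          GLcard n Q := by
      intro X hX hall
      have h1 := card_linearEquiv_map hB X T (by rw [hX, hdim])
      rw [hdim, hV] at h1
      rw [← h1]
      refine Nat.mul_le_mul_right _ ?_
      exact Nat.card_le_card_of_injective
        (fun g : {g : (K × L) ≃ₗ[k] V // cj g β ∈ r i} => ⟨g.1, hall _ g.2⟩)
        fun g g' h => Subtype.ext (by simpa using h)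
    obtain ⟨g0, hg0⟩ := (Nat.card_ne_zero.1 hne0).1
    rcases key g0 hg0 with h | h
    · have hs := dims _ _ h
      refine ⟨Or.inl (hs.symm.trans hks), ?_⟩
      have := fin _ hs fun g hg => (key g hg).resolve_right fun h' => by
        have := dims _ _ h'
        omega
      rwa [← hs, hks] at this
    · have hs := dims _ _ h
      refine ⟨Or.inr (hs.symm.trans hkf), ?_⟩
      have := fin _ hs fun g hg => (key g hg).resolve_left fun h' => by
        have := dims _ _ h'
        omega
      rwa [← hs, hkf, hsymm] at this
  -- the contribution of a subring without stable subspaces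
  have hY : ∀ i ∈ P, sdim (r i) = 0 → Nat.card {g : (K × L) ≃ₗ[k] V // cj g β ∈ r i} ≠ 0 →
      ¬ n.Coprime e ∧
      Nat.card {g : (K × L) ≃ₗ[k] V // cj g β ∈ r i} ≤ Q ^ n * Q ^ (n * (n / 2)) := by
    intro i hi h0 hne0
    obtain ⟨h, hirr, hm, h2, hd, ⟨z, hz⟩, hle⟩ := fiber_comm hβ hβ2 (hr i hi) h0 hne0
    rw [hV] at hd hle
    constructor
    · intro hco
      have hz1 : Polynomial.aeval z.1 h = 0 := by
        have := congrArg (AlgHom.fst k K L) hz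
        rwa [← Polynomial.aeval_algHom_apply, map_zero] at this
      have h3 := natDegree_dvd_of_aeval hirr hm hz1
      rw [hK] at h3
      have := Nat.dvd_gcd hd h3
      rw [hco] at this
      have := Nat.le_of_dvd one_pos this
      omega
    · refine hle.trans (Nat.mul_le_mul ?_ (Nat.pow_le_pow_right (by omega)
        (Nat.mul_le_mul_left _ (Nat.div_le_div_left h2 (by norm_num)))))
      calc _ ≤ Nat.card (K × L) := Nat.card_le_card_of_injective _ Subtype.val_injective
        _ = Q ^ n := by rw [Module.natCard_eq_pow_finrank (K := k), hB, hV]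
  have hγ0 : 0 < GLcard n Q := GLcard_pos hQ n
  have hsum' : GLcard n Q * gaussBinom Q n e ≤
      ∑ i ∈ P, Nat.card {g : (K × L) ≃ₗ[k] V // cj g β ∈ r i} * gaussBinom Q n e := by
    rw [← Finset.sum_mul]
    exact Nat.mul_le_mul_right _ hsum
  constructor
  · intro hco
    have h1 : ∑ i ∈ P, Nat.card {g : (K × L) ≃ₗ[k] V // cj g β ∈ r i} * gaussBinom Q n e ≤
        ∑ i ∈ P, if sdim (r i) = e ∨ sdim (r i) = n - e then GLcard n Q else 0 := by
      refine Finset.sum_le_sum fun i hi => ?_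
      by_cases hne0 : Nat.card {g : (K × L) ≃ₗ[k] V // cj g β ∈ r i} = 0
      · rw [hne0, zero_mul]; exact Nat.zero_le _
      by_cases h0 : sdim (r i) = 0
      · exact absurd hco (hY i hi h0 hne0).1
      · rw [if_pos (hT i hi h0 hne0).1]
        exact (hT i hi h0 hne0).2
    rw [← Finset.sum_filter, Finset.sum_const, smul_eq_mul] at h1
    have h2 := hsum'.trans h1
    rw [mul_comm] at h2
    exact Nat.le_of_mul_le_mul_right h2 hγ0
  · have h1 : ∑ i ∈ P, Nat.card {g : (K × L) ≃ₗ[k] V // cj g β ∈ r i} * gaussBinom Q n e ≤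
        ∑ i ∈ P, ((if sdim (r i) = e ∨ sdim (r i) = n - e then GLcard n Q else 0) +
          if sdim (r i) = 0 then Q ^ n * Q ^ (n * (n / 2)) * gaussBinom Q n e else 0) := by
      refine Finset.sum_le_sum fun i hi => ?_
      by_cases hne0 : Nat.card {g : (K × L) ≃ₗ[k] V // cj g β ∈ r i} = 0
      · rw [hne0, zero_mul]; exact Nat.zero_le _
      by_cases h0 : sdim (r i) = 0
      · refine le_add_left ?_
        rw [if_pos h0]
        exact Nat.mul_le_mul_right _ (hY i hi h0 hne0).2
      · refine le_add_right ?_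
        rw [if_pos (hT i hi h0 hne0).1]
        exact (hT i hi h0 hne0).2
    rw [Finset.sum_add_distrib, ← Finset.sum_filter, ← Finset.sum_filter, Finset.sum_const,
      Finset.sum_const, smul_eq_mul, smul_eq_mul] at h1
    exact hsum'.trans h1

end counting

/-! ### Generators of finite fields and of products of two of them -/

lemma nu_pow_mem {R : Type*} [Ring R] {W : NonUnitalSubring R} {x : R} (hx : x ∈ W) (m : ℕ)
    (hm : m ≠ 0) : x ^ m ∈ W := by
  induction m with
  | zero => exact absurd rfl hm
  | succ m ih =>
    rw [pow_succ]
    by_cases h : m = 0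
    · subst h; simpa using hx
    · exact mul_mem (ih h) hx

/-- A generator of the multiplicative group of a finite field. -/
lemma exists_prim (K : Type*) [Field K] [Finite K] {N : ℕ} (hN : Nat.card K = N) :
    ∃ ζ : K, IsPrimitiveRoot ζ (N - 1) ∧ ∀ x : K, x ≠ 0 → ∃ i : ℕ, ζ ^ i = x := by
  obtain ⟨g, hg⟩ := IsCyclic.exists_generator (α := Kˣ)
  refine ⟨g, ?_, fun x hx => ?_⟩
  · rw [IsPrimitiveRoot.coe_units_iff, ← hN, ← Nat.card_units,
      ← orderOf_eq_card_of_forall_mem_zpowers hg]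
    exact IsPrimitiveRoot.orderOf g
  · obtain ⟨i, hi⟩ := (mem_powers_iff_mem_zpowers (x := g) (y := Units.mk0 x hx)).2 (hg _)
    refine ⟨i, ?_⟩
    have := congrArg Units.val hi
    simpa using this

lemma two_le_pow {p s : ℕ} (hp : p.Prime) (hs : 1 ≤ s) : 2 ≤ p ^ s :=
  hp.two_le.trans (Nat.le_self_pow (by omega) p)

lemma prim_pow_eq {K : Type*} [Field K] {p s : ℕ} (hp : p.Prime) (hs : 1 ≤ s) {b : K}
    (hb : IsPrimitiveRoot b (p ^ s - 1)) : b ^ p ^ s = b := by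
  have h2 := two_le_pow hp hs
  have : p ^ s = (p ^ s - 1) + 1 := by omega
  rw [this, pow_succ, hb.pow_eq_one, one_mul]

lemma prim_ne_zero {K : Type*} [Field K] {p s : ℕ} (hp : p.Prime) (hs : 1 ≤ s) {b : K}
    (hb : IsPrimitiveRoot b (p ^ s - 1)) : b ≠ 0 := by
  have h2 := two_le_pow hp hs
  exact hb.ne_zero (by omega)

lemma prim_pow_ne {K : Type*} [Field K] {p s t : ℕ} (hp : p.Prime) (hs : 1 ≤ s) (ht : 1 ≤ t)
    (hst : s < t) {b : K} (hb : IsPrimitiveRoot b (p ^ t - 1)) : b ^ p ^ s ≠ b := by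
  intro h
  have h2 := two_le_pow hp hs
  have h1 : b ^ (p ^ s - 1) = 1 := by
    have e : p ^ s = (p ^ s - 1) + 1 := by omega
    rw [e, pow_succ] at h
    exact mul_right_cancel₀ (prim_ne_zero hp ht hb) (h.trans (one_mul b).symm)
  have hd := hb.dvd_of_pow_eq_one _ h1
  have h3 : p ^ s < p ^ t := Nat.pow_lt_pow_right hp.one_lt hst
  have := Nat.le_of_dvd (by omega) hd
  omega

/-- Two elements `b` and `γ` generating fields of different orders generate the product of these
fields as a ring without unit. -/
lemma prod_gen {K L : Type*} [Field K] [Field L] {p s t : ℕ} (hp : p.Prime) [CharP K p] [CharP L p]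
    (hs : 1 ≤ s) (ht : 1 ≤ t) (hst : s ≠ t) {b : K} {γ : L}
    (hb : IsPrimitiveRoot b (p ^ s - 1)) (hγ : IsPrimitiveRoot γ (p ^ t - 1))
    (hgen : ∀ x : L, x ≠ 0 → ∃ i : ℕ, γ ^ i = x) {W : NonUnitalSubring (K × L)}
    (hW : (b, γ) ∈ W) : (b, 0) ∈ W ∧ ∀ x : L, (0, x) ∈ W := by
  have : Fact p.Prime := ⟨hp⟩
  have h2 := two_le_pow hp hs
  have h2' := two_le_pow hp ht
  have key : ∀ δ : L, δ ≠ 0 → (0, δ) ∈ W → ∀ x : L, (0, x) ∈ W := by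
    intro δ hδ hδW x
    by_cases hx : x = 0
    · rw [hx]; exact zero_mem W
    obtain ⟨i, hi⟩ := hgen (δ⁻¹ * x) (mul_ne_zero (inv_ne_zero hδ) hx)
    have h3 : (0, x) = (0, δ) * (b, γ) ^ (i + (p ^ t - 1)) := by
      refine Prod.ext (by simp) ?_
      simp only [Prod.snd_mul, Prod.pow_snd, pow_add, hγ.pow_eq_one, mul_one, hi]
      rw [mul_inv_cancel_left₀ hδ]
    rw [h3]
    exact mul_mem hδW (nu_pow_mem hW _ (by omega))
  rcases lt_or_gt_of_ne hst with h | h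
  · have h4 : (b, γ) ^ p ^ s - (b, γ) ∈ W := sub_mem (nu_pow_mem hW _ (by omega)) hW
    have h5 : (b, γ) ^ p ^ s - (b, γ) = (0, γ ^ p ^ s - γ) :=
      Prod.ext (by simp [prim_pow_eq hp hs hb]) (by simp)
    rw [h5] at h4
    have h6 := key _ (sub_ne_zero.2 (prim_pow_ne hp hs ht h hγ)) h4
    refine ⟨?_, h6⟩
    have := sub_mem hW (h6 γ)
    simpa using this
  · have h4 : (b, γ) ^ p ^ t - (b, γ) ∈ W := sub_mem (nu_pow_mem hW _ (by omega)) hW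
    have h5 : (b, γ) ^ p ^ t - (b, γ) = (b ^ p ^ t - b, 0) :=
      Prod.ext (by simp) (by simp [prim_pow_eq hp ht hγ])
    rw [h5] at h4
    have hδ : b ^ p ^ t - b ≠ 0 := sub_ne_zero.2 (prim_pow_ne hp ht hs h hb)
    have h6 : (b ^ p ^ t - b) ^ (p ^ s - 1) = 1 := by
      have e1 : (b ^ p ^ t - b) ^ p ^ s = b ^ p ^ t - b := by
        rw [sub_pow_char_pow, ← pow_mul, mul_comm, pow_mul, prim_pow_eq hp hs hb]
      have e2 : p ^ s = (p ^ s - 1) + 1 := by omega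
      rw [e2, pow_succ] at e1
      exact mul_right_cancel₀ hδ (e1.trans (one_mul _).symm)
    have h7 := mul_mem (nu_pow_mem h4 (p ^ s - 1) (by omega)) hW
    have h8 : ((b ^ p ^ t - b, 0) : K × L) ^ (p ^ s - 1) * (b, γ) = (b, 0) := by
      refine Prod.ext ?_ ?_
      · simp [h6]
      · simp only [Prod.snd_mul, Prod.pow_snd]
        rw [zero_pow (by omega), zero_mul]
    rw [h8] at h7
    refine ⟨h7, key γ (prim_ne_zero hp ht hγ) ?_⟩
    have := sub_mem hW h7
    simpa using this

/-! ### Saturated subrings surjecting onto both components -/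

section goursat

variable {n : ℕ} {F : Type} [Field F] {F1 F2 : Subfield F}

/-- Since `M_n(F1)` is simple and noncommutative for `n ≥ 2`, it shares no nonzero quotient with
the field `F2`, so a subring that contains the radical and surjects onto both components
is everything. -/
lemma goursat (hn : 2 ≤ n) {S : NonUnitalSubring (AGL n F1 F2)} (hS : Sat S)
    (h1 : ∀ A, ∃ s ∈ S, blk s = A) (h2 : ∀ b, ∃ s ∈ S, cor s = b) : S = ⊤ := by
  have : NeZero n := ⟨by omega⟩
  let I : TwoSidedIdeal (Matrix (Fin n) (Fin n) F1) := TwoSidedIdeal.mk'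
    {A | ∃ s ∈ S, blk s = A ∧ cor s = 0} ⟨0, zero_mem S, by simp, by simp⟩
    (by
      rintro _ _ ⟨s, hs, rfl, h⟩ ⟨t, ht, rfl, h'⟩
      exact ⟨s + t, add_mem hs ht, by simp, by simp [h, h']⟩)
    (by
      rintro _ ⟨s, hs, rfl, h⟩
      exact ⟨-s, neg_mem hs, by simp, by simp [h]⟩)
    (by
      rintro A _ ⟨s, hs, rfl, h⟩
      obtain ⟨t, ht, rfl⟩ := h1 A
      exact ⟨t * s, mul_mem ht hs, by simp, by simp [h]⟩)
    (by
      rintro _ A ⟨s, hs, rfl, h⟩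
      obtain ⟨t, ht, rfl⟩ := h1 A
      exact ⟨s * t, mul_mem hs ht, by simp, by simp [h]⟩)
  have hI : ∀ A, A ∈ I ↔ ∃ s ∈ S, blk s = A ∧ cor s = 0 := fun A => TwoSidedIdeal.mem_mk' _ _ _ _ _ _ _
  let i0 : Fin n := ⟨0, by omega⟩
  let i1 : Fin n := ⟨1, by omega⟩
  have hne : i0 ≠ i1 := by simp [i0, i1]
  obtain ⟨s, hs, hs'⟩ := h1 (Matrix.single i0 i1 1)
  obtain ⟨t, ht, ht'⟩ := h1 (Matrix.single i1 i1 1)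
  have hmem : Matrix.single i0 i1 (1 : F1) ∈ I := by
    refine (hI _).2 ⟨s * t - t * s, sub_mem (mul_mem hs ht) (mul_mem ht hs), ?_, ?_⟩
    · rw [map_sub, map_mul, map_mul, hs', ht', Matrix.single_mul_single_same,
        Matrix.single_mul_single_of_ne _ _ _ _ hne.symm]
      simp
    · rw [map_sub, map_mul, map_mul, mul_comm, sub_self]
  have hne0 : Matrix.single i0 i1 (1 : F1) ≠ 0 := fun h => by
    have := congrFun (congrFun h i0) i1
    simp at this
  have hone := IsSimpleRing.one_mem_of_ne_zero_mem I hne0 hmem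
  have hall : ∀ A, ∃ s ∈ S, blk s = A ∧ cor s = 0 := fun A => by
    rw [← hI]
    simpa using I.mul_mem_left A 1 hone
  rw [NonUnitalSubring.eq_top_iff']
  intro x
  obtain ⟨t, ht, htx⟩ := h2 (cor x)
  obtain ⟨s, hs, hsx, hs0⟩ := hall (blk x - blk t)
  exact hS.mem_iff (by rw [map_add, hsx]; simp) (by rw [map_add, hs0, htx, zero_add])
    (add_mem hs ht)

/-- The subring of endomorphisms of `F1^n` given by the top-left blocks of members of `S`. -/
def eblk (S : NonUnitalSubring (AGL n F1 F2)) :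
    NonUnitalSubring (Module.End F1 (Fin n → F1)) :=
  (S.map (blk : AGL n F1 F2 →+* _)).comap
    (LinearMap.toMatrixAlgEquiv' : Module.End F1 (Fin n → F1) ≃ₐ[F1] Matrix (Fin n) (Fin n) F1)

lemma mem_eblk {S : NonUnitalSubring (AGL n F1 F2)} {f : Module.End F1 (Fin n → F1)} :
    f ∈ eblk S ↔ ∃ s ∈ S, blk s = LinearMap.toMatrixAlgEquiv' f := Iff.rfl

/-- A proper subring containing the radical whose corners exhaust `F2` has a proper block. -/
lemma eblk_ne_top (hn : 2 ≤ n) {S : NonUnitalSubring (AGL n F1 F2)} (hS : Sat S) (hS' : S ≠ ⊤)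
    (h2 : ∀ b, ∃ s ∈ S, cor s = b) : eblk S ≠ ⊤ := by
  intro h
  refine hS' (goursat hn hS (fun A => ?_) h2)
  have : LinearMap.toMatrixAlgEquiv'.symm A ∈ eblk S := h ▸ NonUnitalSubring.mem_top _
  rw [mem_eblk] at this
  simpa using this

end goursat

/-! ### The case `n = 1` -/

/-- For a finite field with `q ≠ 2, 4` elements, `K × K` is generated by one element as a ring
without unit. -/
lemma exists_gen_same (K : Type*) [Field K] [Finite K] (h2 : Nat.card K ≠ 2)
    (h4 : Nat.card K ≠ 4) : ∃ z : K × K, ∀ W : NonUnitalSubring (K × K), z ∈ W → W = ⊤ := by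
  have h1 : 1 < Nat.card K := Finite.one_lt_card
  obtain ⟨α, hα, hgen⟩ := exists_prim K rfl
  have hα0 : α ≠ 0 := hα.ne_zero (by omega)
  by_cases h3 : Nat.card K = 3
  · have := Fintype.ofFinite K
    have hx : ∀ x : K, x = 0 ∨ x = 1 ∨ x = -1 := by
      intro x
      have := FiniteField.pow_card x
      rw [← Nat.card_eq_fintype_card, h3] at this
      have h : x * ((x - 1) * (x + 1)) = 0 := by linear_combination this
      rcases mul_eq_zero.1 h with h | h
      · exact Or.inl h
      rcases mul_eq_zero.1 h with h | h
      · exact Or.inr (Or.inl (by linear_combination h))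
      · exact Or.inr (Or.inr (by linear_combination h))
    have h30 : (3 : K) = 0 := by
      have := FiniteField.cast_card_eq_zero K
      rw [← Nat.card_eq_fintype_card, h3] at this
      exact_mod_cast this
    refine ⟨(1, -1), fun W hW => ?_⟩
    have e1 : ((1, 0) : K × K) ∈ W := by
      have := neg_mem (add_mem hW (mul_mem hW hW))
      convert! this using 1
      refine Prod.ext ?_ (by simp)
      simp only [Prod.fst_neg, Prod.fst_add, Prod.fst_mul]
      linear_combination h30
    have e2 : ((0, 1) : K × K) ∈ W := by
      have := sub_mem (mul_mem hW hW) e1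
      simpa using this
    have f1 : ∀ x : K, ((x, 0) : K × K) ∈ W := fun x => by
      rcases hx x with rfl | rfl | rfl
      · exact zero_mem W
      · exact e1
      · simpa using neg_mem e1
    have f2 : ∀ x : K, ((0, x) : K × K) ∈ W := fun x => by
      rcases hx x with rfl | rfl | rfl
      · exact zero_mem W
      · exact e2
      · simpa using neg_mem e2
    rw [NonUnitalSubring.eq_top_iff']
    intro z
    simpa using add_mem (f1 z.1) (f2 z.2)
  · refine ⟨(α, α⁻¹), fun W hW => ?_⟩
    have hpow : ∀ x : K, x ≠ 0 → ((x, x⁻¹) : K × K) ∈ W := by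
      intro x hx
      obtain ⟨i, rfl⟩ := hgen x hx
      have := nu_pow_mem hW (i + (Nat.card K - 1)) (by omega)
      convert! this using 1
      refine Prod.ext ?_ ?_ <;> simp [pow_add, hα.pow_eq_one]
    have hne1 : 1 + α ≠ 0 := by
      intro h
      have : α ^ 2 = 1 := by linear_combination (α - 1) * h
      have := Nat.le_of_dvd (by norm_num) (hα.dvd_of_pow_eq_one _ this)
      omega
    have hne2 : α ^ 2 + α + 1 ≠ 0 := by
      intro h
      have : α ^ 3 = 1 := by linear_combination (α - 1) * h
      have := Nat.le_of_dvd (by norm_num) (hα.dvd_of_pow_eq_one _ this)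
      omega
    have hd : ((0, 1 + α⁻¹ - (1 + α)⁻¹) : K × K) ∈ W := by
      have := sub_mem (add_mem (hpow 1 one_ne_zero) (hpow α hα0)) (hpow _ hne1)
      simpa using this
    have hδ : 1 + α⁻¹ - (1 + α)⁻¹ ≠ 0 := by
      have : 1 + α⁻¹ - (1 + α)⁻¹ = (α ^ 2 + α + 1) / (α * (1 + α)) := by
        field_simp
        ring
      rw [this]
      exact div_ne_zero hne2 (mul_ne_zero hα0 hne1)
    have f2 : ∀ x : K, ((0, x) : K × K) ∈ W := by
      intro x
      by_cases hx : x = 0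
      · rw [hx]; exact zero_mem W
      have := mul_mem hd (hpow _ (inv_ne_zero (mul_ne_zero (inv_ne_zero hδ) hx)))
      simpa [mul_inv_cancel_left₀ hδ] using this
    rw [NonUnitalSubring.eq_top_iff']
    intro z
    by_cases hz : z.1 = 0
    · have := f2 z.2
      rwa [← hz] at this
    · have := add_mem (hpow _ hz) (f2 (z.2 - z.1⁻¹))
      simpa using this

/-- A product of two finite fields of different orders is generated by one element as a ring without
unit. -/
lemma exists_gen_diff {p d1 d2 : ℕ} (hp : p.Prime) (hd1 : 1 ≤ d1) (hd2 : 1 ≤ d2) (hne : d1 ≠ d2)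
    (K L : Type*) [Field K] [Field L] [Finite K] [Finite L] [CharP K p] [CharP L p]
    (hK : Nat.card K = p ^ d1) (hL : Nat.card L = p ^ d2) :
    ∃ z : K × L, ∀ W : NonUnitalSubring (K × L), z ∈ W → W = ⊤ := by
  obtain ⟨α, hα, hgα⟩ := exists_prim K hK
  obtain ⟨β, hβ, hgβ⟩ := exists_prim L hL
  refine ⟨(α, β), fun W hW => ?_⟩
  obtain ⟨h1, h2⟩ := prod_gen hp hd1 hd2 hne hα hβ hgβ hW
  have h3 := two_le_pow hp hd1
  rw [NonUnitalSubring.eq_top_iff']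
  intro z
  by_cases hz : z.1 = 0
  · have := h2 z.2
    rwa [← hz] at this
  · obtain ⟨i, hi⟩ := hgα z.1 hz
    have h4 := nu_pow_mem h1 (i + (p ^ d1 - 1)) (by omega)
    have h5 : ((α, 0) : K × L) ^ (i + (p ^ d1 - 1)) = (z.1, 0) := by
      refine Prod.ext ?_ ?_
      · simp [pow_add, hα.pow_eq_one, hi]
      · simp only [Prod.pow_snd]
        rw [zero_pow (by omega)]
    rw [h5] at h4
    simpa using add_mem h4 (h2 z.2)

section one

variable {F : Type} [Field F] {F1 F2 : Subfield F}

/-- The two diagonal entries of an element of `AGL 1 F1 F2`. -/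
def dg : AGL 1 F1 F2 →+* F1 × F2 :=
  RingHom.prod
    ((Matrix.uniqueRingEquiv : Matrix (Fin 1) (Fin 1) F1 ≃+* F1).toRingHom.comp blk) cor

lemma dg_apply (x : AGL 1 F1 F2) : dg x = (blk x 0 0, cor x) := rfl

lemma dg_mkA (a : F1) (v : Fin 1 → F) (b : F2) : dg (mkA (Matrix.of fun _ _ => a) v b) = (a, b) := by
  rw [dg_apply, blk_mkA, cor_mkA, Matrix.of_apply]

lemma blk_eq_of_dg {x y : AGL 1 F1 F2} (h : dg x = dg y) : blk x = blk y := by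
  ext i j
  rw [Subsingleton.elim i 0, Subsingleton.elim j 0]
  exact congrArg Subtype.val (congrArg Prod.fst h)

lemma cor_eq_of_dg {x y : AGL 1 F1 F2} (h : dg x = dg y) : cor x = cor y :=
  congrArg Prod.snd h

/-- If `F1 × F2` is generated by one element, then no cover consists of subrings containing the
radical, so a cover needs all complements of the radical and one more subring. The subring of
elements with equal diagonal entries suffices as the additional member. -/
lemma one_elementary [Finite F] (hcomp : F1 ⊔ F2 = ⊤)
    (hz : ∃ z : F1 × F2, ∀ W : NonUnitalSubring (F1 × F2), z ∈ W → W = ⊤) :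
    IsSigmaElementary (AGL 1 F1 F2) ∧
      coveringNumber (AGL 1 F1 F2) = ((Nat.card F + 1 : ℕ) : ℕ∞) := by
  have := Fintype.ofFinite F
  obtain ⟨z, hz⟩ := hz
  let f1 : AGL 1 F1 F2 →+* F := F1.subtype.comp ((RingHom.fst F1 F2).comp dg)
  let f2 : AGL 1 F1 F2 →+* F := F2.subtype.comp ((RingHom.snd F1 F2).comp dg)
  have hz' : ∀ S : NonUnitalSubring (AGL 1 F1 F2), Sat S →
      mkA (Matrix.of fun _ _ => z.1) 0 z.2 ∈ S → S = ⊤ := by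
    intro S hS hzS
    have h1 := hz (S.map dg) ⟨_, hzS, dg_mkA _ _ _⟩
    rw [NonUnitalSubring.eq_top_iff']
    intro x
    have h2 : dg x ∈ S.map dg := h1 ▸ NonUnitalSubring.mem_top _
    obtain ⟨y, hy, hyx⟩ := h2
    exact hS.mem_iff (blk_eq_of_dg hyx) (cor_eq_of_dg hyx) hy
  refine sigmaElementary_of hcomp le_rfl (Nat.card F + 1)
    (insert (RingHom.eqLocus f1 f2).toNonUnitalSubring
      (Finset.univ.image (rcompl (n := 1) F1 F2))) ⟨?_, ?_⟩ ?_ ?_ ?_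
  · intro S hS
    rw [Finset.mem_insert, Finset.mem_image] at hS
    obtain rfl | ⟨u, -, rfl⟩ := hS
    · intro h
      have : mkA (Matrix.of fun _ _ => 1) 0 0 ∈ (RingHom.eqLocus f1 f2).toNonUnitalSubring :=
        h ▸ NonUnitalSubring.mem_top _
      have : f1 (mkA (Matrix.of fun _ _ => 1) 0 0) = f2 (mkA (Matrix.of fun _ _ => 1) 0 0) := this
      simp [f1, f2, dg_mkA] at this
    · exact rcompl_ne_top le_rfl u
  · intro x
    by_cases h : f1 x = f2 x
    · exact ⟨_, Finset.mem_insert_self _ _, h⟩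
    · refine ⟨_, Finset.mem_insert_of_mem (Finset.mem_image_of_mem _ (Finset.mem_univ
        ((fun _ => vec x 0 / (f1 x - f2 x)) : Fin 1 → F))), ?_⟩
      rw [mem_rcompl]
      funext i
      rw [Subsingleton.elim i 0, Pi.sub_apply, lft_mulVec]
      have e1 : f1 x = blk x 0 0 := rfl
      have e2 : f2 x = cor x := rfl
      have e3 : (blk x 0 0 : F) - cor x ≠ 0 := sub_ne_zero.2 h
      rw [e1, e2]
      simp only [Finset.univ_unique, Fin.default_eq_zero, Finset.sum_singleton, Pi.smul_apply,
        smul_eq_mul]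
      rw [← sub_mul, mul_div_cancel₀ _ e3]
  · refine (Finset.card_insert_le _ _).trans (Nat.succ_le_succ (Finset.card_image_le.trans ?_))
    rw [Finset.card_univ, Fintype.card_fun, Fintype.card_fin, pow_one, Nat.card_eq_fintype_card]
  · intro N hN
    have := hN.card_pos le_rfl
    rw [pow_one]; omega
  · intro C hC hsat
    obtain ⟨S, hS, hzS⟩ := hC.2 (mkA (Matrix.of fun _ _ => z.1) 0 z.2)
    exact absurd (hz' S (hsat S hS) hzS) (hC.1 S hS)

/-- A small cover of `F1 × F2` pulls back to a cover of the whole ring by subrings containing the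
radical. -/
lemma one_not_elementary [Finite F] (hcomp : F1 ⊔ F2 = ⊤) (C : Finset (NonUnitalSubring (F1 × F2)))
    (hC : IsRingCover _ C) (hle : C.card ≤ Nat.card F + 1) :
    ¬ IsSigmaElementary (AGL 1 F1 F2) := by
  have hsurj : Function.Surjective (dg : AGL 1 F1 F2 → F1 × F2) := fun z =>
    ⟨mkA (Matrix.of fun _ _ => z.1) 0 z.2, dg_mkA _ _ _⟩
  refine not_sigmaElementary hcomp le_rfl _
    (isRingCover_comap (dg : AGL 1 F1 F2 →+* F1 × F2).toNonUnitalRingHom hsurj hC) ?_ ?_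
  · intro S hS
    rw [Finset.mem_image] at hS
    obtain ⟨T, -, rfl⟩ := hS
    intro x h1 h2
    have : dg x = 0 := by rw [dg_apply, h1, h2]; rfl
    rw [NonUnitalSubring.mem_comap]
    change dg x ∈ T
    rw [this]; exact zero_mem T
  · intro N hN
    have := hN.card_pos le_rfl
    have := Finset.card_image_le (s := C) (f := NonUnitalSubring.comap
      (dg : AGL 1 F1 F2 →+* F1 × F2).toNonUnitalRingHom)
    rw [pow_one]; omega

end one

/-- The product of two copies of the field of order 2 is the union of its two factors and the
diagonal. -/
lemma cover_two (K : Type*) [Field K] [Finite K] (h2 : Nat.card K = 2) :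
    ∃ C : Finset (NonUnitalSubring (K × K)), IsRingCover _ C ∧ C.card ≤ 3 := by
  have := Fintype.ofFinite K
  refine ⟨{(⊥ : NonUnitalSubring K).comap (RingHom.fst K K),
    (⊥ : NonUnitalSubring K).comap (RingHom.snd K K),
    (RingHom.eqLocus (RingHom.fst K K) (RingHom.snd K K)).toNonUnitalSubring},
    ⟨fun S hS => ?_, fun z => ?_⟩, Finset.card_le_three⟩
  · simp only [Finset.mem_insert, Finset.mem_singleton] at hS
    intro h
    obtain rfl | rfl | rfl := hS
    · have : ((1, 0) : K × K) ∈ (⊥ : NonUnitalSubring K).comap (RingHom.fst K K) :=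
        h ▸ NonUnitalSubring.mem_top _
      simp [NonUnitalSubring.mem_comap, NonUnitalSubring.mem_bot] at this
    · have : ((0, 1) : K × K) ∈ (⊥ : NonUnitalSubring K).comap (RingHom.snd K K) :=
        h ▸ NonUnitalSubring.mem_top _
      simp [NonUnitalSubring.mem_comap, NonUnitalSubring.mem_bot] at this
    · have : ((0, 1) : K × K) ∈
        (RingHom.eqLocus (RingHom.fst K K) (RingHom.snd K K)).toNonUnitalSubring :=
        h ▸ NonUnitalSubring.mem_top _
      have : (0 : K) = 1 := this
      exact zero_ne_one this
  · have hx : ∀ x : K, x = 0 ∨ x = 1 := by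
      intro x
      have := FiniteField.pow_card x
      rw [← Nat.card_eq_fintype_card, h2] at this
      have h : x * (x - 1) = 0 := by linear_combination this
      rcases mul_eq_zero.1 h with h | h
      · exact Or.inl h
      · exact Or.inr (by linear_combination h)
    rcases hx z.1 with h | h
    · refine ⟨_, by simp, (?_ : z ∈ (⊥ : NonUnitalSubring K).comap (RingHom.fst K K))⟩
      simpa [NonUnitalSubring.mem_comap, NonUnitalSubring.mem_bot] using h
    rcases hx z.2 with h' | h'
    · refine ⟨_, by simp, (?_ : z ∈ (⊥ : NonUnitalSubring K).comap (RingHom.snd K K))⟩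
      simpa [NonUnitalSubring.mem_comap, NonUnitalSubring.mem_bot] using h'
    · exact ⟨(RingHom.eqLocus (RingHom.fst K K) (RingHom.snd K K)).toNonUnitalSubring, by simp,
        h.trans h'.symm⟩

/-- For the field of order 4, the product `K × K` is covered by the two subrings of pairs with one
coordinate in the prime field, the diagonal, and the graph of the Frobenius automorphism. -/
lemma cover_four (K : Type*) [Field K] [Finite K] (h4 : Nat.card K = 4) :
    ∃ C : Finset (NonUnitalSubring (K × K)), IsRingCover _ C ∧ C.card ≤ 4 := by
  have := Fintype.ofFinite K
  have hp2 : Fact (Nat.Prime 2) := ⟨Nat.prime_two⟩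
  have h20 : (2 : K) = 0 := by
    have := FiniteField.cast_card_eq_zero K
    rw [← Nat.card_eq_fintype_card, h4] at this
    have h : (2 : K) * 2 = 0 := by
      have h : ((4 : ℕ) : K) = 2 * 2 := by norm_num
      rw [← h, this]
    exact mul_self_eq_zero.1 h
  have : CharP K 2 := CharTwo.of_one_ne_zero_of_two_eq_zero one_ne_zero h20
  obtain ⟨α, hα, -⟩ := exists_prim K h4
  have hα1 : α ^ 2 ≠ α := by
    intro h
    have h0 : α ≠ 0 := hα.ne_zero (by norm_num)
    have : α ^ 1 = 1 := by
      rw [pow_one]; exact mul_left_cancel₀ h0 (by linear_combination h)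
    have := Nat.le_of_dvd (by norm_num) (hα.dvd_of_pow_eq_one _ this)
    norm_num at this
  let φ := frobenius K 2
  let a := RingHom.fst K K
  let b := RingHom.snd K K
  refine ⟨{(RingHom.eqLocus (φ.comp a) a).toNonUnitalSubring,
    (RingHom.eqLocus (φ.comp b) b).toNonUnitalSubring,
    (RingHom.eqLocus a b).toNonUnitalSubring,
    (RingHom.eqLocus a (φ.comp b)).toNonUnitalSubring}, ⟨fun S hS => ?_, fun z => ?_⟩,
    Finset.card_le_four⟩
  · simp only [Finset.mem_insert, Finset.mem_singleton] at hS
    intro h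
    have key : ∀ f g : K × K →+* K, S = (RingHom.eqLocus f g).toNonUnitalSubring → ∀ z, f z = g z := by
      rintro f g rfl z
      have : z ∈ (RingHom.eqLocus f g).toNonUnitalSubring := h ▸ NonUnitalSubring.mem_top _
      exact this
    obtain h | h | h | h := hS
    · exact hα1 (key _ _ h (α, 0))
    · exact hα1 (key _ _ h (0, α))
    · exact one_ne_zero (key _ _ h (1, 0))
    · have h0 : (1 : K) = 0 ^ 2 := key _ _ h (1, 0)
      simp at h0
  · have hx : ∀ x : K, x ^ 2 = x ∨ x ^ 2 + x + 1 = 0 := by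
      intro x
      have := FiniteField.pow_card x
      rw [← Nat.card_eq_fintype_card, h4] at this
      have h : (x ^ 2 - x) * (x ^ 2 + x + 1) = 0 := by linear_combination this
      rcases mul_eq_zero.1 h with h | h
      · exact Or.inl (sub_eq_zero.1 h)
      · exact Or.inr h
    rcases hx z.1 with h | h
    · exact ⟨(RingHom.eqLocus (φ.comp a) a).toNonUnitalSubring, by simp, h⟩
    rcases hx z.2 with h' | h'
    · exact ⟨(RingHom.eqLocus (φ.comp b) b).toNonUnitalSubring, by simp, h'⟩
    have h5 : (z.1 - z.2) * (z.1 + z.2 + 1) = 0 := by linear_combination h - h'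
    rcases mul_eq_zero.1 h5 with h5 | h5
    · exact ⟨(RingHom.eqLocus a b).toNonUnitalSubring, by simp, sub_eq_zero.1 h5⟩
    · refine ⟨(RingHom.eqLocus a (φ.comp b)).toNonUnitalSubring, by simp, ?_⟩
      change z.1 = z.2 ^ 2
      linear_combination h5 - h'

/-! ### A cover in the case of small degree -/

section stab

variable {k V : Type*} [Field k] [AddCommGroup V] [Module k V]

/-- The subring of endomorphisms leaving the subspace `T` invariant. -/
def stabE (T : Submodule k V) : NonUnitalSubring (Module.End k V) where
  carrier := {f | ∀ v ∈ T, f v ∈ T}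
  zero_mem' := fun _ _ => zero_mem T
  add_mem' := fun hf hg v hv => add_mem (hf v hv) (hg v hv)
  neg_mem' := fun hf v hv => neg_mem (hf v hv)
  mul_mem' := fun hf hg v hv => hf _ (hg v hv)

lemma mem_stabE {T : Submodule k V} {f : Module.End k V} : f ∈ stabE T ↔ ∀ v ∈ T, f v ∈ T :=
  Iff.rfl

lemma stabE_ne_top {T : Submodule k V} (h0 : T ≠ ⊥) (h1 : T ≠ ⊤) : stabE T ≠ ⊤ := by
  intro h
  obtain ⟨t, ht, ht0⟩ := T.exists_mem_ne_zero_of_ne_bot h0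
  obtain ⟨v, -, hv⟩ := SetLike.exists_of_lt (lt_top_iff_ne_top.2 h1)
  obtain ⟨ψ, hψ⟩ := Module.Projective.exists_dual_eq_one k ht0
  have h2 : ψ.smulRight v ∈ stabE T := h ▸ NonUnitalSubring.mem_top _
  have := h2 t ht
  rw [LinearMap.smulRight_apply, hψ, one_smul] at this
  exact hv this

lemma ne_bot_top_of_finrank [Module.Finite k V] {T : Submodule k V} {j : ℕ}
    (hT : Module.finrank k T = j) (h1 : 1 ≤ j) (h2 : j < Module.finrank k V) : T ≠ ⊥ ∧ T ≠ ⊤ := by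
  constructor
  · rintro rfl; rw [finrank_bot] at hT; omega
  · rintro rfl; rw [finrank_top] at hT; omega

end stab

section upper

variable {n : ℕ} {F : Type} [Field F] {F1 F2 : Subfield F}

/-- The action of the top-left block on `F1^n`. -/
def tb : AGL n F1 F2 →+* Module.End F1 (Fin n → F1) :=
  ((LinearMap.toMatrixAlgEquiv' : Module.End F1 (Fin n → F1) ≃ₐ[F1]
    Matrix (Fin n) (Fin n) F1).symm : _ →+* _).comp blk

lemma tb_apply (x : AGL n F1 F2) (v : Fin n → F1) : tb x v = (blk x).mulVec v := rfl

lemma tb_surjective : Function.Surjective (tb : AGL n F1 F2 →+* _) := by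
  intro f
  refine ⟨mkA (LinearMap.toMatrixAlgEquiv' f) 0 0, ?_⟩
  simp [tb]

lemma sat_comap_tb (W : NonUnitalSubring (Module.End F1 (Fin n → F1))) :
    Sat (W.comap (tb : AGL n F1 F2 →+* _)) := by
  intro x hx _
  rw [NonUnitalSubring.mem_comap]
  have : (tb : AGL n F1 F2 →+* _) x = 0 := by simp [tb, hx]
  rw [this]
  exact zero_mem W

lemma comap_tb_ne_top {W : NonUnitalSubring (Module.End F1 (Fin n → F1))} (hW : W ≠ ⊤) :
    W.comap (tb : AGL n F1 F2 →+* _) ≠ ⊤ := by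
  intro h
  refine hW ((NonUnitalSubring.eq_top_iff' _).2 fun f => ?_)
  obtain ⟨x, rfl⟩ := tb_surjective (F2 := F2) f
  have : x ∈ W.comap (tb : AGL n F1 F2 →+* _) := h ▸ NonUnitalSubring.mem_top _
  exact this

/-- An eigenvalue in `F` generating `F` over `F1` yields an invariant subspace of dimension
`[F : F1]`: the space of all images of the eigenvector under coordinatewise application of an
`F1`-linear functional. -/
lemma exists_invariant [Finite F] (A : Matrix (Fin n) (Fin n) F1) {b : F}
    (hb : Algebra.adjoin F1 {b} = ⊤) {w : Fin n → F} (hw : w ≠ 0)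
    (h : (lft A).mulVec w = b • w) :
    ∃ T : Submodule F1 (Fin n → F1), Module.finrank F1 T = Module.finrank F1 F ∧
      ∀ v ∈ T, A.mulVec v ∈ T := by
  let Φ : Module.Dual F1 F →ₗ[F1] (Fin n → F1) :=
    LinearMap.pi fun i => LinearMap.applyₗ (w i)
  have hΦ : ∀ l i, Φ l i = l (w i) := fun l i => rfl
  have hM : ∀ c : F, ∃ M : Matrix (Fin n) (Fin n) F1, (lft M).mulVec w = c • w := by
    intro c
    have hc : c ∈ Algebra.adjoin F1 {b} := hb ▸ Algebra.mem_top
    induction hc using Algebra.adjoin_induction with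
    | mem x hx => rw [Set.mem_singleton_iff.1 hx]; exact ⟨A, h⟩
    | algebraMap r =>
      refine ⟨Matrix.scalar _ r, ?_⟩
      have : lft (Matrix.scalar (Fin n) r) = Matrix.scalar (Fin n) (r : F) := by
        ext i j
        rw [lft_apply]
        simp only [Matrix.scalar_apply, Matrix.diagonal_apply]
        split <;> rfl
      rw [this, Matrix.scalar_apply, ← Matrix.smul_one_eq_diagonal, Matrix.smul_mulVec,
        Matrix.one_mulVec]
      rfl
    | add x y _ _ hx hy =>
      obtain ⟨M, hM⟩ := hx
      obtain ⟨N, hN⟩ := hy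
      exact ⟨M + N, by rw [map_add, Matrix.add_mulVec, hM, hN, add_smul]⟩
    | mul x y _ _ hx hy =>
      obtain ⟨M, hM⟩ := hx
      obtain ⟨N, hN⟩ := hy
      exact ⟨M * N, by
        rw [map_mul, ← Matrix.mulVec_mulVec, hN, Matrix.mulVec_smul, hM, smul_smul, mul_comm]⟩
  have hlin : ∀ (M : Matrix (Fin n) (Fin n) F1) (l : Module.Dual F1 F) (i : Fin n),
      l ((lft M).mulVec w i) = M.mulVec (Φ l) i := by
    intro M l i
    rw [lft_mulVec, map_sum]
    refine Finset.sum_congr rfl fun j _ => ?_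
    have : (M i j : F) * w j = M i j • w j := rfl
    rw [this, map_smul, smul_eq_mul, hΦ]
  have hinj : Function.Injective Φ := by
    rw [← LinearMap.ker_eq_bot, LinearMap.ker_eq_bot']
    intro l hl
    obtain ⟨i, hi⟩ := Function.ne_iff.1 hw
    ext c
    obtain ⟨M, hM⟩ := hM (c / w i)
    have h1 := hlin M l i
    rw [hM, hl, Matrix.mulVec_zero, Pi.smul_apply, smul_eq_mul, div_mul_cancel₀ _ hi] at h1
    exact congrArg Subtype.val h1
  refine ⟨LinearMap.range Φ, ?_, ?_⟩
  · rw [LinearMap.finrank_range_of_inj hinj, Subspace.dual_finrank_eq]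
  · rintro _ ⟨l, rfl⟩
    refine ⟨l.comp (LinearMap.mulLeft F1 b), ?_⟩
    funext i
    rw [← hlin A l i, h]
    rfl

lemma charP_of_pow {K : Type*} [Field K] [Finite K] {p m : ℕ} (hp : p.Prime)
    (h : Nat.card K = p ^ m) : CharP K p := by
  have : Fintype K := Fintype.ofFinite K
  have : Fact p.Prime := ⟨hp⟩
  exact charP_of_card_eq_prime_pow (f := m) (by rw [← Nat.card_eq_fintype_card, h])

lemma finrank_of_card {k K : Type*} [Field k] [Field K] [Algebra k K] [Finite k] [Finite K]
    {p m d : ℕ} (hp : p.Prime) (hm : 1 ≤ m) (hk : Nat.card k = p ^ m)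
    (hK : Nat.card K = p ^ (m * d)) : Module.finrank k K = d := by
  have h := Module.natCard_eq_pow_finrank (K := k) (V := K)
  rw [hk, hK, ← pow_mul] at h
  exact (Nat.eq_of_mul_eq_mul_left hm (Nat.pow_right_injective hp.two_le h)).symm

lemma card_of_finrank {k K : Type*} [Field k] [Field K] [Algebra k K] [Finite k] [Finite K]
    {p m d : ℕ} (hk : Nat.card k = p ^ m)
    (hK : Module.finrank k K = d) : Nat.card K = p ^ (m * d) := by
  rw [Module.natCard_eq_pow_finrank (K := k) (V := K), hk, hK, ← pow_mul]

lemma pow_card_eq {K : Type*} [Field K] [Finite K] {N : ℕ} (hN : Nat.card K = N) (x : K) :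
    x ^ N = x := by
  have : Fintype K := Fintype.ofFinite K
  rw [← hN, Nat.card_eq_fintype_card]
  exact FiniteField.pow_card x

lemma pow_pow_mul {K : Type*} [Monoid K] {p m : ℕ} {x : K} (h : x ^ p ^ m = x) (j : ℕ) :
    x ^ p ^ (m * j) = x := by
  induction j with
  | zero => simp
  | succ j ih => rw [mul_add, mul_one, pow_add, pow_mul, ih, h]

/-- An element generating a proper intermediate field lies in a maximal one. -/
lemma exists_prime_of_adjoin_ne_top {k K : Type*} [Field k] [Field K] [Algebra k K] [Finite k]
    [Finite K] {p m d : ℕ} (hk : Nat.card k = p ^ m) (hK : Module.finrank k K = d)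
    {b : K} (hb : Algebra.adjoin k {b} ≠ ⊤) : ∃ l ∈ d.primeFactors, b ^ p ^ (m * (d / l)) = b := by
  have hd : 0 < d := hK ▸ Module.finrank_pos
  let E := IntermediateField.adjoin k {b}
  have hE : Module.finrank k E ∣ d := hK ▸ ⟨_, (Module.finrank_mul_finrank k E K).symm⟩
  have hne : Module.finrank k E ≠ d := by
    intro h
    have h1 : E = ⊤ := IntermediateField.eq_of_le_of_finrank_eq le_top (by
      rw [h, IntermediateField.finrank_top', hK])
    refine hb ?_
    rw [← IntermediateField.adjoin_simple_toSubalgebra_of_isAlgebraic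
      (Algebra.IsAlgebraic.isAlgebraic b)]
    change E.toSubalgebra = ⊤
    rw [h1, IntermediateField.top_toSubalgebra]
  obtain ⟨c, hc⟩ := hE
  have hc1 : c ≠ 1 := by rintro rfl; exact hne (by rw [hc, mul_one])
  obtain ⟨l, hl, j, rfl⟩ := Nat.exists_prime_and_dvd hc1
  refine ⟨l, Nat.mem_primeFactors.2 ⟨hl, ⟨Module.finrank k E * j, by rw [hc]; ring⟩, hd.ne'⟩, ?_⟩
  have h2 : d / l = Module.finrank k E * j := by
    rw [hc, show Module.finrank k E * (l * j) = l * (Module.finrank k E * j) by ring,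
      Nat.mul_div_cancel_left _ hl.pos]
  rw [h2, ← mul_assoc]
  refine pow_pow_mul ?_ j
  have h3 := pow_card_eq (card_of_finrank hk (rfl : Module.finrank k E = _))
    (⟨b, IntermediateField.mem_adjoin_simple_self k b⟩ : E)
  exact congrArg Subtype.val h3

/-- The subring of elements whose corner is fixed by the `m`-th power of the Frobenius. -/
def frobFix (p m : ℕ) [ExpChar F p] : NonUnitalSubring (AGL n F1 F2) :=
  (RingHom.eqLocus ((iterateFrobenius F p m).comp (F2.subtype.comp cor))
    (F2.subtype.comp (cor : AGL n F1 F2 →+* F2))).toNonUnitalSubring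

lemma mem_frobFix {p m : ℕ} [ExpChar F p] {x : AGL n F1 F2} :
    x ∈ frobFix p m ↔ (cor x : F) ^ p ^ m = cor x := Iff.rfl

/-- The compositum of `F1` and `F2` is `F`, so the corners cannot all lie in a proper subfield
containing `F1`. -/
lemma frobFix_ne_top [Finite F] {p d1 m d : ℕ} [ExpChar F p] (hp : p.Prime) (hd1 : 1 ≤ d1)
    (hF1 : Nat.card F1 = p ^ d1) (hF : Nat.card F = p ^ (d1 * d)) (hcomp : F1 ⊔ F2 = ⊤)
    (hm1 : 1 ≤ m) (hmd : m < d) : (frobFix p (d1 * m) : NonUnitalSubring (AGL n F1 F2)) ≠ ⊤ := by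
  intro h
  let E : Subfield F := (iterateFrobenius F p (d1 * m)).eqLocusField (RingHom.id F)
  have hE : ∀ x, x ∈ E ↔ x ^ p ^ (d1 * m) = x := fun x => Iff.rfl
  have h1 : F1 ≤ E := fun x hx => by
    rw [hE]
    exact pow_pow_mul (congrArg Subtype.val (pow_card_eq hF1 (⟨x, hx⟩ : F1))) m
  have h2 : F2 ≤ E := fun x hx => by
    rw [hE]
    have h3 : mkA (0 : Matrix (Fin n) (Fin n) F1) 0 ⟨x, hx⟩ ∈
      (frobFix p (d1 * m) : NonUnitalSubring (AGL n F1 F2)) := h ▸ NonUnitalSubring.mem_top _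
    simpa [mem_frobFix] using h3
  have h4 : E = ⊤ := top_le_iff.1 (hcomp ▸ sup_le h1 h2)
  obtain ⟨b, hb, -⟩ := exists_prim F hF
  refine prim_pow_ne hp (Nat.mul_pos hd1 hm1) (Nat.mul_pos hd1 (hm1.trans hmd.le))
    (Nat.mul_lt_mul_of_pos_left hmd hd1) hb ?_
  rw [← hE, h4]
  exact Subfield.mem_top b

/-- A cover is formed by the complements of the radical, the stabilisers of `d`-dimensional
subspaces, and, for each prime divisor `l` of `d`, the subring of elements whose corner lies in the
subfield of `F` of degree `d / l` over `F1`. An element lying in no complement has its corner as an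
eigenvalue of its block; if the corner generates `F` over `F1`, this eigenvalue yields a
`d`-dimensional invariant subspace. -/
lemma upper_cover [Finite F] {p d1 d : ℕ} (hp : p.Prime) (hd1 : 1 ≤ d1)
    (hF1 : Nat.card F1 = p ^ d1) (hF : Nat.card F = p ^ (d1 * d)) (hcomp : F1 ⊔ F2 = ⊤)
    (h1d : 1 ≤ d) (hdn : d < n) :
    ∃ C : Finset (NonUnitalSubring (AGL n F1 F2)), IsRingCover _ C ∧
      C.card ≤ Nat.card F ^ n + gaussBinom (p ^ d1) n d + d.primeFactors.card := by
  have := charP_of_pow hp hF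
  have : Fact p.Prime := ⟨hp⟩
  have : Fintype F := Fintype.ofFinite F
  have hfr : Module.finrank F1 F = d := finrank_of_card hp hd1 hF1 hF
  have hfin : Finite (Submodule F1 (Fin n → F1)) := inferInstance
  have : Fintype {T : Submodule F1 (Fin n → F1) // Module.finrank F1 T = d} := Fintype.ofFinite _
  let C1 : Finset (NonUnitalSubring (AGL n F1 F2)) := Finset.univ.image (rcompl F1 F2)
  let C2 : Finset (NonUnitalSubring (AGL n F1 F2)) :=
    Finset.univ.image fun T : {T : Submodule F1 (Fin n → F1) // Module.finrank F1 T = d} =>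
      (stabE T.1).comap (tb : AGL n F1 F2 →+* _)
  let C3 : Finset (NonUnitalSubring (AGL n F1 F2)) :=
    d.primeFactors.image fun l => frobFix p (d1 * (d / l))
  have hc1 : C1.card ≤ Nat.card F ^ n := by
    refine Finset.card_image_le.trans ?_
    rw [Finset.card_univ, Fintype.card_fun, Fintype.card_fin, Nat.card_eq_fintype_card]
  have hc2 : C2.card ≤ gaussBinom (p ^ d1) n d := by
    refine Finset.card_image_le.trans ?_
    rw [Finset.card_univ, ← Nat.card_eq_fintype_card, card_subspaces d (by simpa using hdn.le),
      hF1, Module.finrank_fin_fun]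
  have hc3 : C3.card ≤ d.primeFactors.card := Finset.card_image_le
  refine ⟨C1 ∪ C2 ∪ C3, ⟨fun S hS => ?_, fun x => ?_⟩, ?_⟩
  · rcases Finset.mem_union.1 hS with hS | hS
    · rcases Finset.mem_union.1 hS with hS | hS
      · obtain ⟨u, -, rfl⟩ := Finset.mem_image.1 hS
        exact rcompl_ne_top (by omega) u
      · obtain ⟨T, -, rfl⟩ := Finset.mem_image.1 hS
        obtain ⟨h1, h2⟩ := ne_bot_top_of_finrank T.2 h1d (by simpa using hdn)
        exact comap_tb_ne_top (stabE_ne_top h1 h2)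
    · obtain ⟨l, hl, rfl⟩ := Finset.mem_image.1 hS
      obtain ⟨hl1, hl2, -⟩ := Nat.mem_primeFactors.1 hl
      exact frobFix_ne_top hp hd1 hF1 hF hcomp
        (Nat.div_pos (Nat.le_of_dvd h1d hl2) hl1.pos) (Nat.div_lt_self h1d hl1.one_lt)
  · by_cases hx1 : ∃ u, x ∈ rcompl F1 F2 u
    · obtain ⟨u, hu⟩ := hx1
      exact ⟨_, Finset.mem_union_left _ (Finset.mem_union_left _
        (Finset.mem_image_of_mem _ (Finset.mem_univ u))), hu⟩
    by_cases hb : Algebra.adjoin F1 {(cor x : F)} = ⊤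
    · have hni : ¬ Function.Injective
          (fun v => (lft (blk x)).mulVec v - (cor x : F) • v) := by
        intro hinj
        obtain ⟨u, hu⟩ := (Finite.injective_iff_surjective.1 hinj) (vec x)
        exact hx1 ⟨u, mem_rcompl.2 hu.symm⟩
      obtain ⟨v, v', hvv, hne⟩ : ∃ v v', (lft (blk x)).mulVec v - (cor x : F) • v =
          (lft (blk x)).mulVec v' - (cor x : F) • v' ∧ v ≠ v' := by
        simpa [Function.Injective] using hni
      have h3 : (lft (blk x)).mulVec (v - v') = (cor x : F) • (v - v') := by
        rw [Matrix.mulVec_sub, smul_sub, ← sub_eq_zero]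
        rw [← sub_eq_zero] at hvv
        rw [← hvv]; abel
      obtain ⟨T, hT, hT'⟩ := exists_invariant (blk x) hb (sub_ne_zero.2 hne) h3
      refine ⟨(stabE T).comap (tb : AGL n F1 F2 →+* _),
        Finset.mem_union_left _ (Finset.mem_union_right _
        (Finset.mem_image.2 ⟨⟨T, hT.trans hfr⟩, Finset.mem_univ _, rfl⟩)), ?_⟩
      rw [NonUnitalSubring.mem_comap, mem_stabE]
      exact hT'
    · obtain ⟨l, hl, hl'⟩ := exists_prime_of_adjoin_ne_top hF1 hfr hb
      exact ⟨_, Finset.mem_union_right _ (Finset.mem_image_of_mem _ hl), mem_frobFix.2 hl'⟩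
  · have := Finset.card_union_le (C1 ∪ C2) C3
    have := Finset.card_union_le C1 C2
    omega

end upper

/-! ### Counting the subrings needed for elements lying in no complement of the radical -/

lemma mem_adjoin_of_pow_eq {k K : Type*} [Field k] [Field K] [Algebra k K] [Finite k] [Finite K]
    {p m j : ℕ} [ExpChar K p] (hk : Nat.card k = p ^ m) {b : K} (hb : b ^ p ^ (m * j) = b) {x : K}
    (hx : x ∈ IntermediateField.adjoin k {b}) : x ^ p ^ (m * j) = x := by
  let E0 : Subfield K := (iterateFrobenius K p (m * j)).eqLocusField (RingHom.id K)
  let E : IntermediateField k K := E0.toIntermediateField fun c => by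
    change (algebraMap k K c) ^ p ^ (m * j) = algebraMap k K c
    rw [← map_pow, pow_pow_mul (pow_card_eq hk c)]
  have h1 : IntermediateField.adjoin k {b} ≤ E :=
    IntermediateField.adjoin_le_iff.2 (Set.singleton_subset_iff.2 hb)
  exact h1 hx

/-- An element of the field of degree `j` over `k` has degree dividing `j`. -/
lemma finrank_adjoin_dvd {k K : Type*} [Field k] [Field K] [Algebra k K] [Finite k] [Finite K]
    {p m j : ℕ} [ExpChar K p] (hp : p.Prime) (hm : 1 ≤ m) (hk : Nat.card k = p ^ m) {b : K}
    (hb : b ^ p ^ (m * j) = b) : Module.finrank k (IntermediateField.adjoin k {b}) ∣ j := by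
  set e := Module.finrank k (IntermediateField.adjoin k {b}) with he
  have he1 : 0 < e := Module.finrank_pos
  have hc := card_of_finrank hk he.symm
  obtain ⟨η, hη, -⟩ := exists_prim _ hc
  have h1 : η ^ p ^ (m * j) = η := Subtype.ext (mem_adjoin_of_pow_eq hk hb η.2)
  have h2 : η ^ p ^ (m * (j % e)) = η := by
    have h3 : η ^ p ^ (m * e * (j / e)) = η := pow_pow_mul (pow_card_eq hc η) _
    have h4 : m * j = m * e * (j / e) + m * (j % e) := by
      conv_lhs => rw [← Nat.div_add_mod j e]
      ring
    rw [h4, pow_add, pow_mul, h3] at h1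
    exact h1
  by_contra hdvd
  have h5 : 0 < j % e := Nat.pos_of_ne_zero fun h => hdvd (Nat.dvd_of_mod_eq_zero h)
  exact prim_pow_ne hp (Nat.mul_pos hm h5) (Nat.mul_pos hm he1)
    (Nat.mul_lt_mul_of_pos_left (Nat.mod_lt _ he1) hm) hη h2

section rest

variable {n : ℕ} {F : Type} [Field F] {F1 F2 : Subfield F}

/-- If `A` has the left eigenvector `w` with eigenvalue `b`, then some element with block `A` and
corner `b` lies in no complement of the radical. -/
lemma exists_not_mem_rcompl (A : Matrix (Fin n) (Fin n) F1) (b : F2) {w : Fin n → F} (hw : w ≠ 0)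
    (h : ∀ j, ∑ i, w i * (A i j : F) = b * w j) :
    ∃ v, ∀ u, mkA A v b ∉ rcompl F1 F2 u := by
  obtain ⟨i0, hi0⟩ := Function.ne_iff.1 hw
  refine ⟨Pi.single i0 1, fun u hu => ?_⟩
  rw [mem_rcompl, vec_mkA, blk_mkA, cor_mkA] at hu
  have h1 : dotProduct w ((lft A).mulVec u) = (b : F) * dotProduct w u := by
    simp only [dotProduct, lft_mulVec, Finset.mul_sum]
    rw [Finset.sum_comm]
    refine Finset.sum_congr rfl fun j _ => ?_
    rw [← mul_assoc, ← h j, Finset.sum_mul]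
    exact Finset.sum_congr rfl fun i _ => by ring
  have h2 := congrArg (dotProduct w) hu
  rw [dotProduct_sub, h1, dotProduct_smul, smul_eq_mul, sub_self, dotProduct_single_one] at h2
  exact hi0 h2

lemma toMatrix_apply (f : Module.End F1 (Fin n → F1)) (i j : Fin n) :
    LinearMap.toMatrixAlgEquiv' f i j = f (Pi.single j 1) i := by
  rw [LinearMap.toMatrixAlgEquiv'_apply]

/-- An equivariant functional on `F1^n` with values in `F` gives a left eigenvector. -/
lemma functional_eigen (f : Module.End F1 (Fin n → F1)) (φ : (Fin n → F1) →ₗ[F1] F) (b : F)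
    (h : ∀ v, φ (f v) = b * φ v) (j : Fin n) :
    ∑ i, φ (Pi.single i 1) * ((LinearMap.toMatrixAlgEquiv' f i j : F1) : F) =
      b * φ (Pi.single j 1) := by
  rw [← h]
  have h1 : f (Pi.single j 1) = ∑ i, f (Pi.single j 1) i • Pi.single (M := fun _ => F1) i 1 := by
    funext l
    simp [Finset.sum_apply, Pi.single_apply]
  rw [h1, map_sum]
  refine Finset.sum_congr rfl fun i _ => ?_
  rw [map_smul, toMatrix_apply, mul_comm]
  rfl

/-- The members of `N` that contain an element with corner `b` are counted by applying `test_count` to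
the elements whose block acts as `(b, γ)` on the product of `F1(b)` and the extension of degree
`n - e`, with `γ` a generator of the multiplicative group of the latter. Each such block has `b` as
an eigenvalue, hence belongs to an element with corner `b` lying in no complement of the radical. -/
lemma rest_count [Finite F] {p d1 s e : ℕ} (hp : p.Prime) (hd1 : 1 ≤ d1)
    (hF1 : Nat.card F1 = p ^ d1) (hs : 1 ≤ s) {b : F2} (hb : IsPrimitiveRoot (b : F) (p ^ s - 1))
    (he : Module.finrank F1 (IntermediateField.adjoin F1 {(b : F)}) = e) (hen : e < n)
    (hne : n ≠ 2 * e) {N : Finset (NonUnitalSubring (AGL n F1 F2))} (hN : IsRest N)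
    (P : Finset (NonUnitalSubring (AGL n F1 F2))) (hP : ∀ S ∈ P, eblk S ≠ ⊤)
    (hcov : ∀ S ∈ N, (∃ x ∈ S, cor x = b) → S ∈ P) :
    (n.Coprime e → gaussBinom (p ^ d1) n e ≤
      (P.filter fun S => sdim (eblk S) = e ∨ sdim (eblk S) = n - e).card) ∧
    (GLcard n (p ^ d1) * gaussBinom (p ^ d1) n e ≤
      (P.filter fun S => sdim (eblk S) = e ∨ sdim (eblk S) = n - e).card * GLcard n (p ^ d1) +
      (P.filter fun S => sdim (eblk S) = 0).card *
        ((p ^ d1) ^ n * (p ^ d1) ^ (n * (n / 2)) * gaussBinom (p ^ d1) n e)) := by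
  have : Fact p.Prime := ⟨hp⟩
  have : CharP F1 p := charP_of_pow hp hF1
  have : CharP F p := charP_of_injective_algebraMap (algebraMap F1 F).injective p
  have he1 : 1 ≤ e := by rw [← he]; exact Module.finrank_pos
  have : NeZero (n - e) := ⟨by omega⟩
  let K := IntermediateField.adjoin F1 {(b : F)}
  let L := FiniteField.Extension F1 p (n - e)
  have : CharP K p := charP_of_injective_algebraMap (algebraMap F1 K).injective p
  have : CharP L p := charP_of_injective_algebraMap (algebraMap F1 L).injective p
  have hLc : Nat.card L = p ^ (d1 * (n - e)) := by
    rw [FiniteField.natCard_extension, hF1, ← pow_mul]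
  obtain ⟨γ, hγ, hgen⟩ := exists_prim L hLc
  let bK : K := ⟨b, IntermediateField.mem_adjoin_simple_self F1 (b : F)⟩
  have hbK : IsPrimitiveRoot bK (p ^ s - 1) :=
    IsPrimitiveRoot.of_map_of_injective (f := algebraMap K F) hb (algebraMap K F).injective
  have hst : s ≠ d1 * (n - e) := by
    rintro rfl
    have h1 : e ∣ n - e := by
      have h0 := finrank_adjoin_dvd hp hd1 hF1 (prim_pow_eq hp hs hb)
      rwa [he] at h0
    have h2 := Nat.le_of_dvd (by omega) h1
    have h3 : bK ^ p ^ (d1 * e) = bK := pow_card_eq (card_of_finrank hF1 he) bK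
    exact prim_pow_ne hp (Nat.mul_pos hd1 he1) hs
      (Nat.mul_lt_mul_of_pos_left (by omega) hd1) hbK h3
  have ht : 1 ≤ d1 * (n - e) := Nat.mul_pos hd1 (by omega)
  have key : ∀ W : NonUnitalSubring (K × L), (bK, γ) ∈ W → (bK, 0) ∈ W ∧ ∀ x : L, (0, x) ∈ W :=
    fun W hW => prod_gen hp hs ht hst hbK hγ hgen hW
  have hβ : Algebra.adjoin F1 {((bK, γ) : K × L)} = ⊤ := by
    set W := Algebra.adjoin F1 {((bK, γ) : K × L)} with hWdef
    obtain ⟨h1, h2⟩ := key W.toSubring.toNonUnitalSubring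
      (Algebra.self_mem_adjoin_singleton F1 ((bK, γ) : K × L))
    have h1' : ((bK, 0) : K × L) ∈ W := h1
    have h2' : ∀ x : L, ((0, x) : K × L) ∈ W := h2
    have h3 : ∀ x ∈ Algebra.adjoin F1 {(b : F)}, ∃ hx : x ∈ K, ((⟨x, hx⟩, 0) : K × L) ∈ W := by
      intro x hx
      induction hx using Algebra.adjoin_induction with
      | mem x hx =>
        obtain rfl := Set.mem_singleton_iff.1 hx
        exact ⟨bK.2, h1'⟩
      | algebraMap r =>
        refine ⟨algebraMap_mem K r, ?_⟩
        have := sub_mem (W.algebraMap_mem r) (h2' (algebraMap F1 L r))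
        convert! this using 1
        refine Prod.ext ?_ ?_
        · exact (sub_zero _).symm
        · exact (sub_self _).symm
      | add x y _ _ hx hy =>
        obtain ⟨hx1, hx2⟩ := hx
        obtain ⟨hy1, hy2⟩ := hy
        refine ⟨add_mem hx1 hy1, ?_⟩
        convert! add_mem hx2 hy2 using 1
        exact Prod.ext rfl (add_zero _).symm
      | mul x y _ _ hx hy =>
        obtain ⟨hx1, hx2⟩ := hx
        obtain ⟨hy1, hy2⟩ := hy
        refine ⟨mul_mem hx1 hy1, ?_⟩
        convert! mul_mem hx2 hy2 using 1
    rw [eq_top_iff]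
    rintro ⟨x, y⟩ -
    have hx : (x : F) ∈ Algebra.adjoin F1 {(b : F)} := by
      rw [← IntermediateField.adjoin_simple_toSubalgebra_of_isAlgebraic
        (Algebra.IsAlgebraic.isAlgebraic (b : F))]
      exact x.2
    obtain ⟨hx1, hx2⟩ := h3 x hx
    have := add_mem hx2 (h2' y)
    convert! this using 1
    exact Prod.ext (add_zero _).symm (zero_add _).symm
  have hβ2 : ∀ W : NonUnitalSubring (K × L), (bK, γ) ∈ W →
      ∃ e, e ≠ 0 ∧ ∀ c : F1, c • e ∈ W := by
    intro W hW
    obtain ⟨-, h2⟩ := key W hW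
    refine ⟨(0, 1), fun h => one_ne_zero (congrArg Prod.snd h), fun c => ?_⟩
    have : c • ((0, 1) : K × L) = (0, c • 1) := Prod.ext (smul_zero _) rfl
    rw [this]
    exact h2 _
  have hmain := test_count (k := F1) (V := Fin n → F1) (K := K) (L := L)
    (Module.finrank_fin_fun F1) he1 hen he
    (FiniteField.finrank_extension F1 p (n - e)) hne hβ hβ2 P eblk hP (by
      intro g
      let φ : (Fin n → F1) →ₗ[F1] F :=
        (K.val.toLinearMap.comp (LinearMap.fst F1 K L)).comp g.symm.toLinearMap
      have hφ : ∀ v, φ v = ((g.symm v).1 : F) := fun v => rfl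
      have hφ1 : ∀ v, φ (cj g (bK, γ) v) = b * φ v := by
        intro v
        rw [hφ, hφ, cj_apply, g.symm_apply_apply]
        rfl
      have hw : (fun i => φ (Pi.single i 1)) ≠ 0 := by
        intro h
        have h0 : φ = 0 := by
          refine LinearMap.pi_ext' fun i => LinearMap.ext_ring ?_
          exact congrFun h i
        have h1 := congrArg (fun ψ : (Fin n → F1) →ₗ[F1] F => ψ (g (1, 0))) h0
        simp only [hφ, g.symm_apply_apply, LinearMap.zero_apply] at h1
        exact one_ne_zero (α := F) h1
      obtain ⟨v, hv⟩ := exists_not_mem_rcompl (LinearMap.toMatrixAlgEquiv' (cj g (bK, γ))) b hw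
        (functional_eigen _ φ b hφ1)
      obtain ⟨S, hS, hx⟩ := hN.2 _ hv
      exact ⟨S, hcov S hS ⟨_, hx, cor_mkA _ _ _⟩, mem_eblk.2 ⟨_, hx, blk_mkA _ _ _⟩⟩)
  rw [hF1] at hmain
  exact hmain

/-- A family of proper subrings containing the radical that covers everything is large, by a count
of the elements whose block generates a field extension of degree `n`. -/
lemma sat_lower [Finite F] {p d1 d2 : ℕ} (hp : p.Prime) (hn : 2 ≤ n) (hd1 : 1 ≤ d1)
    (hF1 : Nat.card F1 = p ^ d1) (hF2 : Nat.card F2 = p ^ d2)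
    {C : Finset (NonUnitalSubring (AGL n F1 F2))} (hC : IsRingCover _ C) (hs : ∀ S ∈ C, Sat S) :
    GLcard n (p ^ d1) ≤ C.card * (n.minFac * (p ^ d1) ^ (n * (n / n.minFac))) := by
  have : Fact p.Prime := ⟨hp⟩
  have : CharP F1 p := charP_of_pow hp hF1
  have : NeZero n := ⟨by omega⟩
  let L := FiniteField.Extension F1 p n
  have hLc : Nat.card L = p ^ (d1 * n) := by
    rw [FiniteField.natCard_extension, hF1, ← pow_mul]
  obtain ⟨β, hβ, hgen⟩ := exists_prim L hLc
  obtain ⟨ζ, hζ, hgenζ⟩ := exists_prim F2 hF2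
  have hn1 : 1 ≤ p ^ (d1 * n) - 1 := by
    have := two_le_pow hp (Nat.mul_pos hd1 (by omega : 0 < n)); omega
  have hVn : Module.finrank F1 (Fin n → F1) = n := Module.finrank_fin_fun F1
  have hgen' : ∀ W : NonUnitalSubring L, β ∈ W → ∀ x, x ∈ W := by
    intro W hW x
    by_cases hx : x = 0
    · rw [hx]; exact zero_mem W
    obtain ⟨i, rfl⟩ := hgen x hx
    have := nu_pow_mem hW (i + (p ^ (d1 * n) - 1)) (by omega)
    rwa [pow_add, hβ.pow_eq_one, mul_one] at this
  have hmain := singer_count (k := F1) (V := Fin n → F1) (L := L) (β := β)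
    ((FiniteField.finrank_extension F1 p n).trans hVn.symm) (hVn.symm ▸ hn)
    (by
      rw [eq_top_iff]
      intro x _
      exact hgen' (Algebra.adjoin F1 {β}).toSubring.toNonUnitalSubring
        (Algebra.self_mem_adjoin_singleton F1 β) x)
    (fun W hW => ⟨1, one_ne_zero, fun c => hgen' W hW _⟩)
    (C.filter fun S => eblk S ≠ ⊤) eblk (fun S hS => (Finset.mem_filter.1 hS).2) (by
      intro g
      obtain ⟨S, hS, hx⟩ := hC.2 (mkA (LinearMap.toMatrixAlgEquiv' (cj g β)) 0 ζ)
      refine ⟨S, Finset.mem_filter.2 ⟨hS, ?_⟩, mem_eblk.2 ⟨_, hx, blk_mkA _ _ _⟩⟩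
      refine eblk_ne_top hn (hs S hS) (hC.1 S hS) fun c => ?_
      by_cases hc : c = 0
      · exact ⟨0, zero_mem S, by rw [map_zero, hc]⟩
      obtain ⟨i, rfl⟩ := hgenζ c hc
      have hcard : 1 ≤ p ^ d2 - 1 := by
        have h1 : 1 < Nat.card F2 := Finite.one_lt_card
        omega
      refine ⟨_, nu_pow_mem hx (i + (p ^ d2 - 1)) (by omega), ?_⟩
      rw [map_pow, cor_mkA, pow_add, hζ.pow_eq_one, mul_one])
  rw [hVn, hF1] at hmain
  exact hmain.trans (Nat.mul_le_mul_right _ (Finset.card_filter_le _ _))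

end rest

/-! ### The lower bound for the part of a cover without complements of the radical -/

lemma prim_dvd {K : Type*} [Field K] {p t j : ℕ} (hp : p.Prime) (ht : 1 ≤ t) {η : K}
    (hη : IsPrimitiveRoot η (p ^ t - 1)) (h1 : η ^ p ^ j = η) : t ∣ j := by
  have h2 : η ^ p ^ (j % t) = η := by
    have h3 : η ^ p ^ (t * (j / t)) = η := pow_pow_mul (prim_pow_eq hp ht hη) _
    have h4 : j = t * (j / t) + j % t := (Nat.div_add_mod j t).symm
    rw [h4, pow_add, pow_mul, h3] at h1
    exact h1
  by_contra hdvd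
  have h5 : 0 < j % t := Nat.pos_of_ne_zero fun h => hdvd (Nat.dvd_of_mod_eq_zero h)
  exact prim_pow_ne hp h5 ht (Nat.mod_lt _ ht) hη h2

/-- A subring of a finite field of order `p^m` that meets the fields of order `p^(m/l)` and
`p^(m/l')` in generators, for distinct primes `l` and `l'`, is the whole field. -/
lemma eq_top_of_two {K : Type*} [Field K] [Finite K] {p m l l' : ℕ} (hp : p.Prime) (hm : 1 ≤ m)
    (hK : Nat.card K = p ^ m) (hl : l.Prime) (hl' : l'.Prime) (hll : l ≠ l') (hlm : l ∣ m)
    (hlm' : l' ∣ m) {b b' : K} (hb : IsPrimitiveRoot b (p ^ (m / l) - 1))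
    (hb' : IsPrimitiveRoot b' (p ^ (m / l') - 1)) {M : NonUnitalSubring K} (h : b ∈ M)
    (h' : b' ∈ M) : M = ⊤ := by
  have hKp : 2 ≤ p ^ m := two_le_pow hp hm
  have hfr : ∀ x : K, x ≠ 0 → x ^ (p ^ m - 1) = 1 := by
    intro x hx
    have h1 := pow_card_eq hK x
    have h2 : p ^ m = (p ^ m - 1) + 1 := by omega
    rw [h2, pow_succ] at h1
    exact mul_right_cancel₀ hx (h1.trans (one_mul x).symm)
  have hj : ∀ {l}, l.Prime → l ∣ m → 1 ≤ m / l := fun h1 h2 =>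
    Nat.div_pos (Nat.le_of_dvd hm h2) h1.pos
  have hone : (1 : K) ∈ M := by
    rw [← hfr b (prim_ne_zero hp (hj hl hlm) hb)]
    exact nu_pow_mem h _ (by omega)
  let E : Subfield K :=
    { carrier := M
      mul_mem' := mul_mem
      one_mem' := hone
      add_mem' := add_mem
      zero_mem' := zero_mem M
      neg_mem' := neg_mem
      inv_mem' := fun x hx => by
        by_cases hx0 : x = 0
        · rw [hx0, inv_zero]; exact zero_mem M
        have h1 : x⁻¹ = x ^ ((p ^ m - 1) + (p ^ m - 1) - 1) := by
          refine inv_eq_of_mul_eq_one_right ?_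
          rw [← pow_succ', show (p ^ m - 1) + (p ^ m - 1) - 1 + 1 = (p ^ m - 1) + (p ^ m - 1) by
            omega, pow_add, hfr x hx0, one_mul]
        rw [h1]
        exact nu_pow_mem hx _ (by omega) }
  have hcE : ∃ s, Nat.card E = p ^ s := by
    have h1 := Module.natCard_eq_pow_finrank (K := E) (V := K)
    have h2 : Nat.card E ∣ p ^ m := by
      rw [← hK, h1]
      exact dvd_pow_self _ Module.finrank_pos.ne'
    obtain ⟨s, -, hs⟩ := (Nat.dvd_prime_pow hp).1 h2
    exact ⟨s, hs⟩
  obtain ⟨s, hs⟩ := hcE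
  have hs1 : 1 ≤ s := by
    by_contra h0
    have h1 : 1 < Nat.card E := Finite.one_lt_card
    rw [hs, show s = 0 by omega] at h1
    simp at h1
  have hmc : m = s * Module.finrank E K := by
    have h1 := Module.natCard_eq_pow_finrank (K := E) (V := K)
    rw [hK, hs, ← pow_mul] at h1
    exact Nat.pow_right_injective hp.two_le h1
  have hkey : ∀ {l b}, l.Prime → l ∣ m → IsPrimitiveRoot b (p ^ (m / l) - 1) → b ∈ M →
      Module.finrank E K = 1 ∨ Module.finrank E K = l := by
    intro l b hl hlm hb hbM
    have h1 : b ^ p ^ s = b := congrArg Subtype.val (pow_card_eq hs (⟨b, hbM⟩ : E))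
    obtain ⟨t, ht⟩ := prim_dvd hp (hj hl hlm) hb h1
    refine (Nat.dvd_prime hl).1 ⟨t, ?_⟩
    obtain ⟨j, rfl⟩ := hlm
    rw [Nat.mul_div_cancel_left _ hl.pos] at ht
    have hj0 : 0 < j := Nat.pos_of_ne_zero (by rintro rfl; omega)
    refine Nat.eq_of_mul_eq_mul_right hj0 ?_
    rw [hmc, ht]; ring
  have hone' : Module.finrank E K = 1 := by
    rcases hkey hl hlm hb h with h1 | h1
    · exact h1
    · rcases hkey hl' hlm' hb' h' with h2 | h2
      · exact h2
      · exact absurd (h1.symm.trans h2) hll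
  have hcard : Nat.card E = Nat.card K := by
    rw [Module.natCard_eq_pow_finrank (K := E) (V := K), hone', pow_one]
  rw [NonUnitalSubring.eq_top_iff']
  intro x
  have hsurj : Function.Surjective (Subtype.val : E → K) :=
    (Nat.bijective_iff_injective_and_card _).2 ⟨Subtype.val_injective, hcard⟩ |>.2
  obtain ⟨y, rfl⟩ := hsurj x
  exact y.2

/-- The contribution of subrings without stable subspace in `test_count` is at most `2 ^ (-s)` of the
number of all conjugates. -/
lemma singular_count_le {Q n e s : ℕ} (hQ : 2 ≤ Q) (hen : e ≤ n)
    (h : n + n * (n / 2) + n * e + 4 + s ≤ n * n + e * e) :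
    2 ^ s * (Q ^ n * Q ^ (n * (n / 2)) * gaussBinom Q n e) ≤ GLcard n Q := by
  have h1 := gaussBinom_le hQ hen
  have h2 := four_GLcard hQ n
  have hpos : 0 < Q ^ (e * e) := by positivity
  have h3 : 4 * (2 ^ s * (Q ^ n * Q ^ (n * (n / 2)) * gaussBinom Q n e)) ≤ Q ^ (n * n) := by
    refine Nat.le_of_mul_le_mul_right ?_ hpos
    calc 4 * (2 ^ s * (Q ^ n * Q ^ (n * (n / 2)) * gaussBinom Q n e)) * Q ^ (e * e)
        = 4 * 2 ^ s * (Q ^ n * Q ^ (n * (n / 2))) * (gaussBinom Q n e * Q ^ (e * e)) := by ring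
      _ ≤ 4 * 2 ^ s * (Q ^ n * Q ^ (n * (n / 2))) * (4 * Q ^ (n * e)) := Nat.mul_le_mul_left _ h1
      _ = 2 ^ (4 + s) * Q ^ (n + n * (n / 2) + n * e) := by
        rw [pow_add, pow_add, pow_add]; ring
      _ ≤ Q ^ (4 + s) * Q ^ (n + n * (n / 2) + n * e) :=
        Nat.mul_le_mul_right _ (Nat.pow_le_pow_left hQ _)
      _ = Q ^ (n + n * (n / 2) + n * e + 4 + s) := by rw [← pow_add]; congr 1; ring
      _ ≤ Q ^ (n * n + e * e) := Nat.pow_le_pow_right (by omega) h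
      _ = Q ^ (n * n) * Q ^ (e * e) := pow_add _ _ _
  omega

lemma exponent_le {n e : ℕ} (hn : 7 ≤ n) : n + n * (n / 2) + n * e + 5 ≤ n * n + e * e := by
  have h1 : 2 * (n * (n / 2)) ≤ n * n := by
    have := Nat.mul_div_le n 2
    nlinarith
  zify at *
  nlinarith [sq_nonneg (2 * (e : ℤ) - n)]

/-- The hypothesis `d < n - n / n.minFac` says that `n - d` exceeds the largest proper divisor of
`n`. -/
lemma not_dvd_of_lt {n d : ℕ} (hn : 2 ≤ n) (hd : 1 ≤ d) (hdn : d < n - n / n.minFac) :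
    ¬ (n - d ∣ n) := by
  rintro ⟨c, hc⟩
  have ha := Nat.minFac_pos n
  have h1 : n / n.minFac < n - d := by omega
  have h2 : n < (n - d) * n.minFac := (Nat.div_lt_iff_lt_mul ha).1 h1
  have h3 : c < n.minFac := by
    by_contra! h
    have := Nat.mul_le_mul_left (n - d) h
    omega
  have h4 : 2 ≤ c := by
    by_contra! h
    interval_cases c <;> omega
  have := Nat.minFac_le_of_dvd h4 (Dvd.intro_left (n - d) hc.symm)
  exact absurd h3 (by omega)

lemma ne_two_mul {n d e : ℕ} (hd : 1 ≤ e) (hed : e ≤ d) (hdn : d < n - n / n.minFac) :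
    n ≠ 2 * e := by
  rintro rfl
  have : (2 * e).minFac = 2 := (Nat.minFac_eq_two_iff _).2 ⟨e, rfl⟩
  rw [this] at hdn
  omega

lemma six_le_of_gcd {n d : ℕ} (hn : 3 ≤ n) (hd : 1 ≤ d) (hdn : d < n - n / n.minFac)
    (hg : ¬ n.Coprime d) : 7 ≤ n ∨ (n = 6 ∧ d = 2) := by
  by_contra! h
  obtain ⟨h1, h2⟩ := h
  have hlt : d < n := hdn.trans_le (Nat.sub_le _ _)
  have hp : ¬ n.Prime := fun hp => hg ((Nat.Prime.coprime_iff_not_dvd hp).2 fun hdv =>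
    absurd (Nat.le_of_dvd hd hdv) (by omega))
  have h6 : n ≤ 6 := by omega
  interval_cases n
  · exact hp (by norm_num)
  · norm_num [Nat.minFac] at hdn
    interval_cases d
    exact hg (by norm_num)
  · exact hp (by norm_num)
  · norm_num at hdn
    interval_cases d
    · exact hg (by norm_num)
    · exact h2 rfl rfl

lemma card_three_le {α : Type*} [DecidableEq α] (P : Finset α) (p1 p2 p3 : α → Prop)
    [DecidablePred p1] [DecidablePred p2] [DecidablePred p3]
    (h12 : ∀ x, p1 x → ¬ p2 x) (h13 : ∀ x, p1 x → ¬ p3 x) (h23 : ∀ x, p2 x → ¬ p3 x) :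
    (P.filter p1).card + (P.filter p2).card + (P.filter p3).card ≤ P.card := by
  rw [← Finset.card_union_of_disjoint (Finset.disjoint_filter.2 fun x _ => h12 x),
    ← Finset.card_union_of_disjoint]
  · refine Finset.card_le_card fun x hx => ?_
    simp only [Finset.mem_union, Finset.mem_filter] at hx
    tauto
  · rw [Finset.disjoint_union_left]
    exact ⟨Finset.disjoint_filter.2 fun x _ => h13 x, Finset.disjoint_filter.2 fun x _ => h23 x⟩

section restlower

variable {n : ℕ} {F : Type} [Field F] {F1 F2 : Subfield F}

/-- The subring of all corners of elements of `S`. -/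
def corS (S : NonUnitalSubring (AGL n F1 F2)) : NonUnitalSubring F2 :=
  S.map (cor : AGL n F1 F2 →+* F2)

lemma mem_corS {S : NonUnitalSubring (AGL n F1 F2)} {b : F2} :
    b ∈ corS S ↔ ∃ s ∈ S, cor s = b := Iff.rfl

/-- The lower bound for families of proper subrings covering all elements that lie in no complement
of the radical. Elements whose corner generates `F2` force `gaussBinom n d` members with proper
block. For each prime divisor `l` of `d`, let `c l` generate the subfield of index `l` in `F2`. If
every `c l` occurs as a corner in a member with full block, these members are distinct, since a
subring with full block cannot have all corners. If some `c l` does not, then elements with corner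
`c l`, which has degree `e < d` over `F1`, force a further `gaussBinom n e ≥ ω(d)` members with
proper block, whose stable subspaces have dimension `e` or `n - e` rather than `d` or `n - d`. -/
lemma rest_lower [Finite F] {p d1 d2 d : ℕ} (hp : p.Prime) (hd1 : 1 ≤ d1) (hd2 : 1 ≤ d2)
    (hF1 : Nat.card F1 = p ^ d1) (hF2 : Nat.card F2 = p ^ d2) (hF : Nat.card F = p ^ (d1 * d))
    (hL : d1 * d = Nat.lcm d1 d2) (hcomp : F1 ⊔ F2 = ⊤) (hn : 3 ≤ n)
    (hdn : d < n - n / n.minFac) {N : Finset (NonUnitalSubring (AGL n F1 F2))} (hN : IsRest N) :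
    gaussBinom (p ^ d1) n d + d.primeFactors.card ≤ N.card := by
  have : CharP F p := charP_of_pow hp hF
  have : Fact p.Prime := ⟨hp⟩
  have hfr : Module.finrank F1 F = d := finrank_of_card hp hd1 hF1 hF
  have hd : 1 ≤ d := by rw [← hfr]; exact Module.finrank_pos
  have hQ : 2 ≤ p ^ d1 := two_le_pow hp hd1
  have hdn' : d < n := hdn.trans_le (Nat.sub_le _ _)
  have hdd2 : d ∣ d2 := by
    refine ⟨Nat.gcd d1 d2, ?_⟩
    have := Nat.gcd_mul_lcm d1 d2
    rw [← hL] at this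
    exact Nat.eq_of_mul_eq_mul_left hd1 (by rw [← this]; ring)
  obtain ⟨ζ, hζ, hgenζ⟩ := exists_prim F2 hF2
  have hcard2 : 1 ≤ p ^ d2 - 1 := by have := two_le_pow hp hd2; omega
  set P := N.filter fun S => eblk S ≠ ⊤ with hPdef
  set Q' := N.filter fun S => ¬ eblk S ≠ ⊤ with hQdef
  have hPQ : P.card + Q'.card = N.card := Finset.card_filter_add_card_filter_not _
  have hP : ∀ S ∈ P, eblk S ≠ ⊤ := fun S hS => (Finset.mem_filter.1 hS).2
  have hcorQ : ∀ S ∈ Q', corS S ≠ ⊤ := by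
    intro S hS h
    obtain ⟨h1, h2⟩ := Finset.mem_filter.1 hS
    refine h2 (eblk_ne_top (by omega) (hN.1 S h1).2 (hN.1 S h1).1 fun c => ?_)
    rw [← mem_corS, h]
    exact NonUnitalSubring.mem_top c
  -- elements whose corner generates `F2`
  have hζF : IsPrimitiveRoot (ζ : F) (p ^ d2 - 1) :=
    hζ.map_of_injective (f := algebraMap F2 F) (algebraMap F2 F).injective
  have hadj : Module.finrank F1 (IntermediateField.adjoin F1 {(ζ : F)}) = d := by
    have h1 : (IntermediateField.adjoin F1 {(ζ : F)}) = ⊤ := by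
      set E := IntermediateField.adjoin F1 {(ζ : F)} with hE
      have h2 : F1 ≤ E.toSubfield := fun x hx => E.algebraMap_mem ⟨x, hx⟩
      have h3 : F2 ≤ E.toSubfield := fun x hx => by
        change x ∈ E
        by_cases hx0 : x = 0
        · rw [hx0]; exact zero_mem E
        obtain ⟨i, hi⟩ := hgenζ ⟨x, hx⟩ (fun h => hx0 (congrArg Subtype.val h))
        have h4 : x = (ζ : F) ^ i := (congrArg Subtype.val hi).symm
        rw [h4]
        exact pow_mem (IntermediateField.mem_adjoin_simple_self F1 (ζ : F)) i
      rw [eq_top_iff]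
      intro x _
      have h5 : x ∈ F1 ⊔ F2 := hcomp ▸ Subfield.mem_top x
      exact (sup_le h2 h3) h5
    rw [h1, IntermediateField.finrank_top', hfr]
  obtain ⟨hA1, hA2⟩ := rest_count hp hd1 hF1 hd2 hζF hadj hdn' (ne_two_mul hd le_rfl hdn) hN P hP
    (by
      rintro S hS ⟨x, hx, hxc⟩
      refine Finset.mem_filter.2 ⟨hS, eblk_ne_top (by omega) (hN.1 S hS).2 (hN.1 S hS).1 fun c => ?_⟩
      by_cases hc : c = 0
      · exact ⟨0, zero_mem S, by rw [map_zero, hc]⟩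
      obtain ⟨i, rfl⟩ := hgenζ c hc
      refine ⟨_, nu_pow_mem hx (i + (p ^ d2 - 1)) (by omega), ?_⟩
      rw [map_pow, hxc, pow_add, hζ.pow_eq_one, mul_one])
  set γ := GLcard n (p ^ d1) with hγ
  have hγ0 : 0 < γ := GLcard_pos hQ n
  set m1 := (P.filter fun S => sdim (eblk S) = d ∨ sdim (eblk S) = n - d).card with hm1
  set m3 := (P.filter fun S => sdim (eblk S) = 0).card with hm3
  have hm13 : m1 + m3 ≤ P.card := by
    have := card_three_le P (fun S => sdim (eblk S) = d ∨ sdim (eblk S) = n - d)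
      (fun _ => False) (fun S => sdim (eblk S) = 0) (fun _ _ h => h) (fun S h => by omega)
      (fun _ h => h.elim)
    omega
  have hNd : gaussBinom (p ^ d1) n d ≤ m1 + m3 := by
    by_cases hg : n.Coprime d
    · exact (hA1 hg).trans (Nat.le_add_right _ _)
    · have hX : 2 ^ 0 * ((p ^ d1) ^ n * (p ^ d1) ^ (n * (n / 2)) * gaussBinom (p ^ d1) n d) ≤ γ := by
        refine singular_count_le hQ hdn'.le ?_
        rcases six_le_of_gcd hn hd hdn hg with h | ⟨rfl, rfl⟩
        · have := exponent_le (e := d) h; omega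
        · norm_num
      rw [pow_zero, one_mul] at hX
      have h1 := Nat.mul_le_mul_left m3 hX
      refine Nat.le_of_mul_le_mul_left ?_ hγ0
      calc γ * gaussBinom (p ^ d1) n d ≤ _ := hA2
        _ ≤ m1 * γ + m3 * γ := Nat.add_le_add_left h1 _
        _ = γ * (m1 + m3) := by ring
  -- elements whose corner generates a smaller field
  let c : ℕ → F2 := fun l => ζ ^ ((p ^ d2 - 1) / (p ^ (d2 / l) - 1))
  have hc : ∀ l ∈ d.primeFactors, IsPrimitiveRoot (c l) (p ^ (d2 / l) - 1) := by
    intro l hl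
    obtain ⟨hl1, hl2, -⟩ := Nat.mem_primeFactors.1 hl
    refine hζ.pow (by omega) ?_
    refine (Nat.div_mul_cancel ?_).symm
    obtain ⟨j, hj⟩ := hl2.trans hdd2
    rw [hj, Nat.mul_div_cancel_left _ hl1.pos, mul_comm, pow_mul]
    simpa using Nat.sub_dvd_pow_sub_pow (p ^ j) 1 l
  have hjl : ∀ l ∈ d.primeFactors, 1 ≤ d2 / l := by
    intro l hl
    obtain ⟨hl1, hl2, -⟩ := Nat.mem_primeFactors.1 hl
    exact Nat.div_pos (Nat.le_of_dvd hd2 (hl2.trans hdd2)) hl1.pos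
  by_cases hcase : ∀ l : d.primeFactors, ∃ S ∈ Q', c l ∈ corS S
  · choose f hf1 hf2 using hcase
    have hinj : Function.Injective f := by
      intro l l' h
      by_contra hne
      obtain ⟨hl1, hl2, -⟩ := Nat.mem_primeFactors.1 l.2
      obtain ⟨hl1', hl2', -⟩ := Nat.mem_primeFactors.1 l'.2
      exact hcorQ _ (hf1 l) (eq_top_of_two hp hd2 hF2 hl1 hl1' (fun h => hne (Subtype.ext h))
        (hl2.trans hdd2) (hl2'.trans hdd2) (hc l l.2) (hc l' l'.2) (hf2 l) (h ▸ hf2 l'))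
    have h1 : d.primeFactors.card ≤ Q'.card := by
      have h2 : (Finset.univ.image f).card = d.primeFactors.card := by
        rw [Finset.card_image_of_injective _ hinj, Finset.card_univ, Fintype.card_coe]
      rw [← h2]
      refine Finset.card_le_card fun S hS => ?_
      obtain ⟨l, -, rfl⟩ := Finset.mem_image.1 hS
      exact hf1 l
    omega
  · push Not at hcase
    obtain ⟨⟨l, hl⟩, hlQ⟩ := hcase
    obtain ⟨hl1, hl2, -⟩ := Nat.mem_primeFactors.1 hl
    have hcF : IsPrimitiveRoot (c l : F) (p ^ (d2 / l) - 1) :=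
      (hc l hl).map_of_injective (f := algebraMap F2 F) (algebraMap F2 F).injective
    obtain ⟨e, he⟩ : ∃ e, Module.finrank F1 (IntermediateField.adjoin F1 {(c l : F)}) = e :=
      ⟨_, rfl⟩
    have he1 : 1 ≤ e := by rw [← he]; exact Module.finrank_pos
    have hedl : e ∣ d / l := by
      rw [← he]
      refine finrank_adjoin_dvd hp hd1 hF1 ?_
      obtain ⟨j, hj⟩ : d2 / l ∣ d1 * (d / l) := by
        rw [← Nat.mul_div_assoc _ hl2, hL]
        exact Nat.div_dvd_div (hl2.trans hdd2) (Nat.dvd_lcm_right d1 d2)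
      rw [hj]
      exact pow_pow_mul (prim_pow_eq hp (hjl l hl) hcF) j
    have hed : e ∣ d := hedl.trans (Nat.div_dvd_of_dvd hl2)
    have hed' : e < d := (Nat.le_of_dvd (Nat.div_pos (Nat.le_of_dvd hd hl2) hl1.pos) hedl).trans_lt
      (Nat.div_lt_self hd hl1.one_lt)
    have hend : e ≠ n - d := by
      intro h
      refine not_dvd_of_lt (by omega) hd hdn ?_
      rw [h] at hed
      have := dvd_add hed (dvd_refl (n - d))
      rwa [Nat.add_sub_cancel' hdn'.le] at this
    obtain ⟨hB1, hB2⟩ := rest_count hp hd1 hF1 (hjl l hl) hcF he (hed'.trans hdn')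
      (ne_two_mul he1 hed'.le hdn) hN P hP (by
        rintro S hS ⟨x, hx, hxc⟩
        by_contra hSP
        refine hlQ S (Finset.mem_filter.2 ⟨hS, fun h => hSP (Finset.mem_filter.2 ⟨hS, h⟩)⟩)
          (mem_corS.2 ⟨x, hx, hxc⟩))
    rw [← hγ, ← hm3] at hB2
    set m2 := (P.filter fun S => sdim (eblk S) = e ∨ sdim (eblk S) = n - e).card with hm2
    have hm123 : m1 + m2 + m3 ≤ P.card :=
      card_three_le P (fun S => sdim (eblk S) = d ∨ sdim (eblk S) = n - d)
        (fun S => sdim (eblk S) = e ∨ sdim (eblk S) = n - e) (fun S => sdim (eblk S) = 0)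
        (fun S h => by omega) (fun S h => by omega) (fun S h => by omega)
    have hω : d.primeFactors.card ≤ gaussBinom (p ^ d1) n e :=
      (primeFactors_card_le d).trans (hdn'.le.trans
        (le_gaussBinom (by omega) n e he1 (hed'.trans hdn')))
    by_cases hg : n.Coprime e
    · have := hB1 hg
      omega
    · have hgd : ¬ n.Coprime d := fun h => hg (h.coprime_dvd_right hed)
      have hn7 : 7 ≤ n := by
        rcases six_le_of_gcd hn hd hdn hgd with h | ⟨rfl, rfl⟩
        · exact h
        · interval_cases e
          exact absurd (by norm_num) hg
      have hXd := singular_count_le (s := 1) hQ hdn'.le (exponent_le (e := d) hn7)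
      have hXe := singular_count_le (s := 1) hQ (hed'.trans hdn').le (exponent_le (e := e) hn7)
      rw [← hγ, pow_one] at hXd hXe
      have h1 := Nat.mul_le_mul_left m3 hXd
      have h2 := Nat.mul_le_mul_left m3 hXe
      have h3 : γ * (gaussBinom (p ^ d1) n d + gaussBinom (p ^ d1) n e) ≤ γ * (m1 + m2 + m3) := by
        clear_value m1 m2 m3 γ
        generalize (p ^ d1) ^ n * (p ^ d1) ^ (n * (n / 2)) * gaussBinom (p ^ d1) n d = X at *
        generalize (p ^ d1) ^ n * (p ^ d1) ^ (n * (n / 2)) * gaussBinom (p ^ d1) n e = Y at *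
        linarith [mul_add γ (gaussBinom (p ^ d1) n d) (gaussBinom (p ^ d1) n e),
          mul_left_comm m3 2 X, mul_left_comm m3 2 Y, mul_add γ (m1 + m2) m3, mul_add γ m1 m2,
          mul_comm γ m1, mul_comm γ m2, mul_comm γ m3]
      have := Nat.le_of_mul_le_mul_left h3 hγ0
      omega

end restlower

/-! ### A small cover of the endomorphism ring of a finite vector space -/

section endCover
variable {k V : Type*} [Field k] [Finite k] [AddCommGroup V] [Module k V] [Finite V]

/-- An embedding of the field `K` into the endomorphism ring makes `V` a vector space over `K`, and it
is recovered from any of the `K`-bases of this space. -/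
lemma card_fiber_algHom {K : Type*} [Field K] [Finite K] [Algebra k K] {a m : ℕ} (ha : 1 ≤ a)
    (hK : Module.finrank k K = a) (hV : Module.finrank k V = a * m)
    (φ : K →ₐ[k] Module.End k V) :
    GLcard m (Nat.card K) ≤
      Nat.card {g : (Fin m → K) ≃ₗ[k] V // ∀ (c : K) (b : Fin m → K), g (c • b) = φ c (g b)} := by
  have : Module.Finite k V := Module.Finite.of_finite
  have : Module.Finite k K := Module.Finite.of_finite
  let _ : Module K V := Module.compHom V φ.toRingHom
  have hsmul : ∀ (a : K) (v : V), a • v = φ a v := fun a v => rfl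
  have : IsScalarTower k K V := ⟨fun c a v => by
    rw [hsmul, hsmul, map_smul]; rfl⟩
  have : Module.Finite K V := Module.Finite.of_finite
  have hmul := Module.finrank_mul_finrank k K V
  rw [hK, hV] at hmul
  have hm : Module.finrank K V = m := Nat.eq_of_mul_eq_mul_left (by omega) hmul
  have h1 : Nat.card ((Fin m → K) ≃ₗ[K] V) = GLcard m (Nat.card K) := by
    rw [card_linearEquiv (by rw [Module.finrank_fin_fun, hm]), hm]
  rw [← h1]
  have := finite_equiv k V (Fin m → K)
  refine Nat.card_le_card_of_injective
    (fun g : (Fin m → K) ≃ₗ[K] V => ⟨g.restrictScalars k, fun c b => ?_⟩) ?_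
  · exact g.map_smul c b
  · intro g g' h
    ext1 b
    have := congrArg (fun t => t.1 b) h
    exact this

lemma finite_algHom {K : Type*} [Field K] [Finite K] [Algebra k K] :
    Finite (K →ₐ[k] Module.End k V) :=
  have := finite_end k V
  Finite.of_injective (fun f => (f : K → Module.End k V)) DFunLike.coe_injective

/-- Double counting of the ways to present `V` as a coordinate space over an extension field. -/
lemma card_algHom_le {K : Type*} [Field K] [Finite K] [Algebra k K] {a m : ℕ} (ha : 1 ≤ a)
    (hK : Module.finrank k K = a) (hV : Module.finrank k V = a * m) :
    Nat.card (K →ₐ[k] Module.End k V) * GLcard m (Nat.card K) ≤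
      GLcard (Module.finrank k V) (Nat.card k) := by
  have := finite_equiv k V (Fin m → K)
  have : Finite (K →ₐ[k] Module.End k V) := finite_algHom
  have := Fintype.ofFinite (K →ₐ[k] Module.End k V)
  have : Module.Finite k K := Module.Finite.of_finite
  have hfr : Module.finrank k (Fin m → K) = Module.finrank k V := by
    rw [Module.finrank_pi_fintype, hV, hK]; simp [mul_comm]
  rw [← card_linearEquiv (V := V) hfr]
  have h1 : Nat.card (Σ φ : K →ₐ[k] Module.End k V,
      {g : (Fin m → K) ≃ₗ[k] V // ∀ (c : K) (b : Fin m → K), g (c • b) = φ c (g b)}) ≤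
      Nat.card ((Fin m → K) ≃ₗ[k] V) := by
    refine Nat.card_le_card_of_injective (fun x => x.2.1) ?_
    rintro ⟨φ, g, hg⟩ ⟨φ', g', hg'⟩ h
    change g = g' at h
    subst h
    have : φ = φ' := by
      ext c v
      obtain ⟨b, rfl⟩ := g.surjective v
      rw [← hg, ← hg']
    subst this
    rfl
  refine le_trans ?_ h1
  rw [Nat.card_sigma, Nat.card_eq_fintype_card]
  refine le_trans ?_ (Finset.sum_le_sum fun φ _ => card_fiber_algHom ha hK hV φ)
  rw [Finset.sum_const, Finset.card_univ, smul_eq_mul]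

/-- The centraliser of a copy of an extension field of the scalars. -/
def centE {K : Type*} [Field K] [Algebra k K] (φ : K →ₐ[k] Module.End k V) :
    NonUnitalSubring (Module.End k V) :=
  (Subring.centralizer (Set.range φ)).toNonUnitalSubring

lemma mem_centE {K : Type*} [Field K] [Algebra k K] {φ : K →ₐ[k] Module.End k V}
    {f : Module.End k V} : f ∈ centE φ ↔ ∀ c, φ c * f = f * φ c := by
  refine ⟨fun h c => Subring.mem_centralizer_iff.1 h _ ⟨c, rfl⟩, fun h => ?_⟩
  refine Subring.mem_centralizer_iff.2 ?_
  rintro _ ⟨c, rfl⟩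
  exact h c

lemma centE_ne_top {K : Type*} [Field K] [Finite K] [Algebra k K]
    (hV : 1 ≤ Module.finrank k V) (hK : 2 ≤ Module.finrank k K)
    (φ : K →ₐ[k] Module.End k V) : centE φ ≠ ⊤ := by
  intro h
  have : Module.Finite k K := Module.Finite.of_finite
  have : Nontrivial V := Module.nontrivial_of_finrank_pos (R := k) (by omega)
  have hbot : (⊥ : Subalgebra k K) = ⊤ := by
    refine top_le_iff.1 fun c _ => ?_
    have h1 : φ c ∈ Subalgebra.center k (Module.End k V) := by
      rw [Subalgebra.mem_center_iff]
      intro f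
      have : f ∈ centE φ := h ▸ NonUnitalSubring.mem_top _
      exact (mem_centE.1 this c).symm
    rw [Algebra.IsCentral.center_eq_bot, Algebra.mem_bot] at h1
    obtain ⟨r, hr⟩ := h1
    rw [Algebra.mem_bot]
    refine ⟨r, φ.toRingHom.injective ?_⟩
    exact (φ.commutes r).trans hr
  have := Subalgebra.bot_eq_top_iff_finrank_eq_one.1 hbot
  omega

/-- Galois conjugate copies of an extension field have the same centraliser. -/
lemma card_centE_le [Nontrivial V] {K : Type*} [Field K] [Finite K] [Algebra k K]
    [Fintype (K →ₐ[k] Module.End k V)] :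
    Module.finrank k K * (Finset.univ.image
      (centE : (K →ₐ[k] Module.End k V) → NonUnitalSubring (Module.End k V))).card ≤
      Nat.card (K →ₐ[k] Module.End k V) := by
  have : Module.Finite k K := Module.Finite.of_finite
  rw [Nat.card_eq_fintype_card]
  refine Finset.mul_card_image_le_card _ _ fun S hS => ?_
  obtain ⟨φ, -, rfl⟩ := Finset.mem_image.1 hS
  have hg : Nat.card (K ≃ₐ[k] K) = Module.finrank k K := IsGalois.card_aut_eq_finrank k K
  have : Fintype (K ≃ₐ[k] K) := Fintype.ofFinite _
  rw [← hg, Nat.card_eq_fintype_card, ← Finset.card_univ]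
  refine Finset.card_le_card_of_injOn (fun σ => φ.comp (σ : K →ₐ[k] K)) ?_ ?_
  · intro σ _
    simp only [Finset.coe_filter, Finset.mem_univ, true_and, Set.mem_ofPred_eq]
    ext f
    rw [mem_centE, mem_centE]
    refine ⟨fun h c => ?_, fun h c => h _⟩
    have := h (σ.symm c)
    simpa using this
  · intro σ _ σ' _ h
    ext c
    exact φ.toRingHom.injective (DFunLike.congr_fun h c)

/-- A polynomial of degree at most `j` annihilating a nonzero vector gives an invariant subspace of
dimension at most `j`, namely the cyclic one. -/
lemma exists_invariant_le (A : Module.End k V) {g : Polynomial k} {j : ℕ} (hg : g.Monic)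
    (hj : g.natDegree ≤ j) {v : V} (hv : v ≠ 0)
    (hgv : Polynomial.aeval A g v = 0) :
    ∃ T : Submodule k V, T ≠ ⊥ ∧ Module.finrank k T ≤ j ∧ ∀ w ∈ T, A w ∈ T := by
  have : Module.Finite k V := Module.Finite.of_finite
  let ev : Polynomial k →ₗ[k] V :=
    (LinearMap.applyₗ v).comp (Polynomial.aeval A).toLinearMap
  have hev : ∀ q, ev q = Polynomial.aeval A q v := fun q => rfl
  have h0 : ∀ q, ev (g * q) = 0 := fun q => by
    rw [hev, mul_comm, map_mul, Module.End.mul_apply, hgv, map_zero]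
  have hmod : ∀ q, ev q = ev (q %ₘ g) := fun q => by
    conv_lhs => rw [← Polynomial.modByMonic_add_div q g]
    rw [map_add, h0, add_zero]
  have hmem : ∀ q, ev q ∈ (Polynomial.degreeLT k g.natDegree).map ev := fun q => by
    rw [hmod]
    refine Submodule.mem_map_of_mem ?_
    rw [Polynomial.mem_degreeLT, ← Polynomial.degree_eq_natDegree hg.ne_zero]
    exact Polynomial.degree_modByMonic_lt _ hg
  refine ⟨(Polynomial.degreeLT k g.natDegree).map ev, ?_, ?_, ?_⟩
  · intro h
    have := hmem 1
    rw [h, Submodule.mem_bot, hev, map_one, Module.End.one_apply] at this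
    exact hv this
  · have e := Polynomial.degreeLTEquiv k g.natDegree
    have : Module.Finite k (Polynomial.degreeLT k g.natDegree) := Module.Finite.equiv e.symm
    refine (Submodule.finrank_map_le _ _).trans ?_
    rw [e.finrank_eq]
    simpa using hj
  · rintro _ ⟨q, -, rfl⟩
    have : A (ev q) = ev (Polynomial.X * q) := by
      rw [hev, hev, map_mul, Polynomial.aeval_X, Module.End.mul_apply]
    rw [this]
    exact hmem _

/-- An endomorphism either stabilises a nonzero subspace of at most half the dimension or generates a field
of maximal degree. -/
lemma irreducible_or_invariant (A : Module.End k V) (hV : 1 ≤ Module.finrank k V) :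
    (Irreducible (minpoly k A) ∧ (minpoly k A).natDegree = Module.finrank k V) ∨
    ∃ T : Submodule k V, T ≠ ⊥ ∧ Module.finrank k T ≤ Module.finrank k V / 2 ∧
      ∀ w ∈ T, A w ∈ T := by
  have : Module.Finite k V := Module.Finite.of_finite
  have : Nontrivial V := Module.nontrivial_of_finrank_pos (R := k) (by omega)
  have hAint : IsIntegral k A := Algebra.IsIntegral.isIntegral A
  have hmon := minpoly.monic hAint
  have hdeg : (minpoly k A).natDegree ≤ Module.finrank k V := by
    rw [← LinearMap.charpoly_natDegree A]
    exact Polynomial.natDegree_le_of_dvd (LinearMap.minpoly_dvd_charpoly A)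
      (LinearMap.charpoly_monic A).ne_zero
  have h1 : minpoly k A ≠ 1 := minpoly.ne_one k A
  by_cases hirr : Irreducible (minpoly k A)
  · obtain ⟨⟨r, hr⟩, -⟩ := card_centralizer_le A hirr
    by_cases hlt : (minpoly k A).natDegree ≤ Module.finrank k V / 2
    · right
      obtain ⟨v, hv⟩ := exists_ne (0 : V)
      exact exists_invariant_le A hmon hlt hv (by rw [minpoly.aeval]; rfl)
    · left
      refine ⟨hirr, ?_⟩
      have hr1 : r = 1 := by
        rcases r with _ | _ | r
        · omega
        · rfl
        · exfalso
          have : (minpoly k A).natDegree * 2 ≤ Module.finrank k V := by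
            rw [hr]; exact Nat.mul_le_mul_left _ (by omega)
          omega
      rw [hr, hr1, mul_one]
  · right
    rw [hmon.irreducible_iff_natDegree'] at hirr
    push Not at hirr
    obtain ⟨f, g, hf, hg, hfg, hgd⟩ := hirr h1
    rw [Finset.mem_Ioc] at hgd
    have hninj : ∃ v : V, v ≠ 0 ∧ Polynomial.aeval A g v = 0 := by
      by_contra hcon
      push Not at hcon
      have hz : Polynomial.aeval A f = 0 := by
        ext w
        by_contra hw
        refine hcon _ hw ?_
        rw [← Module.End.mul_apply, ← map_mul, mul_comm, hfg, minpoly.aeval]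
        rfl
      have h3 := Polynomial.natDegree_le_of_dvd (minpoly.dvd k A hz) hf.ne_zero
      have h4 := congrArg Polynomial.natDegree hfg
      rw [hf.natDegree_mul hg] at h4
      omega
    obtain ⟨v, hv, hgv⟩ := hninj
    exact exists_invariant_le A hg (hgd.2.trans (Nat.div_le_div_right hdeg)) hv hgv

/-- An endomorphism generating a field of maximal degree centralises a copy of every extension field
whose degree divides the dimension. -/
lemma exists_mem_centE {K : Type*} [Field K] [Finite K] [Algebra k K]
    (hK : Module.finrank k K ∣ Module.finrank k V) (A : Module.End k V)
    (hirr : Irreducible (minpoly k A)) (hdeg : (minpoly k A).natDegree = Module.finrank k V) :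
    ∃ φ : K →ₐ[k] Module.End k V, A ∈ centE φ := by
  set h := minpoly k A with hh
  have : Fact (Irreducible h) := ⟨hirr⟩
  let φ : AdjoinRoot h →ₐ[k] Module.End k V :=
    Ideal.Quotient.liftₐ (Ideal.span {h}) (Polynomial.aeval A) (by
      intro p hp
      obtain ⟨r, rfl⟩ := Ideal.mem_span_singleton.1 hp
      rw [map_mul, hh, minpoly.aeval, zero_mul])
  have hφ : ∀ p, φ (AdjoinRoot.mk h p) = Polynomial.aeval A p := fun p => rfl
  have hL : Module.finrank k (AdjoinRoot h) = h.natDegree := by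
    rw [(AdjoinRoot.powerBasis hirr.ne_zero).finrank, AdjoinRoot.powerBasis_dim]
  have : Module.Finite k (AdjoinRoot h) := (AdjoinRoot.powerBasis hirr.ne_zero).finite
  have : Finite (AdjoinRoot h) := Module.finite_of_finite k
  obtain ⟨ι⟩ := FiniteField.nonempty_algHom_of_finrank_dvd (F := k) (K := K) (L := AdjoinRoot h)
    (by rw [hL, hdeg]; exact hK)
  refine ⟨φ.comp ι, mem_centE.2 fun c => ?_⟩
  have h1 : A = φ (AdjoinRoot.mk h Polynomial.X) := by rw [hφ, Polynomial.aeval_X]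
  rw [h1, AlgHom.comp_apply, ← map_mul, ← map_mul, mul_comm]

/-- The cover of the endomorphism ring by stabilisers of small subspaces and centralisers of copies
of an extension field of degree `a`. The latter are `c` in number. -/
lemma end_cover {p : ℕ} (hp : p.Prime) [CharP k p] {a m : ℕ} (ha : 2 ≤ a) (hm : 1 ≤ m)
    (hV : Module.finrank k V = a * m) :
    ∃ (D : Finset (NonUnitalSubring (Module.End k V))) (c : ℕ),
      IsRingCover (Module.End k V) D ∧
      D.card ≤ c + ∑ j ∈ Finset.Icc 1 (a * m / 2), gaussBinom (Nat.card k) (a * m) j ∧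
      a * c * GLcard m (Nat.card k ^ a) ≤ GLcard (a * m) (Nat.card k) := by
  have : Fact p.Prime := ⟨hp⟩
  have : NeZero a := ⟨by omega⟩
  have : Module.Finite k V := Module.Finite.of_finite
  have hV1 : 2 ≤ Module.finrank k V := by rw [hV]; nlinarith
  have : Nontrivial V := Module.nontrivial_of_finrank_pos (R := k) (by omega)
  let K := FiniteField.Extension k p a
  have hK : Module.finrank k K = a := FiniteField.finrank_extension k p a
  have hKc : Nat.card K = Nat.card k ^ a := FiniteField.natCard_extension k p a
  have : Finite (K →ₐ[k] Module.End k V) := finite_algHom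
  have := Fintype.ofFinite (K →ₐ[k] Module.End k V)
  have : Finite (Submodule k V) :=
    Finite.of_injective (fun T => (T : Set V)) SetLike.coe_injective
  have := Fintype.ofFinite (Submodule k V)
  let D1 : Finset (NonUnitalSubring (Module.End k V)) := Finset.univ.image
      (centE : (K →ₐ[k] Module.End k V) → NonUnitalSubring (Module.End k V))
  let P : Finset (Submodule k V) := Finset.univ.filter fun T =>
    Module.finrank k T ∈ Finset.Icc 1 (a * m / 2)
  let D2 : Finset (NonUnitalSubring (Module.End k V)) := P.image stabE
  have hP : P.card = ∑ j ∈ Finset.Icc 1 (a * m / 2), gaussBinom (Nat.card k) (a * m) j := by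
    have hmaps : Set.MapsTo (fun T : Submodule k V => Module.finrank k T) (P : Set _)
        (Finset.Icc 1 (a * m / 2) : Finset ℕ) := fun T hT => (Finset.mem_filter.1 hT).2
    rw [Finset.card_eq_sum_card_fiberwise hmaps]
    refine Finset.sum_congr rfl fun j hj => ?_
    have hj' := Finset.mem_Icc.1 hj
    rw [← hV, ← card_subspaces j (by rw [hV]; omega), Nat.card_eq_fintype_card,
      Fintype.card_subtype]
    congr 1
    ext T
    simp only [P, Finset.mem_filter, Finset.mem_univ, true_and]
    exact ⟨fun h => h.2, fun h => ⟨h ▸ hj, h⟩⟩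
  refine ⟨D1 ∪ D2, D1.card, ⟨?_, ?_⟩, ?_, ?_⟩
  · intro S hS
    rcases Finset.mem_union.1 hS with h | h
    · obtain ⟨φ, -, rfl⟩ := Finset.mem_image.1 h
      exact centE_ne_top (by omega) (by rw [hK]; exact ha) φ
    · obtain ⟨T, hT, rfl⟩ := Finset.mem_image.1 h
      have hj := Finset.mem_Icc.1 (Finset.mem_filter.1 hT).2
      obtain ⟨h1, h2⟩ := ne_bot_top_of_finrank (T := T) rfl hj.1 (by rw [hV]; omega)
      exact stabE_ne_top h1 h2
  · intro A
    rcases irreducible_or_invariant A (by omega) with ⟨h1, h2⟩ | ⟨T, h1, h2, h3⟩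
    · obtain ⟨φ, hφ⟩ := exists_mem_centE (K := K) (by rw [hK, hV]; exact dvd_mul_right a m) A h1 h2
      exact ⟨centE φ, Finset.mem_union_left _ (Finset.mem_image_of_mem _ (Finset.mem_univ _)), hφ⟩
    · refine ⟨stabE T, Finset.mem_union_right _ (Finset.mem_image_of_mem _ ?_), mem_stabE.2 h3⟩
      refine Finset.mem_filter.2 ⟨Finset.mem_univ _, Finset.mem_Icc.2 ⟨?_, hV ▸ h2⟩⟩
      exact Nat.one_le_iff_ne_zero.2 fun h => h1 (Submodule.finrank_eq_zero.1 h)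
  · refine (Finset.card_union_le _ _).trans (Nat.add_le_add_left ?_ _)
    exact Finset.card_image_le.trans hP.le
  · have h1 := card_centE_le (k := k) (V := V) (K := K)
    rw [hK] at h1
    have h2 := card_algHom_le (k := k) (V := V) (K := K) (by omega) hK hV
    rw [hKc, hV] at h2
    exact (Nat.mul_le_mul_right _ h1).trans h2

end endCover

/-! ### The rings that are not `σ`-elementary -/

/-- An upper bound for the index in `GL (a * m)` of `GL m` over the extension of degree `a`, obtained
by cancelling the factors with `k` divisible by `a` in the product for the order. -/
lemma GLcard_le_extension {Q a : ℕ} (ha : 1 ≤ a) (m : ℕ) :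
    GLcard (a * m) Q ≤ GLcard m (Q ^ a) * Q ^ (a * m * (a * m - m)) := by
  unfold GLcard
  rw [← Finset.prod_filter_mul_prod_filter_not (Finset.range (a * m)) (fun k => a ∣ k)]
  have him : (Finset.range (a * m)).filter (fun k => a ∣ k) =
      (Finset.range m).image (fun i => a * i) := by
    ext x
    simp only [Finset.mem_filter, Finset.mem_range, Finset.mem_image]
    constructor
    · rintro ⟨h1, r, rfl⟩
      exact ⟨r, Nat.lt_of_mul_lt_mul_left h1, rfl⟩
    · rintro ⟨r, h1, rfl⟩
      exact ⟨Nat.mul_lt_mul_of_pos_left h1 (by omega), dvd_mul_right _ _⟩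
  have hinj : Set.InjOn (fun i => a * i) (Finset.range m : Set ℕ) := fun x _ y _ h =>
    Nat.eq_of_mul_eq_mul_left (by omega) h
  have hc1 : ((Finset.range (a * m)).filter (fun k => a ∣ k)).card = m := by
    rw [him, Finset.card_image_of_injOn hinj, Finset.card_range]
  have hc2 : ((Finset.range (a * m)).filter (fun k => ¬ a ∣ k)).card = a * m - m := by
    have := Finset.card_filter_add_card_filter_not (s := Finset.range (a * m)) (fun k => a ∣ k)
    rw [hc1, Finset.card_range] at this
    omega
  refine Nat.mul_le_mul ?_ ?_
  · rw [him, Finset.prod_image hinj]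
    refine le_of_eq (Finset.prod_congr rfl fun i _ => ?_)
    rw [pow_mul, pow_mul]
  · refine (Finset.prod_le_prod' fun i _ => Nat.sub_le _ _).trans ?_
    rw [Finset.prod_const, hc2, ← pow_mul]

lemma eight_mul_le {n : ℕ} (hn : 3 ≤ n) : 8 * (n / 2) ≤ 2 ^ ((n - n / 2) * (n - n / 2)) := by
  have h4 : ∀ h : ℕ, 2 ≤ h → 8 * h ≤ 2 ^ (2 * h) := by
    intro h hh
    induction h, hh using Nat.le_induction with
    | base => norm_num
    | succ h _ ih => rw [show 2 * (h + 1) = 2 * h + 2 by ring, pow_add]; omega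
  rcases Nat.lt_or_ge n 4 with h | h
  · interval_cases n; norm_num
  · refine (h4 _ (by omega)).trans (Nat.pow_le_pow_right (by norm_num) ?_)
    exact Nat.mul_le_mul (by omega) (by omega)

/-- The stabilisers in `end_cover` are few in number. -/
lemma sum_gaussBinom_le {Q : ℕ} (hQ : 2 ≤ Q) {n : ℕ} (hn : 3 ≤ n) {m : ℕ} (hm : m ≤ n / 2) :
    2 * ∑ j ∈ Finset.Icc 1 (n / 2), gaussBinom Q n j ≤ Q ^ (n * (n - m)) := by
  have h1 : ∀ j ∈ Finset.Icc 1 (n / 2), gaussBinom Q n j ≤ 4 * Q ^ (n / 2 * (n - n / 2)) := by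
    intro j hj
    have hj := Finset.mem_Icc.1 hj
    have h2 := gaussBinom_le hQ (n := n) (k := j) (by omega)
    have h3 : n * j = j * (n - j) + j * j := by
      rw [← Nat.mul_add, Nat.sub_add_cancel (by omega), mul_comm]
    rw [h3, pow_add, ← mul_assoc] at h2
    refine (Nat.le_of_mul_le_mul_right h2 (by positivity)).trans
      (Nat.mul_le_mul_left _ (Nat.pow_le_pow_right (by omega) ?_))
    obtain ⟨e, he⟩ := Nat.exists_eq_add_of_le hj.2
    obtain ⟨f, hf⟩ := Nat.exists_eq_add_of_le (show n / 2 ≤ n - n / 2 by omega)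
    have h4 : n - j = n - n / 2 + e := by omega
    rw [h4, hf, he]
    nlinarith
  have h2 := Finset.sum_le_card_nsmul _ _ _ h1
  rw [Nat.card_Icc, smul_eq_mul, Nat.add_sub_cancel] at h2
  have h3 : n / 2 * (n - n / 2) + (n - n / 2) * (n - n / 2) ≤ n * (n - m) := by
    rw [← Nat.add_mul, show n / 2 + (n - n / 2) = n by omega]
    exact Nat.mul_le_mul_left _ (by omega)
  calc 2 * ∑ j ∈ Finset.Icc 1 (n / 2), gaussBinom Q n j
      ≤ Q ^ (n / 2 * (n - n / 2)) * (8 * (n / 2)) := by nlinarith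
    _ ≤ Q ^ (n / 2 * (n - n / 2)) * Q ^ ((n - n / 2) * (n - n / 2)) :=
        Nat.mul_le_mul_left _ ((eight_mul_le hn).trans (Nat.pow_le_pow_left hQ _))
    _ = Q ^ (n / 2 * (n - n / 2) + (n - n / 2) * (n - n / 2)) := (pow_add _ _ _).symm
    _ ≤ _ := Nat.pow_le_pow_right (by omega) h3

/-- A small cover of the endomorphism ring of `F1^n` pulls back to one of the whole ring. -/
lemma not_elementary_of_end {n : ℕ} {F : Type} [Field F] [Finite F] {F1 F2 : Subfield F}
    (hcomp : F1 ⊔ F2 = ⊤) (hn : 1 ≤ n)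
    {D : Finset (NonUnitalSubring (Module.End F1 (Fin n → F1)))} (hD : IsRingCover _ D)
    (hle : ∀ N : Finset (NonUnitalSubring (AGL n F1 F2)), IsRest N →
      D.card ≤ Nat.card F ^ n + N.card) : ¬ IsSigmaElementary (AGL n F1 F2) := by
  let f : AGL n F1 F2 →ₙ+* Module.End F1 (Fin n → F1) :=
    (tb : AGL n F1 F2 →+* _).toNonUnitalRingHom
  have h1 := isRingCover_comap f tb_surjective hD
  refine not_sigmaElementary hcomp hn _ h1 ?_ fun N hN => Finset.card_image_le.trans (hle N hN)
  intro S hS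
  obtain ⟨W, -, rfl⟩ := Finset.mem_image.1 hS
  exact sat_comap_tb W

/-- In the exceptional cases the cover of `end_cover` is at most as large as any cover using all `q ^ n`
complements of the radical. For `n = 3` and `F1` of order 2 both have 15 members when `d = 1`. -/
lemma not_elementary {n p d1 d2 d : ℕ} {F : Type} [Field F] [Finite F] {F1 F2 : Subfield F}
    (hp : p.Prime) (hd1 : 1 ≤ d1) (hd2 : 1 ≤ d2) (hF1 : Nat.card F1 = p ^ d1)
    (hF2 : Nat.card F2 = p ^ d2) (hF : Nat.card F = p ^ (d1 * d))
    (hL : d1 * d = Nat.lcm d1 d2) (hcomp : F1 ⊔ F2 = ⊤) (hn : 2 ≤ n) (hd : 1 ≤ d)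
    (h : n = 2 ∨ n - n / n.minFac ≤ d ∨ (n = 3 ∧ p ^ d1 = 2)) :
    ¬ IsSigmaElementary (AGL n F1 F2) := by
  have : CharP F1 p := charP_of_pow hp hF1
  set a := n.minFac with ha
  have hap : a.Prime := Nat.minFac_prime (by omega)
  have ha2 := hap.two_le
  obtain ⟨m, hm⟩ : a ∣ n := Nat.minFac_dvd n
  have hm1 : 1 ≤ m := Nat.one_le_iff_ne_zero.2 fun h => by rw [h] at hm; omega
  have hnm : n / a = m := by
    conv_lhs => rw [hm]
    exact Nat.mul_div_cancel_left _ (by omega)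
  have hmh : m ≤ n / 2 := by
    rw [Nat.le_div_iff_mul_le (by norm_num), hm, mul_comm]
    exact Nat.mul_le_mul_right _ ha2
  have hQ : 2 ≤ Nat.card F1 := Finite.one_lt_card
  obtain ⟨D, c, hD, hDc, hc⟩ := end_cover (k := F1) (V := Fin n → F1) hp ha2 hm1
    (by rw [Module.finrank_fin_fun, hm])
  rw [← hm] at hDc hc
  have hq : Nat.card F ^ n = Nat.card F1 ^ (n * d) := by
    rw [hF, hF1, ← pow_mul, ← pow_mul]; congr 1; ring
  refine not_elementary_of_end hcomp (by omega) hD fun N hN => ?_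
  have hNpos := hN.card_pos (by omega)
  rcases Nat.lt_or_ge n 3 with hn3 | hn3
  · have hn2 : n = 2 := by omega
    subst hn2
    have ha' : a = 2 := by rw [ha]; norm_num
    rw [ha'] at hm hc
    have hm' : m = 1 := by omega
    subst hm'
    have : Nat.card F1 ^ 2 ≤ Nat.card F ^ 2 := by
      rw [hq]; exact Nat.pow_le_pow_right (by omega) (by omega)
    simp only [GLcard, Finset.prod_range_succ, Finset.prod_range_zero, one_mul, pow_zero, pow_one]
      at hc
    have hpos : 0 < Nat.card F1 ^ 2 - 1 := by
      have : 2 ^ 2 ≤ Nat.card F1 ^ 2 := Nat.pow_le_pow_left hQ 2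
      omega
    rw [mul_comm] at hc
    have hc' := Nat.le_of_mul_le_mul_left hc hpos
    have hs : ∑ j ∈ Finset.Icc 1 (2 / 2), gaussBinom (Nat.card F1) 2 j = Nat.card F1 + 1 := by
      simp [gaussBinom]; ring
    rw [hs] at hDc
    have : Nat.card F1 ≤ Nat.card F1 ^ 2 := Nat.le_self_pow (by norm_num) _
    omega
  by_cases hdn : n - n / a ≤ d
  · rw [hnm] at hdn
    have h1 := GLcard_le_extension (Q := Nat.card F1) (a := a) (by omega) m
    rw [← hm] at h1
    have h2 := hc.trans h1
    rw [mul_comm] at h2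
    have h3 := Nat.le_of_mul_le_mul_left h2
      (GLcard_pos ((Nat.pow_le_pow_left hQ 1).trans (Nat.pow_le_pow_right (by omega) (by omega))) m)
    have h4 := sum_gaussBinom_le hQ hn3 hmh
    have h5 : 2 * c ≤ a * c := Nat.mul_le_mul_right _ ha2
    have h6 : Nat.card F1 ^ (n * (n - m)) ≤ Nat.card F ^ n := by
      rw [hq]; exact Nat.pow_le_pow_right (by omega) (Nat.mul_le_mul_left _ hdn)
    omega
  · obtain ⟨rfl, h2⟩ : n = 3 ∧ p ^ d1 = 2 := by
      rcases h with h | h | h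
      · omega
      · omega
      · exact h
    have ha' : a = 3 := by rw [ha]; norm_num
    rw [ha'] at hm hc hdn
    have hm' : m = 1 := by omega
    subst hm'
    have hd1' : d = 1 := by omega
    subst hd1'
    have hr := rest_lower hp hd1 hd2 hF1 hF2 hF hL hcomp (by norm_num) (by rw [← ha, ha']; norm_num) hN
    rw [hF1, h2] at hDc hc hq
    rw [h2] at hr
    norm_num [GLcard, Finset.prod_range_succ, gaussBinom] at hDc hc hq hr
    rw [hq]
    omega

/-! ### The main theorem -/

/-- Covers whose members are full preimages modulo the radical are too large: numerical form. -/
lemma singer_bound {Q n d X : ℕ} (hQ : 2 ≤ Q) (hn : 3 ≤ n) (hd : 1 ≤ d)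
    (hdn : d < n - n / n.minFac) (hx : ¬ (n = 3 ∧ Q = 2))
    (h : GLcard n Q ≤ X * (n.minFac * Q ^ (n * (n / n.minFac)))) :
    Q ^ (d * n) + gaussBinom Q n d + d.primeFactors.card + 1 ≤ X := by
  by_cases h52 : n = 5 ∧ Q = 2
  · obtain ⟨rfl, rfl⟩ := h52
    have h5 : Nat.minFac 5 = 5 := by norm_num
    rw [h5] at hdn h
    have hω := primeFactors_card_le d
    have hd4 : d < 4 := by omega
    norm_num [GLcard, Finset.prod_range_succ] at h
    interval_cases d <;> norm_num [gaussBinom] <;> norm_num at hω <;> omega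
  have hg := gaussBinom_add_le hQ hd (hdn.trans_le (Nat.sub_le _ _))
  have h4 := four_GLcard hQ n
  have ha : n.minFac ≤ n := Nat.minFac_le (by omega)
  have h8 : 8 * n.minFac ≤ Q ^ n := by
    rcases Nat.lt_or_ge n 6 with hn6 | hn6
    · interval_cases n
      · have : 3 ^ 3 ≤ Q ^ 3 := Nat.pow_le_pow_left (by omega) _
        omega
      · have : 2 ^ 4 ≤ Q ^ 4 := Nat.pow_le_pow_left (by omega) _
        norm_num at this ⊢
        omega
      · have : 3 ^ 5 ≤ Q ^ 5 := Nat.pow_le_pow_left (by omega) _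
        omega
    · have : ∀ r, 6 ≤ r → 8 * r ≤ 2 ^ r := by
        intro r hr
        induction r, hr using Nat.le_induction with
        | base => norm_num
        | succ r _ ih => rw [pow_succ]; omega
      exact (Nat.mul_le_mul_left _ ha).trans ((this n hn6).trans (Nat.pow_le_pow_left hQ _))
  suffices 2 * Q ^ (d * n) < X by omega
  by_contra hX
  push Not at hX
  set a := n.minFac
  have h1 : 4 * GLcard n Q ≤ Q ^ (n * n) := by
    calc 4 * GLcard n Q ≤ 4 * (2 * Q ^ (d * n) * (a * Q ^ (n * (n / a)))) :=
          Nat.mul_le_mul_left _ (h.trans (Nat.mul_le_mul_right _ hX))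
      _ = (8 * a) * (Q ^ (d * n) * Q ^ (n * (n / a))) := by ring
      _ ≤ Q ^ n * (Q ^ (d * n) * Q ^ (n * (n / a))) := Nat.mul_le_mul_right _ h8
      _ = Q ^ (n * (1 + d + n / a)) := by rw [← pow_add, ← pow_add]; congr 1; ring
      _ ≤ Q ^ (n * n) := Nat.pow_le_pow_right (by omega) (Nat.mul_le_mul_left _ (by omega))
  omega

/-- Theorem 1.1 / main theorem. -/
theorem sigmaElementary_AGL_iff
    (p d1 d2 n d : ℕ) (hp : p.Prime) (hd1 : 1 ≤ d1) (hd2 : 1 ≤ d2) (hn : 1 ≤ n)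
    (F : Type) [Field F] [Fintype F] (F1 F2 : Subfield F)
    (hF1 : Nat.card F1 = p ^ d1) (hF2 : Nat.card F2 = p ^ d2)
    (hF : Nat.card F = p ^ Nat.lcm d1 d2) (hcomp : F1 ⊔ F2 = ⊤)
    (hd : (p ^ d1) ^ d = p ^ Nat.lcm d1 d2) :
    (IsSigmaElementary ↥(AGL n F1 F2) ↔
      ((n = 1 ∧ ¬(p ^ d1 = 2 ∧ p ^ d2 = 2) ∧ ¬(p ^ d1 = 4 ∧ p ^ d2 = 4)) ∨
        (3 ≤ n ∧ d < n - n / n.minFac ∧ ¬(n = 3 ∧ p ^ d1 = 2)))) ∧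
    ((n = 1 ∧ ¬(p ^ d1 = 2 ∧ p ^ d2 = 2) ∧ ¬(p ^ d1 = 4 ∧ p ^ d2 = 4)) →
      coveringNumber ↥(AGL n F1 F2) = ((p ^ Nat.lcm d1 d2 + 1 : ℕ) : ℕ∞)) ∧
    ((3 ≤ n ∧ d < n - n / n.minFac ∧ ¬(n = 3 ∧ p ^ d1 = 2)) →
      coveringNumber ↥(AGL n F1 F2) =
        (((p ^ Nat.lcm d1 d2) ^ n + gaussBinom (p ^ d1) n d + d.primeFactors.card : ℕ) : ℕ∞)) := by
  have hL : d1 * d = Nat.lcm d1 d2 := Nat.pow_right_injective hp.two_le (by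
    change p ^ (d1 * d) = p ^ Nat.lcm d1 d2
    rw [pow_mul, hd])
  have hF' : Nat.card F = p ^ (d1 * d) := by rw [hF, hL]
  have hd0 : 1 ≤ d := by
    have : 0 < Nat.lcm d1 d2 := Nat.lcm_pos (by omega) (by omega)
    rw [← hL] at this
    exact Nat.pos_of_mul_pos_left this
  have hQ : 2 ≤ p ^ d1 := two_le_pow hp hd1
  -- equal orders force both subfields to be the whole field
  have heq : d1 = d2 → F1 = F2 := by
    intro h12
    subst h12
    rw [Nat.lcm_self] at hF
    have h1 : ∀ G : Subfield F, Nat.card G = p ^ d1 → G = ⊤ := by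
      intro G hG
      refine SetLike.coe_injective ?_
      rw [Subfield.coe_top]
      refine Set.eq_of_subset_of_ncard_le (Set.subset_univ _) ?_
      rw [Set.ncard_univ, hF, ← hG]
      exact le_of_eq (Nat.card_coe_set_eq _)
    rw [h1 F1 hF1, h1 F2 hF2]
  have hone : (n = 1 ∧ ¬(p ^ d1 = 2 ∧ p ^ d2 = 2) ∧ ¬(p ^ d1 = 4 ∧ p ^ d2 = 4)) →
      IsSigmaElementary (AGL n F1 F2) ∧
        coveringNumber (AGL n F1 F2) = ((p ^ Nat.lcm d1 d2 + 1 : ℕ) : ℕ∞) := by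
    rintro ⟨rfl, h2, h4⟩
    rw [← hF]
    refine one_elementary hcomp ?_
    by_cases h12 : d1 = d2
    · subst h12
      have e1 := heq rfl
      subst e1
      exact exists_gen_same F1 (by rw [hF1]; tauto) (by rw [hF1]; tauto)
    · have := charP_of_pow hp hF1
      have := charP_of_pow hp hF2
      exact exists_gen_diff hp hd1 hd2 h12 F1 F2 hF1 hF2
  have hbig : (3 ≤ n ∧ d < n - n / n.minFac ∧ ¬(n = 3 ∧ p ^ d1 = 2)) →
      IsSigmaElementary (AGL n F1 F2) ∧ coveringNumber (AGL n F1 F2) =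
        (((p ^ Nat.lcm d1 d2) ^ n + gaussBinom (p ^ d1) n d + d.primeFactors.card : ℕ) : ℕ∞) := by
    rintro ⟨hn3, hdn, hx⟩
    obtain ⟨C0, hC0, hC0c⟩ := upper_cover (n := n) hp hd1 hF1 hF' hcomp hd0
      (hdn.trans_le (Nat.sub_le _ _))
    rw [hF] at hC0c
    refine sigmaElementary_of hcomp hn _ C0 hC0 hC0c (fun N hN => ?_) (fun C hC hs => ?_)
    · have := rest_lower hp hd1 hd2 hF1 hF2 hF' hL hcomp hn3 hdn hN
      rw [hF]
      omega
    · have h1 := singer_bound hQ hn3 hd0 hdn hx (sat_lower hp (by omega) hd1 hF1 hF2 hC hs)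
      rw [pow_mul, hd] at h1
      exact h1
  refine ⟨⟨fun hel => ?_, ?_⟩, fun h => (hone h).2, fun h => (hbig h).2⟩
  · by_contra hcon
    push Not at hcon
    obtain ⟨hc1, hc2⟩ := hcon
    rcases Nat.lt_or_ge n 2 with hn2 | hn2
    · obtain rfl : n = 1 := by omega
      have hcases : (p ^ d1 = 2 ∧ p ^ d2 = 2) ∨ (p ^ d1 = 4 ∧ p ^ d2 = 4) := by
        by_contra hno
        rw [not_or] at hno
        exact hno.2 (hc1 rfl fun h2 h2' => hno.1 ⟨h2, h2'⟩)
      have hd12 : d1 = d2 := Nat.pow_right_injective hp.two_le (by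
        change p ^ d1 = p ^ d2
        omega)
      have hFc : Nat.card F = p ^ d1 := by rw [hF, ← hd12, Nat.lcm_self]
      have e1 := heq hd12
      subst e1
      rcases hcases with ⟨h, -⟩ | ⟨h, -⟩
      · obtain ⟨C, hC, hCc⟩ := cover_two F1 (by rw [hF1, h])
        exact one_not_elementary hcomp C hC (by omega) hel
      · obtain ⟨C, hC, hCc⟩ := cover_four F1 (by rw [hF1, h])
        exact one_not_elementary hcomp C hC (by omega) hel
    · refine not_elementary hp hd1 hd2 hF1 hF2 hF' hL hcomp hn2 hd0 ?_ hel
      by_contra hno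
      push Not at hno
      exact hno.2.2 (hc2 (by omega) hno.2.1).1 (hc2 (by omega) hno.2.1).2
  · rintro (h | h)
    · exact (hone h).1
    · exact (hbig h).1
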